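/- Assume the Riemann Hypothesis. Let 0 < γ₁ ≤ γ₂ ≤ γ₃ ≤ ... be the ordinates of the non-trivial zeros of ζ in the upper half-plane, listed in nondecreasing order with multiplicity. Then liminf_{n→∞} (γ_{n+1} − γ_n) (log γ_n)/(2π) ≤ 0.6073. -/

import Mathlib

open Complex Filter MeasureTheory Real Set

noncomputable section

/-- A non-trivial zero of the Riemann zeta function. -/
def ZetaNontrivZero (ρ : ℂ) : Prop := riemannZeta ρ = 0 ∧ 0 < ρ.re ∧ ρ.re < 1

/-- The multiplicity of `ρ` as a zero of `ζ`. -/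
def zetaMult (ρ : ℂ) : ℕ := sInf {n : ℕ | iteratedDeriv n riemannZeta ρ ≠ 0}


namespace SGZ

/-- division of an entire function by a finite product of linear factors -/
lemma exists_div {ι : Type*} [DecidableEq ι] (p : ι → ℂ) (S : Finset ι) :
    ∀ (F : ℂ → ℂ), Differentiable ℂ F → (∀ z, analyticOrderAt F z ≠ ⊤) →
    (∀ a, ((S.filter (fun i => p i = a)).card : ℕ∞) ≤ analyticOrderAt F a) →
    ∃ g : ℂ → ℂ, Differentiable ℂ g ∧ (∀ z, F z = (∏ i ∈ S, (z - p i)) * g z) ∧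
      ∀ a, analyticOrderAt F a = ((S.filter (fun i => p i = a)).card : ℕ∞) + analyticOrderAt g a := by
  induction S using Finset.induction_on with
  | empty =>
    intro F hF _ _
    exact ⟨F, hF, by simp, by simp⟩
  | insert i S hi ih =>
    intro F hF htop hc
    have h1 : F (p i) = 0 := by
      apply apply_eq_zero_of_analyticOrderAt_ne_zero
      have := hc (p i)
      intro h0
      rw [h0] at this
      have h2 : ((insert i S).filter (fun j => p j = p i)).card = 0 := by
        exact_mod_cast (nonpos_iff_eq_zero.mp this)
      rw [Finset.card_eq_zero] at h2
      have : i ∈ ((insert i S).filter (fun j => p j = p i)) := by simp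
      rw [h2] at this
      simp at this
    set G : ℂ → ℂ := dslope F (p i) with hG
    have hGd : Differentiable ℂ G := by
      rw [← differentiableOn_univ]
      rw [hG, Complex.differentiableOn_dslope (by simp)]
      exact hF.differentiableOn
    have hFG : ∀ z, F z = (z - p i) * G z := by
      intro z
      have := sub_smul_dslope F (p i) z
      rw [h1, sub_zero] at this
      rw [← this]; rfl
    have hord : ∀ a, analyticOrderAt F a = (if p i = a then 1 else 0) + analyticOrderAt G a := by
      intro a
      have e : F = (fun z => z - p i) * G := by ext z; exact hFG z
      rw [e, analyticOrderAt_mul (by fun_prop) (hGd.analyticAt a)]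
      congr 1
      split_ifs with h
      · rw [← h]; exact analyticOrderAt_id_sub_const_self
      · exact analyticOrderAt_id_sub_const_of_ne (fun h' => h h'.symm)
    have hcard : ∀ a, (((insert i S).filter (fun j => p j = a)).card : ℕ∞) =
        (if p i = a then 1 else 0) + ((S.filter (fun j => p j = a)).card : ℕ∞) := by
      intro a
      rw [Finset.filter_insert]
      split_ifs with h
      · rw [Finset.card_insert_of_notMem (by simp [hi])]
        push_cast; ring
      · simp
    have hGtop : ∀ z, analyticOrderAt G z ≠ ⊤ := by
      intro z hz
      apply htop z
      rw [hord, hz]; simp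
    obtain ⟨g, hg, h2, h3⟩ := ih G hGd hGtop (by
      intro a
      have := hc a
      rw [hcard, hord] at this
      split_ifs at this
      · exact (ENat.add_le_add_iff_left (by simp)).mp this
      · simpa using this)
    refine ⟨g, hg, ?_, ?_⟩
    · intro z
      rw [Finset.prod_insert hi, hFG, h2]; ring
    · intro a
      rw [hord, hcard, h3, add_assoc]

/-- key estimate: zero-free on a ball, bounded, normalized derivative zero at 0 -/
lemma logDeriv_small (g : ℂ → ℂ) (hg : Differentiable ℂ g) (R K : ℝ) (hR : 0 < R) (hK : 0 < K)
    (hne : ∀ z ∈ Metric.ball (0:ℂ) R, g z ≠ 0) (hd0 : deriv g 0 = 0)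
    (hb : ∀ z ∈ Metric.ball (0:ℂ) R, ‖g z‖ ≤ Real.exp K * ‖g 0‖)
    (z : ℂ) (hz : ‖z‖ < R / 4) : ‖logDeriv g z‖ ≤ 32 * K * ‖z‖ / R ^ 2 := by
  have h0 : (0:ℂ) ∈ Metric.ball (0:ℂ) R := by simpa using hR
  have hld : DifferentiableOn ℂ (logDeriv g) (Metric.ball 0 R) := by
    intro w hw
    have : DifferentiableAt ℂ (fun x => deriv g x / g x) w :=
      ((hg.analyticAt w).deriv.differentiableAt).div (hg w) (hne w hw)
    exact this.differentiableWithinAt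
  obtain ⟨h, hh0, hh⟩ := (hld.isExactOn_ball).with_val_at 0 0
  have hexp : ∀ w ∈ Metric.ball (0:ℂ) R, g w = g 0 * Complex.exp (h w) := by
    have hder : ∀ w ∈ Metric.ball (0:ℂ) R,
        HasDerivAt (fun x => g x * Complex.exp (- h x)) 0 w := by
      intro w hw
      have h1 := (hg w).hasDerivAt.mul ((hh w hw).neg.cexp)
      convert! h1 using 1
      rw [logDeriv_apply]
      field_simp [hne w hw]
      ring
    intro w hw
    have hc := (convex_ball (0:ℂ) R).is_const_of_fderivWithin_eq_zero (𝕜 := ℂ)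
      (f := fun x => g x * Complex.exp (- h x))
      (fun x hx => (hder x hx).differentiableAt.differentiableWithinAt)
      (fun x hx => by
        rw [fderivWithin_of_isOpen Metric.isOpen_ball hx]
        ext
        simp [(hder x hx).deriv]) hw h0
    simp only [hh0, neg_zero, Complex.exp_zero, mul_one] at hc
    rw [← hc, mul_assoc, ← Complex.exp_add]; simp
  have hre : Set.MapsTo h (Metric.ball 0 R) {z | z.re ≤ K} := by
    intro w hw
    have h1 := hb w hw
    rw [hexp w hw, norm_mul, Complex.norm_exp, mul_comm] at h1
    have h2 : 0 < ‖g 0‖ := norm_pos_iff.mpr (hne 0 h0)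
    have h3 := le_of_mul_le_mul_right h1 h2
    exact Real.exp_le_exp.mp h3
  have hhd : DifferentiableOn ℂ h (Metric.ball 0 R) :=
    fun x hx => (hh x hx).differentiableAt.differentiableWithinAt
  have hBC : ∀ w, ‖w‖ ≤ R / 2 → ‖h w‖ ≤ 2 * K := by
    intro w hw
    have hwb : w ∈ Metric.ball (0:ℂ) R := by simp; linarith
    refine (Complex.borelCaratheodory_zero hK hhd hre hR hwb hh0).trans ?_
    rw [div_le_iff₀ (by linarith)]
    nlinarith [norm_nonneg w]
  have hder : ∀ w ∈ Metric.ball (0:ℂ) (R/4), ‖logDeriv g w‖ ≤ 8 * K / R := by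
    intro w hw
    have hw' : ‖w‖ < R / 4 := by simpa using hw
    have hwR : w ∈ Metric.ball (0:ℂ) R := by simp; linarith
    rw [← (hh w hwR).deriv]
    have := Complex.norm_deriv_le_of_forall_mem_sphere_norm_le (c := w) (R := R/4) (C := 2 * K)
      (f := h) (by linarith) ?_ ?_
    · refine this.trans (le_of_eq ?_)
      field_simp; ring
    · refine DifferentiableOn.diffContOnCl (hhd.mono ?_)
      rw [closure_ball _ (by linarith)]
      intro x hx
      have : ‖x - w‖ ≤ R / 4 := by simpa [dist_eq_norm] using hx
      have h3 : ‖x‖ ≤ ‖x - w‖ + ‖w‖ := by simpa using norm_add_le (x - w) w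
      simp; linarith
    · intro x hx
      have : ‖x - w‖ = R / 4 := by simpa [dist_eq_norm] using hx
      have h3 : ‖x‖ ≤ ‖x - w‖ + ‖w‖ := by simpa using norm_add_le (x - w) w
      exact hBC x (by linarith)
  have hz0 : logDeriv g 0 = 0 := by rw [logDeriv_apply, hd0, zero_div]
  have hS := Complex.dist_le_div_mul_dist_of_mapsTo_ball (f := logDeriv g) (c := 0) (z := z)
    (R₁ := R / 4) (R₂ := 8 * K / R) (hld.mono (Metric.ball_subset_ball (by linarith))) (by
      intro w hw
      rw [hz0]
      simpa using hder w hw) (by simpa using hz)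
  rw [hz0] at hS
  simp only [dist_zero_right] at hS
  refine hS.trans (le_of_eq ?_)
  field_simp; ring

end SGZ

namespace SGZ

lemma deriv_zero_of_even (F : ℂ → ℂ) (heven : ∀ z, F (-z) = F z) : deriv F 0 = 0 := by
  have h : deriv (fun z => F (-z)) 0 = - deriv F (-0) := deriv_comp_neg F 0
  have h2 : (fun z => F (-z)) = F := funext heven
  rw [h2, neg_zero] at h
  exact self_eq_neg.mp h

theorem hadamard_even (F : ℂ → ℂ) (hF : Differentiable ℂ F) (heven : ∀ z, F (-z) = F z)
    (hF0 : F 0 ≠ 0) (γ : ℕ → ℝ) (hpos : ∀ n, 0 < γ n) (hfin : ∀ R : ℝ, {n | γ n ≤ R}.Finite)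
    (hord : ∀ z, analyticOrderAt F z =
      (({n : ℕ | (γ n : ℂ) = z}.ncard + {n : ℕ | (-(γ n : ℂ)) = z}.ncard : ℕ) : ℕ∞))
    (C : ℝ) (hC : 0 ≤ C)
    (hgrow : ∀ R : ℝ, 1 ≤ R → ∀ z : ℂ, ‖z‖ ≤ R → ‖F z‖ ≤ Real.exp (C * R ^ (3/2:ℝ)))
    (z : ℂ) (hz : F z ≠ 0) :
    Tendsto (fun R : ℝ => ∑ n ∈ (hfin R).toFinset, 2 * z / (z ^ 2 - (γ n : ℂ) ^ 2)) atTop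
      (nhds (logDeriv F z)) := by
  rw [tendsto_iff_norm_sub_tendsto_zero]
  set K : ℝ → ℝ := fun R => C * (3 * R) ^ (3/2:ℝ) + |Real.log ‖F 0‖| + 1 with hKdef
  have hlim : Tendsto (fun R : ℝ => 32 * K R * ‖z‖ / R ^ 2) atTop (nhds 0) := by
    have e : (fun R : ℝ => 32 * ‖z‖ * (C * 3 ^ (3/2:ℝ) * R ^ (-(1/2):ℝ)
        + (|Real.log ‖F 0‖| + 1) * R ^ (-2:ℝ))) =ᶠ[atTop] (fun R : ℝ => 32 * K R * ‖z‖ / R ^ 2) := by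
      filter_upwards [eventually_gt_atTop 0] with R hR
      simp only [hKdef]
      rw [Real.mul_rpow (by norm_num) hR.le]
      have h1 : R ^ (-(1/2):ℝ) = R ^ (3/2:ℝ) / R ^ 2 := by
        rw [← Real.rpow_natCast R 2, ← Real.rpow_sub hR]; norm_num
      have h2 : R ^ (-2:ℝ) = 1 / R ^ 2 := by
        rw [Real.rpow_neg hR.le]; simp
      rw [h1, h2]; field_simp; ring
    refine Tendsto.congr' e ?_
    have h1 : Tendsto (fun R : ℝ => R ^ (-(1/2):ℝ)) atTop (nhds 0) := tendsto_rpow_neg_atTop (by norm_num)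
    have h2 : Tendsto (fun R : ℝ => R ^ (-2:ℝ)) atTop (nhds 0) := tendsto_rpow_neg_atTop (by norm_num)
    have := (((h1.const_mul (C * 3 ^ (3/2:ℝ))).add (h2.const_mul (|Real.log ‖F 0‖| + 1))).const_mul (32 * ‖z‖))
    simpa using this
  refine squeeze_zero' (Eventually.of_forall fun R => norm_nonneg _) ?_ hlim
  filter_upwards [eventually_ge_atTop (1:ℝ), eventually_gt_atTop (4 * ‖z‖)] with R hR1 hRz
  have hR0 : 0 < R := by linarith
  set S := (hfin R).toFinset with hS
  have hSmem : ∀ n, n ∈ S ↔ γ n ≤ R := by intro n; simp [hS]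
  have hfinset : ∀ a : ℂ, {n : ℕ | (γ n : ℂ) = a}.Finite := by
    intro a
    refine (hfin a.re).subset ?_
    intro n hn
    have : (γ n : ℂ) = a := hn
    simp [← this]
  have hfinset' : ∀ a : ℂ, {n : ℕ | (-(γ n : ℂ)) = a}.Finite := by
    intro a
    refine (hfinset (-a)).subset ?_
    intro n hn
    have : (-(γ n : ℂ)) = a := hn
    simp [← this]
  -- division
  let p : ℕ ⊕ ℕ → ℂ := Sum.elim (fun n => (γ n : ℂ)) (fun n => -(γ n : ℂ))
  have hcard : ∀ a, (((S.disjSum S).filter (fun i => p i = a)).card) =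
      (S.filter (fun n => (γ n : ℂ) = a)).card + (S.filter (fun n => (-(γ n : ℂ)) = a)).card := by
    intro a
    rw [← Finset.card_disjSum]
    congr 1
    ext x
    rcases x with x | x <;> simp [p]
  have hle1 : ∀ a : ℂ, (S.filter (fun n => (γ n : ℂ) = a)).card ≤ {n : ℕ | (γ n : ℂ) = a}.ncard := by
    intro a
    rw [← Set.ncard_coe_finset]
    exact Set.ncard_le_ncard (by intro n; simp) (hfinset a)
  have hle2 : ∀ a : ℂ, (S.filter (fun n => (-(γ n : ℂ)) = a)).card ≤ {n : ℕ | (-(γ n : ℂ)) = a}.ncard := by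
    intro a
    rw [← Set.ncard_coe_finset]
    exact Set.ncard_le_ncard (by intro n; simp) (hfinset' a)
  obtain ⟨g₀, hg₀, hFg₀, hord₀⟩ := exists_div p (S.disjSum S) F hF
    (by intro z; rw [hord]; exact ENat.natCast_ne_top _)
    (by intro a; rw [hcard, hord]; exact_mod_cast add_le_add (hle1 a) (hle2 a))
  have hne : ∀ w ∈ Metric.ball (0:ℂ) R, g₀ w ≠ 0 := by
    intro w hw
    have hwR : ‖w‖ < R := by simpa using hw
    have h1 := hord₀ w
    rw [hord, hcard] at h1
    have e1 : (S.filter (fun n => (γ n : ℂ) = w)).card = {n : ℕ | (γ n : ℂ) = w}.ncard := by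
      rw [← Set.ncard_coe_finset]
      congr 1
      ext n
      simp only [Finset.coe_filter, hSmem, Set.mem_ofPred_eq, and_iff_right_iff_imp]
      intro h
      have : ‖(γ n : ℂ)‖ = γ n := by simp [abs_of_pos (hpos n)]
      rw [← this, h]; exact hwR.le
    have e2 : (S.filter (fun n => (-(γ n : ℂ)) = w)).card = {n : ℕ | (-(γ n : ℂ)) = w}.ncard := by
      rw [← Set.ncard_coe_finset]
      congr 1
      ext n
      simp only [Finset.coe_filter, hSmem, Set.mem_ofPred_eq, and_iff_right_iff_imp]
      intro h
      have : ‖-(γ n : ℂ)‖ = γ n := by simp [abs_of_pos (hpos n)]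
      rw [← this, h]; exact hwR.le
    rw [e1, e2] at h1
    have h2 : analyticOrderAt g₀ w = 0 := by
      have h3 : ((({n : ℕ | (γ n : ℂ) = w}.ncard + {n : ℕ | (-(γ n : ℂ)) = w}.ncard : ℕ) : ℕ∞)) + 0
        = (({n : ℕ | (γ n : ℂ) = w}.ncard + {n : ℕ | (-(γ n : ℂ)) = w}.ncard : ℕ) : ℕ∞)
          + analyticOrderAt g₀ w := by rw [add_zero]; exact h1
      exact (ENat.add_right_injective_of_ne_top (ENat.natCast_ne_top _) h3).symm
    exact ((hg₀.analyticAt w).analyticOrderAt_eq_zero).mp h2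
  -- normalized
  set P : ℂ → ℂ := fun w => ∏ n ∈ S, (1 - w ^ 2 / (γ n : ℂ) ^ 2) with hP
  set c : ℂ := ∏ n ∈ S, (-(γ n : ℂ) ^ 2) with hc
  have hγ0 : ∀ n, (γ n : ℂ) ≠ 0 := fun n => by exact_mod_cast (hpos n).ne'
  have hc0 : c ≠ 0 := Finset.prod_ne_zero_iff.mpr fun n _ => by simpa using hγ0 n
  set g : ℂ → ℂ := fun w => c * g₀ w with hg
  have hFg : ∀ w, F w = P w * g w := by
    intro w
    rw [hFg₀ w, Finset.prod_disjSum]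
    simp only [p, Sum.elim_inl, Sum.elim_inr, hg, hP, hc]
    rw [← mul_assoc, ← Finset.prod_mul_distrib, ← Finset.prod_mul_distrib]
    congr 1
    refine Finset.prod_congr rfl fun n _ => ?_
    have := hγ0 n
    field_simp; ring
  have hgd : Differentiable ℂ g := hg₀.const_mul c
  have hgne : ∀ w ∈ Metric.ball (0:ℂ) R, g w ≠ 0 := fun w hw => mul_ne_zero hc0 (hne w hw)
  have hPd : Differentiable ℂ P := by
    simp only [hP]; fun_prop
  have hP0 : P 0 = 1 := by simp [hP]
  have hPe : deriv P 0 = 0 := deriv_zero_of_even P (by intro w; simp [hP])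
  have hd0 : deriv g 0 = 0 := by
    have h1 : deriv F 0 = deriv P 0 * g 0 + P 0 * deriv g 0 := by
      have e : F = fun w => P w * g w := funext hFg
      rw [e]; exact deriv_fun_mul (hPd 0) (hgd 0)
    rw [deriv_zero_of_even F heven, hPe, hP0] at h1
    simpa using h1.symm
  have hg0 : g 0 = F 0 := by rw [hFg 0, hP0, one_mul]
  have hF0pos : 0 < ‖F 0‖ := norm_pos_iff.mpr hF0
  have hbound : ∀ w ∈ Metric.ball (0:ℂ) R, ‖g w‖ ≤ Real.exp (K R) * ‖g 0‖ := by
    intro w hw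
    have hwR : ‖w‖ < R := by simpa using hw
    have h1 : ‖g w‖ ≤ Real.exp (C * (3 * R) ^ (3/2:ℝ)) := by
      refine Complex.norm_le_of_forall_mem_frontier_norm_le (U := Metric.ball (0:ℂ) (3*R)) Metric.isBounded_ball
        (hgd.diffContOnCl) ?_ (subset_closure (by simp; linarith))
      intro x hx
      rw [frontier_ball _ (by positivity)] at hx
      have hx3 : ‖x‖ = 3 * R := by simpa using hx
      have h2 := hgrow (3 * R) (by linarith) x hx3.le
      rw [hFg x, norm_mul] at h2
      have h3 : 1 ≤ ‖P x‖ := by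
        rw [hP, norm_prod]
        apply Finset.one_le_prod
        intro n hn
        have hn' := (hSmem n).mp hn
        have h4 : 9 ≤ ‖x ^ 2 / (γ n : ℂ) ^ 2‖ := by
          rw [norm_div, norm_pow, norm_pow, hx3, le_div_iff₀ (by have := hγ0 n; have h7 := norm_pos_iff.mpr this; positivity)]
          simp only [Complex.norm_real, Real.norm_eq_abs, sq_abs]
          nlinarith [hpos n]
        have h5 := norm_sub_norm_le (x ^ 2 / (γ n : ℂ) ^ 2) 1
        rw [norm_sub_rev] at h5
        simp only [norm_one] at h5
        linarith
      calc ‖g x‖ ≤ ‖P x‖ * ‖g x‖ := le_mul_of_one_le_left (norm_nonneg _) h3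
        _ ≤ _ := h2
    refine h1.trans ?_
    rw [hg0]
    have h4 : Real.exp (-|Real.log ‖F 0‖|) ≤ ‖F 0‖ := by
      calc Real.exp (-|Real.log ‖F 0‖|) ≤ Real.exp (Real.log ‖F 0‖) := Real.exp_le_exp.mpr (neg_abs_le _)
        _ = _ := Real.exp_log hF0pos
    calc Real.exp (C * (3 * R) ^ (3/2:ℝ)) ≤ Real.exp (K R) * Real.exp (-|Real.log ‖F 0‖|) := by
          rw [← Real.exp_add]
          apply Real.exp_le_exp.mpr
          simp only [hKdef]; linarith
      _ ≤ _ := by gcongr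
  have hKpos : 0 < K R := by
    simp only [hKdef]; positivity
  have hfinal := logDeriv_small g hgd R (K R) hR0 hKpos hgne hd0 hbound z (by linarith)
  have hzball : z ∈ Metric.ball (0:ℂ) R := by simp; linarith [norm_nonneg z]
  have hPz : P z ≠ 0 := by
    intro h; apply hz; rw [hFg z, h, zero_mul]
  have hPfac : ∀ n ∈ S, (1 - z ^ 2 / (γ n : ℂ) ^ 2) ≠ 0 := fun n hn => Finset.prod_ne_zero_iff.mp hPz n hn
  have hsum : logDeriv F z = ∑ n ∈ S, 2 * z / (z ^ 2 - (γ n : ℂ) ^ 2) + logDeriv g z := by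
    have e : F = fun w => P w * g w := funext hFg
    rw [e, logDeriv_mul z hPz (hgne z hzball) (hPd z) (hgd z)]
    congr 1
    simp only [hP]
    rw [logDeriv_prod hPfac (by intros; fun_prop)]
    refine Finset.sum_congr rfl fun n hn => ?_
    have h1 := hPfac n hn
    have h2 := hγ0 n
    have h3 : z ^ 2 - (γ n : ℂ) ^ 2 ≠ 0 := by
      intro h; apply h1; field_simp; linear_combination -h
    have h4 : HasDerivAt (fun w : ℂ => 1 - w ^ 2 / (γ n : ℂ) ^ 2) (-(2 * z / (γ n : ℂ) ^ 2)) z := by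
      have := ((hasDerivAt_pow 2 z).div_const ((γ n : ℂ) ^ 2)).const_sub 1
      convert! this using 2
      simp
    rw [logDeriv_apply, h4.deriv, div_eq_div_iff h1 h3]
    field_simp; ring
  rw [hsum, sub_add_cancel_left, norm_neg]
  exact hfinal

end SGZ

namespace SGZ

lemma sum_atTop_of_fin {γ : ℕ → ℝ} (hfin : ∀ R : ℝ, {n | γ n ≤ R}.Finite) :
    Tendsto (fun R => (hfin R).toFinset) atTop atTop := by
  apply Filter.tendsto_atTop_finset_of_monotone
  · intro a b hab n hn
    simp only [Set.Finite.mem_toFinset, Set.mem_ofPred_eq] at hn ⊢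
    exact hn.trans hab
  · intro n
    exact ⟨γ n, by simp⟩

lemma summable_inv_sq {γ : ℕ → ℝ} (hpos : ∀ n, 0 < γ n) (hfin : ∀ R : ℝ, {n | γ n ≤ R}.Finite)
    (l : ℂ) (h : Tendsto (fun R : ℝ => ∑ n ∈ (hfin R).toFinset, 2 * I / (I ^ 2 - (γ n : ℂ) ^ 2)) atTop (nhds l)) :
    Summable (fun n => 1 / (1 + γ n ^ 2)) := by
  have h1 : Tendsto (fun R : ℝ => ∑ n ∈ (hfin R).toFinset, 1 / (1 + γ n ^ 2)) atTop (nhds (-l.im/2)) := by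
    have h2 := ((Complex.continuous_im.tendsto l).comp h)
    have h3 : Tendsto (fun R : ℝ => -(∑ n ∈ (hfin R).toFinset, 2 * I / (I ^ 2 - (γ n : ℂ) ^ 2)).im/2) atTop (nhds (-l.im/2)) :=
      (h2.neg).div_const 2
    refine h3.congr fun R => ?_
    rw [Complex.im_sum, ← Finset.sum_neg_distrib, Finset.sum_div]
    refine Finset.sum_congr rfl fun n _ => ?_
    have : (2 * I / (I ^ 2 - (γ n : ℂ) ^ 2)) = ((-2 / (1 + γ n ^ 2) : ℝ) : ℂ) * I := by
      have h0 : (1 + (γ n : ℂ) ^ 2) ≠ 0 := by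
        have : (1 + γ n ^ 2 : ℝ) ≠ 0 := by positivity
        exact_mod_cast this
      have h00 : (I ^ 2 - (γ n : ℂ) ^ 2) ≠ 0 := by
        rw [I_sq]; intro h; apply h0; linear_combination -h
      push_cast
      rw [I_sq] at *
      field_simp
      ring
    rw [this, Complex.im_ofReal_mul, Complex.I_im]
    ring
  refine summable_of_sum_le (c := -l.im/2) (fun n => by positivity) ?_
  intro u
  have hm : Monotone (fun R : ℝ => ∑ n ∈ (hfin R).toFinset, 1 / (1 + γ n ^ 2)) := by
    intro a b hab
    apply Finset.sum_le_sum_of_subset_of_nonneg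
    · intro n hn
      simp only [Set.Finite.mem_toFinset, Set.mem_ofPred_eq] at hn ⊢
      exact hn.trans hab
    · intros; positivity
  obtain ⟨R, hR⟩ := ((sum_atTop_of_fin hfin).eventually (eventually_ge_atTop u)).exists
  calc _ ≤ ∑ n ∈ (hfin R).toFinset, 1 / (1 + γ n ^ 2) :=
        Finset.sum_le_sum_of_subset_of_nonneg hR (by intros; positivity)
    _ ≤ _ := hm.ge_of_tendsto h1 R

lemma sq_sub_ne {γ : ℝ} {z : ℂ} (hz : z.im ≠ 0) : z ^ 2 - (γ : ℂ) ^ 2 ≠ 0 := by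
  intro h
  have : (z - γ) * (z + γ) = 0 := by linear_combination h
  rcases mul_eq_zero.mp this with h | h
  · have := congrArg Complex.im h; simp at this; exact hz this
  · have := congrArg Complex.im h; simp at this; exact hz this

/-- bound for the partial fraction on the line Im z = -1 -/
lemma pf_bound (γ x : ℝ) (z : ℂ) (hz : z = x - I) :
    ‖2 * z / (z ^ 2 - (γ : ℂ) ^ 2)‖ ≤ 16 * (1 + x ^ 2) ^ 2 * (1 / (1 + γ ^ 2)) := by
  have him : z.im ≠ 0 := by simp [hz]
  have h0 := sq_sub_ne (γ := γ) him
  have hn : 0 < ‖z ^ 2 - (γ : ℂ) ^ 2‖ := norm_pos_iff.mpr h0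
  rw [norm_div, div_le_iff₀ hn]
  have h1 : ‖2 * z‖ ≤ 2 * (1 + x ^ 2) := by
    rw [norm_mul]
    have : ‖z‖ ≤ 1 + x ^ 2 := by
      rw [hz, Complex.norm_def, Complex.normSq_apply]
      apply Real.sqrt_le_iff.mpr
      constructor
      · positivity
      · simp; nlinarith [sq_nonneg x]
    simp; linarith
  have h2 : 1 + γ ^ 2 ≤ 8 * (1 + x ^ 2) * ‖z ^ 2 - (γ : ℂ) ^ 2‖ := by
    have e : ‖z ^ 2 - (γ : ℂ) ^ 2‖ ^ 2 = (x^2 - 1 - γ^2)^2 + 4 * x^2 := by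
      rw [← Complex.normSq_eq_norm_sq, Complex.normSq_apply, hz]
      simp [pow_two]
      ring
    refine (sq_le_sq₀ (by positivity) (by positivity)).mp ?_
    rw [mul_pow, mul_pow, e]
    by_cases hc : 1 + γ ^ 2 ≤ 2 * x ^ 2
    · nlinarith [sq_nonneg x, sq_nonneg γ, mul_nonneg (sq_nonneg x) (sq_nonneg x), sq_nonneg (x^2-1-γ^2), mul_nonneg (sq_nonneg (x^2-1-γ^2)) (sq_nonneg (1+x^2)), mul_nonneg (sq_nonneg x) (sq_nonneg (1+x^2))]
    · push Not at hc
      have h3 : (1 + γ ^ 2)/2 ≤ 1 + γ ^ 2 - x ^ 2 := by linarith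
      have h4 : ((1 + γ ^ 2)/2)^2 ≤ (1 + γ ^ 2 - x ^ 2)^2 := by gcongr
      have h5 : 1 ≤ (1 + x^2)^2 := by nlinarith [sq_nonneg x]
      nlinarith [mul_le_mul h5 h4 (by positivity) (by positivity), mul_nonneg (sq_nonneg (1+x^2)) (sq_nonneg x)]
  have h6 : 1 ≤ 8 * (1 + x ^ 2) * ‖z ^ 2 - (γ : ℂ) ^ 2‖ * (1 / (1 + γ ^ 2)) := by
    rw [mul_one_div, le_div_iff₀ (by positivity)]; linarith
  calc ‖2 * z‖ ≤ 2 * (1 + x ^ 2) * 1 := by linarith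
    _ ≤ 2 * (1 + x ^ 2) * (8 * (1 + x ^ 2) * ‖z ^ 2 - (γ : ℂ) ^ 2‖ * (1 / (1 + γ ^ 2))) := by gcongr
    _ = _ := by ring

/-- partial fractions on the line Im z = -1 -/
theorem hadamard_hasSum (F : ℂ → ℂ) (hF : Differentiable ℂ F) (heven : ∀ z, F (-z) = F z) (hF0 : F 0 ≠ 0)
    (γ : ℕ → ℝ) (hpos : ∀ n, 0 < γ n) (hfin : ∀ R : ℝ, {n | γ n ≤ R}.Finite)
    (hord : ∀ z, analyticOrderAt F z = (({n | (γ n:ℂ)=z}.ncard + {n | -(γ n:ℂ)=z}.ncard : ℕ):ℕ∞))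
    (C : ℝ) (hC : 0 ≤ C) (hgrow : ∀ R : ℝ, 1 ≤ R → ∀ z : ℂ, ‖z‖ ≤ R → ‖F z‖ ≤ Real.exp (C * R ^ (3/2:ℝ))) :
    Summable (fun n => 1 / (1 + γ n ^ 2)) ∧
    ∀ x : ℝ, HasSum (fun n => 2 * ((x:ℂ) - I) / (((x:ℂ) - I) ^ 2 - (γ n : ℂ) ^ 2)) (logDeriv F ((x:ℂ) - I)) := by
  have hne : ∀ z : ℂ, z.im ≠ 0 → F z ≠ 0 := by
    intro z hz h0
    have h1 : analyticOrderAt F z ≠ 0 := (hF.analyticAt z).analyticOrderAt_ne_zero.mpr h0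
    apply h1
    rw [hord]
    have e1 : {n | (γ n:ℂ)=z} = ∅ := by
      ext n; simp; intro h; apply hz; rw [← h]; simp
    have e2 : {n | -(γ n:ℂ)=z} = ∅ := by
      ext n; simp; intro h; apply hz; rw [← h]; simp
    rw [e1, e2]; simp
  have hs := summable_inv_sq hpos hfin _ (hadamard_even F hF heven hF0 γ hpos hfin hord C hC hgrow I (hne I (by simp)))
  refine ⟨hs, fun x => ?_⟩
  have him : ((x:ℂ) - I).im ≠ 0 := by simp
  have h1 := hadamard_even F hF heven hF0 γ hpos hfin hord C hC hgrow ((x:ℂ) - I) (hne _ him)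
  have hs2 : Summable (fun n => 2 * ((x:ℂ) - I) / (((x:ℂ) - I) ^ 2 - (γ n : ℂ) ^ 2)) := by
    refine Summable.of_norm_bounded (hs.mul_left _) (fun n => pf_bound (γ n) x _ rfl)
  have h2 := hs2.hasSum.comp (sum_atTop_of_fin hfin)
  have := tendsto_nhds_unique h1 h2
  rw [this]
  exact hs2.hasSum

end SGZ

namespace SGZ

def xi (s : ℂ) : ℂ := s * (s - 1) * completedRiemannZeta₀ s + 1

lemma xi_diff : Differentiable ℂ xi := by
  unfold xi
  have := differentiable_completedZeta₀
  fun_prop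

lemma xi_one_sub (s : ℂ) : xi (1 - s) = xi s := by
  unfold xi
  rw [completedRiemannZeta₀_one_sub]; ring

lemma xi_eq {s : ℂ} (h0 : s ≠ 0) (h1 : s ≠ 1) : xi s = s * (s - 1) * completedRiemannZeta s := by
  unfold xi
  rw [completedRiemannZeta_eq]
  have : 1 - s ≠ 0 := fun h => h1 (by linear_combination -h)
  field_simp
  ring

lemma xi_eq' {s : ℂ} (h0 : 0 < s.re) (h1 : s ≠ 1) : xi s = s * (s - 1) * (Gammaℝ s * riemannZeta s) := by
  have hs0 : s ≠ 0 := by rintro rfl; simp at h0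
  rw [xi_eq hs0 h1, riemannZeta_def_of_ne_zero hs0]
  have := Gammaℝ_ne_zero_of_re_pos h0
  field_simp

lemma norm_Gamma_le {s : ℂ} (hs : 0 < s.re) : ‖Complex.Gamma s‖ ≤ Real.Gamma s.re := by
  rw [Complex.Gamma_eq_integral hs, Real.Gamma_eq_integral hs, Complex.GammaIntegral]
  refine (norm_integral_le_integral_norm _).trans_eq ?_
  refine setIntegral_congr_fun measurableSet_Ioi fun x hx => ?_
  simp only [norm_mul, Complex.norm_real]
  rw [Complex.norm_cpow_eq_rpow_re_of_pos hx]
  simp [abs_of_pos, Real.exp_pos]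

lemma Gamma_growth {x : ℝ} (hx : 1 ≤ x) : Real.Gamma x ≤ Real.exp (2 * (x + 1) ^ (3/2:ℝ)) := by
  have h1 : Real.Gamma x ≤ Real.Gamma (x + 1) := by
    rw [Real.Gamma_add_one (by linarith)]
    exact le_mul_of_one_le_left (Real.Gamma_pos_of_pos (by linarith)).le hx
  have h2 : Real.Gamma (x + 1) ≤ Real.Gamma (⌈x⌉₊ + 1) := by
    apply Real.Gamma_strictMonoOn_Ici.monotoneOn
    · simp; linarith
    · simp; linarith [Nat.le_ceil x]
    · linarith [Nat.le_ceil x]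
  rw [Real.Gamma_nat_eq_factorial] at h2
  have h3 : ((⌈x⌉₊).factorial : ℝ) ≤ (⌈x⌉₊ : ℝ) ^ ⌈x⌉₊ := by exact_mod_cast Nat.factorial_le_pow _
  have hc : (⌈x⌉₊ : ℝ) ≤ x + 1 := (Nat.ceil_lt_add_one (by linarith)).le
  have hc1 : 1 ≤ (⌈x⌉₊ : ℝ) := hx.trans (Nat.le_ceil x)
  have h4 : (⌈x⌉₊ : ℝ) ^ ⌈x⌉₊ ≤ (x + 1) ^ (x + 1) := by
    rw [← Real.rpow_natCast]
    calc (⌈x⌉₊ : ℝ) ^ (⌈x⌉₊ : ℝ) ≤ (⌈x⌉₊ : ℝ) ^ (x + 1) := Real.rpow_le_rpow_of_exponent_le hc1 hc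
      _ ≤ _ := Real.rpow_le_rpow (by positivity) hc (by linarith)
  have h5 : (x + 1) ^ (x + 1) ≤ Real.exp (2 * (x + 1) ^ (3/2:ℝ)) := by
    rw [Real.rpow_def_of_pos (by linarith)]
    apply Real.exp_le_exp.mpr
    have h6 := Real.log_le_rpow_div (x := x + 1) (ε := 1/2) (by linarith) (by norm_num)
    have h7 : (x + 1) ^ (3/2:ℝ) = (x+1) ^ (1/2:ℝ) * (x + 1) := by
      rw [← Real.rpow_add_one (by linarith)]; norm_num
    rw [h7]
    nlinarith
  linarith

lemma zeta_bound {s : ℂ} (hs : 2 ≤ s.re) : ‖riemannZeta s‖ ≤ ∑' n : ℕ, 1 / ((n:ℝ) + 1) ^ 2 := by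
  rw [zeta_eq_tsum_one_div_nat_add_one_cpow (by linarith)]
  apply tsum_of_norm_bounded (Summable.hasSum _)
  · intro n
    have : ((n:ℂ) + 1) = (((n:ℝ) + 1 : ℝ) : ℂ) := by push_cast; rfl
    rw [norm_div, norm_one, this, Complex.norm_cpow_eq_rpow_re_of_pos (by positivity)]
    gcongr
    rw [← Real.rpow_natCast]
    apply Real.rpow_le_rpow_of_exponent_le
    · linarith [(Nat.cast_nonneg n : (0:ℝ) ≤ n)]
    · simpa using hs
  · have := (summable_nat_add_iff 1).mpr (Real.summable_one_div_nat_pow.mpr (le_refl 2))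
    simpa using this

lemma Lambda0_bound : ∃ K : ℝ, 0 ≤ K ∧ ∀ s : ℂ, 0 ≤ s.re → s.re ≤ 2 → ‖completedRiemannZeta₀ s‖ ≤ K := by
  set P := HurwitzZeta.hurwitzEvenFEPair 0
  have hconv : ∀ s : ℂ, MellinConvergent P.f_modif s := fun s =>
    (P.isStrongFEPair_toStrongFEPair.hasMellin s).1
  have i0 := (hconv 0).norm
  have i1 := (hconv 1).norm
  refine ⟨(∫ t in Ioi (0:ℝ), (‖(t:ℂ) ^ ((0:ℂ) - 1) • P.f_modif t‖ + ‖(t:ℂ) ^ ((1:ℂ) - 1) • P.f_modif t‖)) / 2, ?_, ?_⟩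
  · apply div_nonneg _ (by norm_num)
    apply integral_nonneg; intro t; positivity
  · intro s h0 h2
    have e : completedRiemannZeta₀ s = mellin P.f_modif (s / 2) / 2 := rfl
    rw [e, norm_div]
    simp only [Complex.norm_ofNat]
    gcongr
    rw [mellin]
    refine (norm_integral_le_integral_norm _).trans ?_
    refine setIntegral_mono_on (hconv _).norm (i0.add i1) measurableSet_Ioi ?_
    intro t ht
    have ht' : 0 < t := ht
    simp only [norm_smul]
    rw [← add_mul]
    gcongr
    rw [Complex.norm_cpow_eq_rpow_re_of_pos ht', Complex.norm_cpow_eq_rpow_re_of_pos ht', Complex.norm_cpow_eq_rpow_re_of_pos ht']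
    have e1 : (s / 2 - 1).re = s.re / 2 - 1 := by simp
    rw [e1]
    simp only [zero_sub, neg_re, one_re, sub_self, zero_re, Real.rpow_zero]
    rcases le_total 1 t with h | h
    · have : t ^ (s.re / 2 - 1) ≤ 1 := Real.rpow_le_one_of_one_le_of_nonpos h (by linarith)
      have := Real.rpow_nonneg ht'.le (-1:ℝ)
      linarith
    · have : t ^ (s.re / 2 - 1) ≤ t ^ (-1:ℝ) := Real.rpow_le_rpow_of_exponent_ge ht' h (by linarith)
      linarith

lemma xi_bound_half : ∃ K : ℝ, 0 ≤ K ∧ ∀ R : ℝ, 1 ≤ R → ∀ s : ℂ, 1/2 ≤ s.re → ‖s‖ ≤ 2 * R →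
    ‖xi s‖ ≤ 7 * R ^ 2 * K * Real.exp (2 * (2 * R) ^ (3/2:ℝ)) := by
  obtain ⟨K, hK, hb⟩ := Lambda0_bound
  set Z : ℝ := ∑' n : ℕ, 1 / ((n:ℝ) + 1) ^ 2
  have hZ : 0 ≤ Z := tsum_nonneg fun n => by positivity
  refine ⟨K + Z + 1, by positivity, ?_⟩
  intro R hR s hs hsR
  have hR0 : 0 < R := by linarith
  have hpoly : ‖s * (s - 1)‖ ≤ 6 * R ^ 2 := by
    rw [norm_mul]
    have : ‖s - 1‖ ≤ 2 * R + 1 := (norm_sub_le _ _).trans (by simpa using hsR)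
    calc ‖s‖ * ‖s - 1‖ ≤ (2 * R) * (2 * R + 1) := by gcongr
      _ ≤ _ := by nlinarith
  have hexp : 1 ≤ Real.exp (2 * (2 * R) ^ (3/2:ℝ)) := Real.one_le_exp (by positivity)
  have hR2 : 1 ≤ R ^ 2 := by nlinarith
  rcases le_total s.re 2 with h2 | h2
  · have h1 := hb s (by linarith) h2
    calc ‖xi s‖ ≤ ‖s * (s - 1) * completedRiemannZeta₀ s‖ + 1 := by
          unfold xi; exact (norm_add_le _ _).trans (by simp)
      _ ≤ 6 * R ^ 2 * K + 1 := by rw [norm_mul]; gcongr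
      _ ≤ 7 * R ^ 2 * (K + Z + 1) * 1 := by
          nlinarith [mul_nonneg (sq_nonneg R) hK, mul_nonneg (sq_nonneg R) hZ]
      _ ≤ _ := by gcongr
  · rw [xi_eq' (by linarith) (by rintro rfl; norm_num at h2), norm_mul, norm_mul (Gammaℝ s)]
    have hG : ‖Gammaℝ s‖ ≤ Real.exp (2 * (2 * R) ^ (3/2:ℝ)) := by
      rw [Gammaℝ_def, norm_mul, Complex.norm_cpow_eq_rpow_re_of_pos Real.pi_pos]
      have e1 : (-s / 2).re = -(s.re / 2) := by simp; ring
      have e2 : (s / 2).re = s.re / 2 := by simp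
      have h3 : π ^ (-s/2).re ≤ 1 := by
        rw [e1]; exact Real.rpow_le_one_of_one_le_of_nonpos (by linarith [Real.pi_gt_three]) (by linarith)
      have h4 := norm_Gamma_le (s := s / 2) (by rw [e2]; linarith)
      rw [e2] at h4
      have h5 := Gamma_growth (x := s.re / 2) (by linarith)
      have h6 : s.re ≤ 2 * R := (Complex.re_le_norm s).trans hsR
      calc _ ≤ 1 * Real.exp (2 * (s.re / 2 + 1) ^ (3/2:ℝ)) := by gcongr; exact h4.trans h5
        _ ≤ _ := by
          rw [one_mul]; gcongr; linarith
    have hz := zeta_bound h2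
    calc _ ≤ 6 * R ^ 2 * (Real.exp (2 * (2 * R) ^ (3/2:ℝ)) * Z) := by gcongr
      _ ≤ 7 * R ^ 2 * (Real.exp (2 * (2 * R) ^ (3/2:ℝ)) * (K + Z + 1)) := by
        gcongr
        · norm_num
        · linarith
      _ = _ := by ring

def Xi (z : ℂ) : ℂ := xi (1/2 + I * z)

lemma Xi_diff : Differentiable ℂ Xi := by
  unfold Xi
  have := xi_diff
  fun_prop

lemma Xi_even (z : ℂ) : Xi (-z) = Xi z := by
  unfold Xi
  rw [← xi_one_sub]; ring_nf

lemma Xi_growth : ∃ C : ℝ, 0 ≤ C ∧ ∀ R : ℝ, 1 ≤ R → ∀ z : ℂ, ‖z‖ ≤ R → ‖Xi z‖ ≤ Real.exp (C * R ^ (3/2:ℝ)) := by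
  obtain ⟨K, hK, hb⟩ := xi_bound_half
  refine ⟨9 + K + 2 * 2 ^ (3/2:ℝ), by positivity, ?_⟩
  intro R hR z hz
  have hR0 : 0 < R := by linarith
  have h1 : ‖Xi z‖ ≤ 7 * R ^ 2 * K * Real.exp (2 * (2 * R) ^ (3/2:ℝ)) := by
    have hn : ∀ w : ℂ, ‖w‖ ≤ R → ‖(1/2 + I * w : ℂ)‖ ≤ 2 * R := by
      intro w hw
      refine (norm_add_le _ _).trans ?_
      simp; linarith
    rcases le_total z.im 0 with h | h
    · exact hb R hR _ (by simp; linarith) (hn z hz)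
    · rw [← Xi_even]
      exact hb R hR _ (by simp; linarith) (hn (-z) (by simpa using hz))
  refine h1.trans ?_
  have hr : R ≤ R ^ (3/2:ℝ) := by
    conv_lhs => rw [← Real.rpow_one R]
    exact Real.rpow_le_rpow_of_exponent_le hR (by norm_num)
  have hr1 : 1 ≤ R ^ (3/2:ℝ) := hR.trans hr
  have e7 : (7:ℝ) ≤ Real.exp (7 * R ^ (3/2:ℝ)) := by
    linarith [Real.add_one_le_exp (7 * R ^ (3/2:ℝ))]
  have eR : R ≤ Real.exp (R ^ (3/2:ℝ)) := by linarith [Real.add_one_le_exp (R ^ (3/2:ℝ))]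
  have eK : K ≤ Real.exp (K * R ^ (3/2:ℝ)) := by
    have := Real.add_one_le_exp (K * R ^ (3/2:ℝ))
    nlinarith
  calc _ ≤ Real.exp (7 * R ^ (3/2:ℝ)) * Real.exp (R ^ (3/2:ℝ)) ^ 2 * Real.exp (K * R ^ (3/2:ℝ)) *
        Real.exp (2 * (2 * R) ^ (3/2:ℝ)) := by gcongr
    _ = _ := by
      rw [← Real.exp_nat_mul, ← Real.exp_add, ← Real.exp_add, ← Real.exp_add, Real.mul_rpow (by norm_num) hR0.le]
      congr 1
      push_cast; ring

end SGZ

namespace SGZ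

lemma Xi_order_ne_top (z : ℂ) : analyticOrderAt Xi z ≠ ⊤ := by
  intro h
  rw [AnalyticOnNhd.analyticOrderAt_eq_top_iff_eq_zero z (fun x => Xi_diff.analyticAt x)] at h
  have h1 : Xi (I / 2) = 1 := by
    unfold Xi xi
    have : (1/2 + I * (I / 2) : ℂ) = 0 := by
      rw [← mul_div_assoc, I_mul_I]; norm_num
    rw [this]; simp
  rw [h] at h1
  simp at h1

lemma gamma_fac_analytic {s : ℂ} (h0 : 0 < s.re) : AnalyticAt ℂ Gammaℝ s := by
  have h1 : AnalyticAt ℂ (fun s => (Gammaℝ s)⁻¹) s := differentiable_Gammaℝ_inv.analyticAt s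
  have h2 := h1.inv (inv_ne_zero (Gammaℝ_ne_zero_of_re_pos h0))
  refine h2.congr ?_
  filter_upwards with z
  simp

lemma Xi_order_eq (t : ℝ) : analyticOrderAt Xi (t:ℂ) = analyticOrderAt riemannZeta (1/2 + I * t) := by
  set φ : ℂ → ℂ := fun z => 1/2 + I * z with hφ
  have hφd : ∀ z, HasDerivAt φ I z := fun z => by
    have := ((hasDerivAt_id z).const_mul I).const_add (1/2 : ℂ)
    rw [mul_one] at this; exact this
  have hφa : AnalyticAt ℂ φ t := (show Differentiable ℂ φ from fun z => (hφd z).differentiableAt).analyticAt _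
  have hre : (φ t).re = 1/2 := by simp [φ]
  have hne1 : φ t ≠ 1 := by intro h; rw [h] at hre; norm_num at hre
  have hne0 : φ t ≠ 0 := by intro h; rw [h] at hre; norm_num at hre
  have hζ : AnalyticAt ℂ riemannZeta (φ t) := by
    refine DifferentiableOn.analyticAt (s := {1}ᶜ) (fun x hx => (differentiableAt_riemannZeta hx).differentiableWithinAt) ?_
    exact (isOpen_compl_singleton.mem_nhds (by simpa using hne1))
  set h : ℂ → ℂ := fun z => φ z * (φ z - 1) * Gammaℝ (φ z) with hh
  have hha : AnalyticAt ℂ h t := by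
    have := (gamma_fac_analytic (s := φ t) (by rw [hre]; norm_num)).comp hφa
    exact (hφa.mul (hφa.sub analyticAt_const)).mul this
  have hh0 : h t ≠ 0 := by
    simp only [hh]
    exact mul_ne_zero (mul_ne_zero hne0 (sub_ne_zero.mpr hne1)) (Gammaℝ_ne_zero_of_re_pos (by rw [hre]; norm_num))
  have hev : Xi =ᶠ[nhds (t:ℂ)] (h * (riemannZeta ∘ φ)) := by
    have c1 : ∀ᶠ z in nhds (t:ℂ), 0 < (φ z).re := by
      have : ContinuousAt (fun z => (φ z).re) t := Complex.continuous_re.continuousAt.comp hφa.continuousAt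
      exact this.eventually (lt_mem_nhds (by change 0 < (φ t).re; rw [hre]; norm_num))
    have c2 : ∀ᶠ z in nhds (t:ℂ), φ z ≠ 1 := hφa.continuousAt.eventually_ne hne1
    filter_upwards [c1, c2] with z h1 h2
    change xi (φ z) = _
    rw [xi_eq' h1 h2]
    simp only [hh, Pi.mul_apply, Function.comp]; ring
  rw [analyticOrderAt_congr hev, analyticOrderAt_mul hha (hζ.comp hφa),
    hha.analyticOrderAt_eq_zero.mpr hh0, zero_add]
  exact analyticOrderAt_comp_of_deriv_ne_zero hφa (by rw [(hφd t).deriv]; simp)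

lemma order_eq_mult (t : ℝ) : analyticOrderAt Xi (t:ℂ) = (zetaMult ((1 / 2 : ℝ) + (t : ℝ) * Complex.I) : ℕ∞) := by
  have e : ((1 / 2 : ℝ) + (t : ℝ) * Complex.I : ℂ) = 1/2 + I * t := by push_cast; ring
  rw [e]
  have hζ : AnalyticAt ℂ riemannZeta (1/2 + I * t) := by
    refine DifferentiableOn.analyticAt (s := {1}ᶜ) (fun x hx => (differentiableAt_riemannZeta hx).differentiableWithinAt) ?_
    refine (isOpen_compl_singleton.mem_nhds ?_)
    intro h
    have := congrArg Complex.re h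
    norm_num at this
  have htop := Xi_order_ne_top t
  rw [Xi_order_eq] at htop ⊢
  obtain ⟨n, hn⟩ := ENat.ne_top_iff_exists.mp htop
  rw [← hn]
  have h1 := (analyticOrderAt_eq_nat_iff_iteratedDeriv_eq_zero hζ).mp hn.symm
  congr 1
  unfold zetaMult
  apply le_antisymm
  · apply le_csInf ⟨n, h1.2⟩
    intro k hk
    by_contra! hlt
    exact hk (h1.1 k hlt)
  · exact Nat.sInf_le h1.2

lemma Xi_zero_real (hRH : RiemannHypothesis) (z : ℂ) (hz : Xi z = 0) : z.im = 0 := by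
  have key : ∀ w : ℂ, w.im ≤ 0 → Xi w = 0 → w.im = 0 := by
    intro w hw hw0
    set s : ℂ := 1/2 + I * w with hs
    have hre : s.re = 1/2 - w.im := by simp [hs]; ring
    have hs1 : s ≠ 1 := by
      intro h
      have : Xi w = 1 := by unfold Xi xi; rw [← hs, h]; simp
      rw [hw0] at this; simp at this
    have h1 : Xi w = s * (s - 1) * (Gammaℝ s * riemannZeta s) := xi_eq' (by rw [hre]; linarith) hs1
    have hs0 : s ≠ 0 := by intro h; rw [h] at hre; simp at hre; linarith
    have hζ : riemannZeta s = 0 := by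
      rw [hw0] at h1
      have hG := Gammaℝ_ne_zero_of_re_pos (s := s) (by rw [hre]; linarith)
      have := h1.symm
      simpa [hs0, sub_ne_zero.mpr hs1, hG] using this
    have := hRH s hζ (by
      rintro ⟨n, hn⟩
      rw [hn] at hre
      simp at hre
      have : (0:ℝ) ≤ n := Nat.cast_nonneg n
      linarith) hs1
    linarith
  rcases le_total z.im 0 with h | h
  · exact key z h hz
  · have := key (-z) (by simpa using h) (by rw [Xi_even, hz])
    simpa using this

theorem zeros_data (hRH : RiemannHypothesis)
    (γ : ℕ → ℝ) (hpos : ∀ n, 0 < γ n)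
    (htop : Filter.Tendsto γ Filter.atTop Filter.atTop)
    (hcount : ∀ t : ℝ, 0 < t →
      {n : ℕ | γ n = t}.ncard = zetaMult ((1 / 2 : ℝ) + (t : ℝ) * Complex.I)) :
    ∃ m : ℕ, Summable (fun n => 1 / (1 + γ n ^ 2)) ∧
    ∀ x : ℝ, HasSum (fun n => 2 * ((x:ℂ) - I) / (((x:ℂ) - I) ^ 2 - (γ n : ℂ) ^ 2))
      (logDeriv Xi ((x:ℂ) - I) - m / ((x:ℂ) - I)) := by
  have hfin : ∀ R : ℝ, {n | γ n ≤ R}.Finite := by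
    intro R
    have := htop.eventually (eventually_gt_atTop R)
    rw [eventually_atTop] at this
    obtain ⟨N, hN⟩ := this
    apply (Set.finite_lt_nat N).subset
    intro n hn
    by_contra h
    have := hN n (by simpa using h)
    have hn' : γ n ≤ R := hn
    linarith
  obtain ⟨m, hm⟩ := ENat.ne_top_iff_exists.mp (Xi_order_ne_top 0)
  obtain ⟨F, hFd, hF, hFo⟩ := exists_div (fun _ : Fin m => (0:ℂ)) Finset.univ Xi Xi_diff Xi_order_ne_top (by
    intro a
    by_cases ha : (0:ℂ) = a
    · subst ha; simp [← hm]
    · simp [ha])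
  have hF' : ∀ z, Xi z = z ^ m * F z := by intro z; simpa using hF z
  have hF0 : F 0 ≠ 0 := by
    have := hFo 0
    rw [← hm] at this
    simp only [Finset.filter_true, Finset.card_univ, Fintype.card_fin] at this
    have h2 : analyticOrderAt F 0 = 0 := by
      have h3 : (m:ℕ∞) + 0 = m + analyticOrderAt F 0 := by simpa using this
      exact (ENat.add_right_injective_of_ne_top (ENat.coe_ne_top m) h3).symm
    exact (hFd.analyticAt 0).analyticOrderAt_eq_zero.mp h2
  have heven : ∀ z, F (-z) = F z := by
    have h1 : ∀ z : ℂ, z ≠ 0 → (-1) ^ m * F (-z) = F z := by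
      intro z hz
      have := Xi_even z
      rw [hF', hF', neg_pow] at this
      have hzm : z ^ m ≠ 0 := pow_ne_zero _ hz
      apply mul_left_cancel₀ hzm
      linear_combination this
    have h2 : (-1 : ℂ) ^ m * F 0 = F 0 := by
      have c1 : Continuous (fun z => (-1 : ℂ) ^ m * F (-z)) := by
        have := hFd.continuous
        fun_prop
      have := c1.ext_on (dense_compl_singleton (0:ℂ)) hFd.continuous (fun z hz => h1 z hz)
      have := congrFun this 0
      simpa using this
    have h3 : (-1 : ℂ) ^ m = 1 := by
      apply mul_right_cancel₀ hF0; rw [h2, one_mul]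
    intro z
    by_cases hz : z = 0
    · simp [hz]
    · have := h1 z hz
      rw [h3, one_mul] at this; exact this
  have hFord : ∀ z : ℂ, z ≠ 0 → analyticOrderAt F z = analyticOrderAt Xi z := by
    intro z hz
    rw [hFo z]; simp [hz.symm]
  have hpp : ∀ t : ℝ, 0 < t → analyticOrderAt F (t:ℂ) = ({n : ℕ | γ n = t}.ncard : ℕ∞) := by
    intro t ht
    rw [hFord _ (by simpa using ht.ne'), order_eq_mult, hcount t ht]
  have hord : ∀ z, analyticOrderAt F z = (({n | (γ n:ℂ)=z}.ncard + {n | -(γ n:ℂ)=z}.ncard : ℕ):ℕ∞) := by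
    intro z
    by_cases hz : z.im = 0
    · obtain ⟨t, rfl⟩ : ∃ t : ℝ, z = t := ⟨z.re, Complex.ext (by simp) (by simpa using hz)⟩
      have e1 : {n | (γ n:ℂ)=(t:ℂ)} = {n | γ n = t} := by ext n; simp
      have e2 : {n | -(γ n:ℂ)=(t:ℂ)} = {n | γ n = -t} := by
        ext n
        simp only [Set.mem_ofPred_eq]
        rw [← Complex.ofReal_neg, Complex.ofReal_inj]
        constructor <;> intro h <;> linarith
      rw [e1, e2]
      have emp : ∀ u : ℝ, u ≤ 0 → {n | γ n = u} = ∅ := by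
        intro u hu
        ext n; simp; have := hpos n; intro h; linarith
      rcases lt_trichotomy t 0 with h | h | h
      · rw [emp t h.le]
        have e3 : F = F ∘ (fun z => -z) := by ext z; simp [heven]
        have h4 : analyticOrderAt F (t:ℂ) = analyticOrderAt F ((-t : ℝ):ℂ) := by
          conv_lhs => rw [e3]
          rw [analyticOrderAt_comp_of_deriv_ne_zero (by fun_prop) (by simp)]
          simp
        rw [h4, hpp _ (by linarith)]
        simp
      · subst h
        rw [emp _ le_rfl, emp (-0) (by simp)]
        simp
        exact (hFd.analyticAt 0).analyticOrderAt_eq_zero.mpr hF0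
      · rw [emp (-t) (by linarith), hpp t h]; simp
    · have e1 : {n | (γ n:ℂ)=z} = ∅ := by
        ext n; simp; intro h; apply hz; rw [← h]; simp
      have e2 : {n | -(γ n:ℂ)=z} = ∅ := by
        ext n; simp; intro h; apply hz; rw [← h]; simp
      rw [e1, e2]
      simp
      rw [hFord z (by rintro rfl; simp at hz)]
      exact (Xi_diff.analyticAt z).analyticOrderAt_eq_zero.mpr (fun h => hz (Xi_zero_real hRH z h))
  obtain ⟨C, hC, hgrow⟩ := Xi_growth
  have hgF : ∀ R : ℝ, 1 ≤ R → ∀ z : ℂ, ‖z‖ ≤ R → ‖F z‖ ≤ Real.exp (C * R ^ (3/2:ℝ)) := by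
    intro R hR z hz
    refine Complex.norm_le_of_forall_mem_frontier_norm_le (U := Metric.ball (0:ℂ) R) Metric.isBounded_ball
        (hFd.diffContOnCl) ?_ (by rw [closure_ball _ (by linarith)]; simpa using hz)
    intro x hx
    rw [frontier_ball _ (by linarith)] at hx
    have hxR : ‖x‖ = R := by simpa using hx
    have h2 := hgrow R hR x hxR.le
    rw [hF' x, norm_mul, norm_pow, hxR] at h2
    exact (le_mul_of_one_le_left (norm_nonneg _) (one_le_pow₀ hR)).trans h2
  obtain ⟨hs, hh⟩ := hadamard_hasSum F hFd heven hF0 γ hpos hfin hord C hC hgF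
  refine ⟨m, hs, fun x => ?_⟩
  have hz0 : ((x:ℂ) - I) ≠ 0 := by
    intro h; have := congrArg Complex.im h; simp at this
  have hXi : Xi ((x:ℂ) - I) ≠ 0 := by
    intro h; have := Xi_zero_real hRH _ h; simp at this
  have hFz : F ((x:ℂ) - I) ≠ 0 := by
    intro h; rw [hF', h, mul_zero] at hXi; exact hXi rfl
  have e : logDeriv Xi ((x:ℂ) - I) = m / ((x:ℂ) - I) + logDeriv F ((x:ℂ) - I) := by
    have : Xi = fun z => z ^ m * F z := funext hF'
    rw [this, logDeriv_mul (f := fun z : ℂ => z ^ m) _ (pow_ne_zero _ hz0) hFz (by fun_prop) (hFd _)]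
    congr 1
    rw [logDeriv_pow]
  rw [e, add_sub_cancel_left]
  exact hh x

end SGZ

namespace SGZ

lemma integrable_of_dec {f : ℝ → ℂ} (hf : Continuous f) (C : ℝ) (hb : ∀ x, ‖f x‖ ≤ C / (1 + x ^ 2)) :
    Integrable f := by
  refine Integrable.mono' (integrable_inv_one_add_sq.const_mul C) hf.aestronglyMeasurable ?_
  filter_upwards with x
  simpa [div_eq_mul_inv] using hb x

/-- shifting a line of integration -/
lemma shift_line (f : ℂ → ℂ) (a b : ℝ) (hab : a ≤ b) (C : ℝ)
    (hd : ∀ z : ℂ, a ≤ z.im → z.im ≤ b → DifferentiableAt ℂ f z)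
    (hb : ∀ z : ℂ, a ≤ z.im → z.im ≤ b → ‖f z‖ ≤ C / (1 + z.re ^ 2)) :
    ∫ x : ℝ, f (x + a * I) = ∫ x : ℝ, f (x + b * I) := by
  have hIntg : ∀ y : ℝ, a ≤ y → y ≤ b → Integrable (fun x : ℝ => f (x + y * I)) := by
    intro y h1 h2
    refine integrable_of_dec (C := C) ?_ ?_
    · rw [continuous_iff_continuousAt]
      intro x
      have h3 : ContinuousAt f (x + y * I) := (hd _ (by simpa using h1) (by simpa using h2)).continuousAt
      exact ContinuousAt.comp (f := fun x : ℝ => (x:ℂ) + y * I) h3 (by fun_prop)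
    · intro x
      simpa using hb (x + y * I) (by simpa using h1) (by simpa using h2)
  have t1 := intervalIntegral_tendsto_integral (hIntg a le_rfl hab) tendsto_neg_atTop_atBot tendsto_id
  have t2 := intervalIntegral_tendsto_integral (hIntg b hab le_rfl) tendsto_neg_atTop_atBot tendsto_id
  have t3 := t1.sub t2
  have t4 : Tendsto (fun R : ℝ => (∫ x in (-R)..(id R), f (x + a * I)) - ∫ x in (-R)..(id R), f (x + b * I)) atTop (nhds 0) := by
    rw [tendsto_zero_iff_norm_tendsto_zero]
    have hlim : Tendsto (fun R : ℝ => 2 * (C / (1 + R ^ 2) * |b - a|)) atTop (nhds 0) := by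
      have h1 : Tendsto (fun R : ℝ => 1 + R ^ 2) atTop atTop :=
        tendsto_atTop_add_const_left _ _ (tendsto_pow_atTop (by norm_num))
      have := ((h1.const_div_atTop C).mul_const |b - a|).const_mul 2
      simpa using this
    refine squeeze_zero (fun R => norm_nonneg _) ?_ hlim
    intro R
    have hmem : ∀ z : ℂ, z ∈ (Set.uIcc (-R) R ×ℂ Set.uIcc a b) → a ≤ z.im ∧ z.im ≤ b := by
      intro z hz
      have := hz.2
      rw [Set.uIcc_of_le hab] at this
      exact this
    have := Complex.integral_boundary_rect_eq_zero_of_differentiableOn f (-R + a * I) (R + b * I) (by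
      intro z hz
      have hz' : z ∈ (Set.uIcc (-R) R ×ℂ Set.uIcc a b) := by simpa using hz
      exact (hd z (hmem z hz').1 (hmem z hz').2).differentiableWithinAt)
    simp only [add_re, neg_re, ofReal_re, mul_re, I_re, mul_zero, ofReal_im, I_im, mul_one, sub_self, add_zero,
      add_im, neg_im, mul_im, zero_add, neg_zero] at this
    have e : (∫ x in (-R)..(id R), f (x + a * I)) - ∫ x in (-R)..(id R), f (x + b * I) =
      I • (∫ y : ℝ in a..b, f ((-R:ℝ) + y * I)) - I • (∫ y : ℝ in a..b, f (R + y * I)) := by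
      simp only [id]
      linear_combination this
    rw [e]
    have bd : ∀ u : ℝ, u ^ 2 = R ^ 2 → ‖I • ∫ y : ℝ in a..b, f (u + y * I)‖ ≤ C / (1 + R ^ 2) * |b - a| := by
      intro u hu
      rw [norm_smul, norm_I, one_mul]
      apply intervalIntegral.norm_integral_le_of_norm_le_const
      intro y hy
      rw [Set.uIoc_of_le hab] at hy
      have := hb (u + y * I) (by simpa using hy.1.le) (by simpa using hy.2)
      simpa [hu] using this
    have b1 := bd (-R) (by ring)
    have b2 := bd R rfl
    calc _ ≤ _ := norm_sub_le _ _
      _ ≤ _ := by linarith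
  have := tendsto_nhds_unique t3 t4
  exact sub_eq_zero.mp this

lemma line_lower (a : ℂ) (ha : a.im ≠ 0) : ∃ c : ℝ, 0 < c ∧ ∀ x : ℝ, 1 + x ^ 2 ≤ c * ‖(x:ℂ) - a‖ ^ 2 := by
  refine ⟨2 + (1 + 2 * ‖a‖ ^ 2) / a.im ^ 2, by positivity, ?_⟩
  intro x
  have h1 : ‖(x:ℂ) - a‖ ^ 2 = (x - a.re) ^ 2 + a.im ^ 2 := by
    rw [← Complex.normSq_eq_norm_sq, Complex.normSq_apply]; simp; ring
  have h2 : ‖a‖ ^ 2 = a.re ^ 2 + a.im ^ 2 := by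
    rw [← Complex.normSq_eq_norm_sq, Complex.normSq_apply]; ring
  have hpos : 0 < a.im ^ 2 := by positivity
  have h3 : (1 + 2 * ‖a‖ ^ 2) ≤ (1 + 2 * ‖a‖ ^ 2) / a.im ^ 2 * ‖(x:ℂ) - a‖ ^ 2 := by
    rw [div_mul_eq_mul_div, le_div_iff₀ hpos]
    refine mul_le_mul_of_nonneg_left ?_ (by positivity)
    rw [h1]; nlinarith [sq_nonneg (x - a.re)]
  rw [add_mul]
  nlinarith [sq_nonneg (x - 2 * a.re), h1, h2]

lemma integrable_pair (a b : ℂ) (ha : a.im ≠ 0) (hb : b.im ≠ 0) :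
    Integrable (fun x : ℝ => 1 / ((x:ℂ) - a) - 1 / ((x:ℂ) - b)) := by
  obtain ⟨c, hc, h1⟩ := line_lower a ha
  obtain ⟨d, hd, h2⟩ := line_lower b hb
  have ne : ∀ (w : ℂ), w.im ≠ 0 → ∀ x : ℝ, (x:ℂ) - w ≠ 0 := by
    intro w hw x h
    have := congrArg Complex.im h; simp at this; exact hw this
  refine integrable_of_dec (C := ‖a - b‖ * (c + d)) ?_ ?_
  · have := ne a ha
    have := ne b hb
    fun_prop (disch := aesop)
  · intro x
    have na := ne a ha x
    have nb := ne b hb x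
    have e : 1 / ((x:ℂ) - a) - 1 / ((x:ℂ) - b) = (a - b) * (1 / (((x:ℂ) - a) * ((x:ℂ) - b))) := by
      field_simp; ring
    rw [e, norm_mul, mul_div_assoc]
    gcongr
    rw [norm_div, norm_one, norm_mul, div_le_div_iff₀ (by positivity) (by positivity), one_mul]
    have p1 := norm_pos_iff.mpr na
    have p2 := norm_pos_iff.mpr nb
    have h3 := h1 x
    have h4 := h2 x
    have h5 : (1 + x^2)^2 ≤ (c * ‖(x:ℂ) - a‖ ^ 2) * (d * ‖(x:ℂ) - b‖ ^ 2) := by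
      rw [pow_two]; gcongr
    have h6 : (1 + x^2)^2 ≤ ((c + d) * (‖(x:ℂ) - a‖ * ‖(x:ℂ) - b‖))^2 := by
      refine h5.trans ?_
      have : c * d ≤ (c + d)^2 := by nlinarith
      calc _ = (c * d) * (‖(x:ℂ) - a‖ * ‖(x:ℂ) - b‖)^2 := by ring
        _ ≤ _ := by rw [mul_pow (c + d)]; exact mul_le_mul_of_nonneg_right this (by positivity)
    exact (sq_le_sq₀ (by positivity) (by positivity)).mp h6

lemma integral_pair_zero (a b : ℂ) (ha : 0 < a.im) (hb : 0 < b.im) :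
    ∫ x : ℝ, (1 / ((x:ℂ) - a) - 1 / ((x:ℂ) - b)) = 0 := by
  have ne : ∀ (w : ℂ), 0 < w.im → ∀ x : ℝ, (x:ℂ) - w ≠ 0 := by
    intro w hw x h
    have := congrArg Complex.im h; simp at this; exact hw.ne' this
  have hder : ∀ x : ℝ, HasDerivAt (fun x : ℝ => Complex.log (((x:ℂ) - a) / ((x:ℂ) - b)))
      (1 / ((x:ℂ) - a) - 1 / ((x:ℂ) - b)) x := by
    intro x
    have na := ne a ha x
    have nb := ne b hb x
    have hs : ((x:ℂ) - a) / ((x:ℂ) - b) ∈ slitPlane := by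
      rw [mem_slitPlane_iff_not_le_zero]
      intro h
      rw [Complex.le_def] at h
      obtain ⟨h1, h2⟩ := h
      simp only [zero_re, zero_im] at h1 h2
      have e : (x:ℂ) - a = (((x:ℂ) - a) / ((x:ℂ) - b)) * ((x:ℂ) - b) := by field_simp
      have := congrArg Complex.im e
      rw [mul_im, h2] at this
      simp only [sub_im, ofReal_im] at this
      nlinarith
    have d1 : HasDerivAt (fun x : ℝ => ((x:ℂ) - a) / ((x:ℂ) - b)) ((1 * ((x:ℂ) - b) - ((x:ℂ) - a) * 1) / ((x:ℂ) - b) ^ 2) x :=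
      ((hasDerivAt_id x).ofReal_comp.sub_const a).div ((hasDerivAt_id x).ofReal_comp.sub_const b) nb
    have := d1.clog_real hs
    convert! this using 1
    field_simp
  have hratio : ∀ l : Filter ℝ, Tendsto (fun x : ℝ => ‖x‖) l atTop →
      Tendsto (fun x : ℝ => Complex.log (((x:ℂ) - a) / ((x:ℂ) - b))) l (nhds 0) := by
    intro l hl
    have h1 : Tendsto (fun x : ℝ => ((x:ℂ) - a) / ((x:ℂ) - b)) l (nhds 1) := by
      have h2 : Tendsto (fun x : ℝ => 1 + (b - a) / ((x:ℂ) - b)) l (nhds (1 + 0)) := by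
        apply Tendsto.const_add
        have h3 : Tendsto (fun x : ℝ => (x:ℂ) - b) l (Bornology.cobounded ℂ) := by
          rw [← tendsto_norm_atTop_iff_cobounded]
          refine tendsto_atTop_mono (fun x => ?_) (tendsto_atTop_add_const_right _ (-‖b‖) hl)
          have := norm_sub_norm_le (x:ℂ) b
          simpa [sub_eq_add_neg] using this
        have := (tendsto_inv₀_cobounded.comp h3).const_mul (b - a)
        simpa [div_eq_mul_inv] using this
      rw [add_zero] at h2
      refine h2.congr fun x => ?_
      have nb := ne b hb x
      field_simp; ring
    have := h1.clog (by simp)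
    simpa using this
  have := integral_of_hasDerivAt_of_tendsto hder (integrable_pair a b ha.ne' hb.ne')
    (hratio atBot tendsto_abs_atBot_atTop) (hratio atTop tendsto_abs_atTop_atTop)
  simpa using this

lemma integral_pair_two : ∫ x : ℝ, (1 / ((x:ℂ) - 2 * I) - 1 / ((x:ℂ) - (-(2 * I)))) = 2 * π * I := by
  have e : ∀ x : ℝ, (1 / ((x:ℂ) - 2 * I) - 1 / ((x:ℂ) - (-(2 * I)))) = (((1 + (x / 2) ^ 2)⁻¹ : ℝ) : ℂ) * I := by
    intro x
    have h1 : (x:ℂ) - 2 * I ≠ 0 := by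
      intro h; have := congrArg Complex.im h; simp at this
    have h2 : (x:ℂ) - (-(2 * I)) ≠ 0 := by
      intro h; have := congrArg Complex.im h; simp at this
    have h3 : (1 + ((x:ℂ) / 2) ^ 2) ≠ 0 := by
      have : (1 + (x/2) ^ 2 : ℝ) ≠ 0 := by positivity
      exact_mod_cast this
    have h4 : (4 + (x:ℂ) ^ 2) ≠ 0 := by
      have : (4 + x ^ 2 : ℝ) ≠ 0 := by positivity
      exact_mod_cast this
    have h5 : (1 + ((x:ℂ) / 2) ^ 2)⁻¹ = 4 / (4 + (x:ℂ)^2) := by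
      rw [inv_eq_iff_eq_inv, inv_div]; ring
    push_cast
    rw [h5, div_sub_div _ _ h1 h2, div_mul_eq_mul_div, div_eq_div_iff (mul_ne_zero h1 h2) h4]
    ring_nf
    simp
  simp_rw [e]
  rw [integral_mul_const, integral_complex_ofReal]
  have := Measure.integral_comp_div (fun y : ℝ => (1 + y ^ 2)⁻¹) 2
  rw [this, integral_univ_inv_one_add_sq]
  simp

end SGZ

namespace SGZ

lemma nine_lower (z : ℂ) (hz : |z.im| ≤ 1) : 1 + z.re ^ 2 ≤ ‖z ^ 2 + 9‖ := by
  have h1 : (z ^ 2 + 9).re ≤ ‖z ^ 2 + 9‖ := Complex.re_le_norm _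
  have h2 : (z ^ 2 + 9).re = z.re ^ 2 - z.im ^ 2 + 9 := by
    simp [pow_two]
  have h3 : z.im ^ 2 ≤ 1 := by rw [sq_le_one_iff_abs_le_one]; exact hz
  linarith

lemma pf_split (z p : ℂ) (h1 : z - p ≠ 0) (h2 : z + p ≠ 0) :
    2 * z / (z ^ 2 - p ^ 2) = 1 / (z - p) + 1 / (z + p) := by
  have e : z ^ 2 - p ^ 2 = (z - p) * (z + p) := by ring
  rw [e]; field_simp; ring

theorem lemmaP (Ψ : ℂ → ℂ) (hd : Differentiable ℂ Ψ) (heven : ∀ z, Ψ (-z) = Ψ z) (C : ℝ)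
    (hb : ∀ z : ℂ, |z.im| ≤ 1 → ‖Ψ z‖ ≤ C / (1 + z.re ^ 2)) (p : ℂ) (hp : |p.im| < 1) :
    ∫ x : ℝ, 2 * ((x:ℂ) - I) / (((x:ℂ) - I) ^ 2 - p ^ 2) * Ψ ((x:ℂ) - I) = 2 * π * I * Ψ p := by
  have hC : 0 ≤ C := by
    have := (norm_nonneg _).trans (hb 0 (by simp))
    simpa using this
  set A : ℂ := Ψ p * (p ^ 2 + 9) with hA
  set K : ℂ → ℂ := fun z => Ψ z - A / (z ^ 2 + 9) with hK
  have hnine : ∀ z : ℂ, |z.im| ≤ 1 → z ^ 2 + 9 ≠ 0 := by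
    intro z hz h
    have := nine_lower z hz
    rw [h] at this; simp at this; nlinarith [sq_nonneg z.re]
  have hU : IsOpen {z : ℂ | z ^ 2 + 9 ≠ 0} := isOpen_ne_fun (by fun_prop) (by fun_prop)
  have hKd : DifferentiableOn ℂ K {z : ℂ | z ^ 2 + 9 ≠ 0} := by
    intro z hz
    have hz' : z ^ 2 + 9 ≠ 0 := hz
    exact ((hd z).sub ((differentiableAt_const _).div (by fun_prop) hz')).differentiableWithinAt
  have hpU : p ^ 2 + 9 ≠ 0 := hnine p hp.le
  have hKp : K p = 0 := by
    simp only [hK, hA]; field_simp; simp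
  have hKe : ∀ z, K (-z) = K z := by
    intro z; simp only [hK, heven, neg_sq]
  have hKmp : K (-p) = 0 := by rw [hKe, hKp]
  have hmpU : (-p) ^ 2 + 9 ≠ 0 := by rwa [neg_sq]
  set h : ℂ → ℂ := fun z => dslope K p z + dslope K (-p) z with hh
  have hhd : DifferentiableOn ℂ h {z : ℂ | z ^ 2 + 9 ≠ 0} :=
    ((Complex.differentiableOn_dslope (hU.mem_nhds hpU)).mpr hKd).add
    ((Complex.differentiableOn_dslope (hU.mem_nhds hmpU)).mpr hKd)
  have hhz : ∀ z, z ≠ p → z ≠ -p → h z = 2 * z / (z ^ 2 - p ^ 2) * K z := by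
    intro z h1 h2
    simp only [hh]
    rw [dslope_of_ne _ h1, dslope_of_ne _ h2, slope_def_field, slope_def_field, hKp, hKmp,
      pf_split z p (sub_ne_zero.mpr h1) (by rw [← sub_neg_eq_add]; exact sub_ne_zero.mpr h2)]
    simp only [sub_zero, sub_neg_eq_add]
    ring
  -- decay of h
  have hKb : ∀ z : ℂ, |z.im| ≤ 1 → ‖K z‖ ≤ (C + ‖A‖) / (1 + z.re ^ 2) := by
    intro z hz
    have h9 := nine_lower z hz
    calc ‖K z‖ ≤ ‖Ψ z‖ + ‖A / (z ^ 2 + 9)‖ := norm_sub_le _ _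
      _ ≤ C / (1 + z.re ^ 2) + ‖A‖ / (1 + z.re ^ 2) := by
        rw [norm_div]; gcongr; exact hb z hz
      _ = _ := by ring
  obtain ⟨B, hB0, hB⟩ : ∃ B : ℝ, 0 ≤ B ∧ ∀ z : ℂ, |z.im| ≤ 1 → ‖h z‖ ≤ B / (1 + z.re ^ 2) := by
    set r : ℝ := |p.re| + 1 with hr
    have hcomp : IsCompact (Set.Icc (-r) r ×ℂ Set.Icc (-1:ℝ) 1) := isCompact_Icc.reProdIm isCompact_Icc
    have hcont : ContinuousOn h (Set.Icc (-r) r ×ℂ Set.Icc (-1:ℝ) 1) := by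
      apply hhd.continuousOn.mono
      intro z hz
      exact hnine z (abs_le.mpr hz.2)
    obtain ⟨M, hM⟩ := hcomp.exists_bound_of_continuousOn hcont
    have hM0 : 0 ≤ |M| * (1 + r ^ 2) := by positivity
    refine ⟨|M| * (1 + r ^ 2) + 2 * (C + ‖A‖), by positivity, ?_⟩
    intro z hz
    by_cases hzr : |z.re| ≤ r
    · have h1 := hM z ⟨abs_le.mp hzr, abs_le.mp hz⟩
      have h2 : z.re ^ 2 ≤ r ^ 2 := by
        rw [← sq_abs]; gcongr
      rw [le_div_iff₀ (by positivity)]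
      calc ‖h z‖ * (1 + z.re ^ 2) ≤ |M| * (1 + r ^ 2) := by
            gcongr; exact h1.trans (le_abs_self M)
        _ ≤ _ := by
          have : 0 ≤ 2 * (C + ‖A‖) := by positivity
          linarith
    · push Not at hzr
      have n1 : 1 ≤ ‖z - p‖ := by
        have h1 := Complex.abs_re_le_norm (z - p)
        have h2 := abs_sub_abs_le_abs_sub z.re p.re
        rw [sub_re] at h1
        linarith
      have n2 : 1 ≤ ‖z + p‖ := by
        have h1 := Complex.abs_re_le_norm (z + p)
        have h2 := abs_sub_abs_le_abs_sub z.re (-p.re)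
        rw [add_re] at h1
        rw [abs_neg, sub_neg_eq_add] at h2
        linarith
      have ne1 : z - p ≠ 0 := by intro h; rw [h] at n1; simp at n1; linarith
      have ne2 : z + p ≠ 0 := by intro h; rw [h] at n2; simp at n2; linarith
      rw [hhz z (sub_ne_zero.mp ne1) (fun h => ne2 (by rw [h]; ring)), pf_split z p ne1 ne2, norm_mul]
      have h3 : ‖1 / (z - p) + 1 / (z + p)‖ ≤ 2 := by
        refine (norm_add_le _ _).trans ?_
        rw [norm_div, norm_div, norm_one]
        have := div_le_one_of_le₀ n1 (norm_nonneg _)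
        have := div_le_one_of_le₀ n2 (norm_nonneg _)
        linarith
      calc _ ≤ 2 * ((C + ‖A‖) / (1 + z.re ^ 2)) := by gcongr; exact hKb z hz
        _ = (2 * (C + ‖A‖)) / (1 + z.re ^ 2) := by ring
        _ ≤ _ := by gcongr; linarith
  have hshift := shift_line h (-1) 1 (by norm_num) B
    (fun z h1 h2 => hhd.differentiableAt (hU.mem_nhds (hnine z (abs_le.mpr ⟨h1, h2⟩))))
    (fun z h1 h2 => hB z (abs_le.mpr ⟨h1, h2⟩))
  have hpim := abs_lt.mp hp
  have nep : ∀ z : ℂ, |z.im| = 1 → z ≠ p ∧ z ≠ -p := by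
    intro z hz
    constructor
    · rintro rfl; linarith
    · rintro rfl; simp at hz; linarith
  have hodd : ∀ x : ℝ, h ((-x : ℝ) + (1:ℝ) * I) = - h (x + (-1:ℝ) * I) := by
    intro x
    have e1 : (((-x : ℝ):ℂ) + (1:ℝ) * I) = -(x + (-1:ℝ) * I) := by push_cast; ring
    have a1 := nep (x + (-1:ℝ) * I) (by simp)
    have a2 := nep (-(x + (-1:ℝ) * I)) (by simp)
    rw [e1, hhz _ a2.1 a2.2, hhz _ a1.1 a1.2, hKe, neg_sq]
    ring
  have hz0 : ∫ x : ℝ, h (x + (-1:ℝ) * I) = 0 := by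
    have e2 : ∫ x : ℝ, h (x + (1:ℝ) * I) = ∫ x : ℝ, h ((-x : ℝ) + (1:ℝ) * I) :=
      (integral_neg_eq_self (fun x : ℝ => h (x + (1:ℝ) * I)) volume).symm
    rw [e2] at hshift
    simp_rw [hodd] at hshift
    rw [integral_neg] at hshift
    have := add_eq_zero_iff_eq_neg.mpr hshift
    rw [← two_mul] at this
    simpa using this
  have hhIntg : Integrable (fun x : ℝ => h (x + (-1:ℝ) * I)) := by
    refine integrable_of_dec (C := B) ?_ ?_
    · rw [continuous_iff_continuousAt]
      intro x
      have h3 : ContinuousAt h (x + (-1:ℝ) * I) :=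
        (hhd.differentiableAt (hU.mem_nhds (hnine _ (by simp)))).continuousAt
      exact ContinuousAt.comp (f := fun x : ℝ => (x:ℂ) + (-1:ℝ) * I) h3 (by fun_prop)
    · intro x
      simpa using hB (x + (-1:ℝ) * I) (by simp)
  -- the explicit rational part
  have q1 := integral_pair_zero (p + I) (4 * I) (by simp; linarith) (by simp)
  have q2 := integral_pair_zero (-p + I) (2 * I) (by simp; linarith) (by simp)
  have q3 := integral_pair_two
  have i1 := integrable_pair (p + I) (4 * I) (by simp; linarith) (by simp)
  have i2 := integrable_pair (-p + I) (2 * I) (by simp; linarith) (by simp)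
  have i3 := integrable_pair (2 * I) (-(2 * I)) (by simp) (by simp)
  have hpt : ∀ x : ℝ, 2 * ((x:ℂ) - I) / (((x:ℂ) - I) ^ 2 - p ^ 2) * Ψ ((x:ℂ) - I) =
      h (x + (-1:ℝ) * I) + Ψ p * (((1 / ((x:ℂ) - (p + I)) - 1 / ((x:ℂ) - 4 * I)) + (1 / ((x:ℂ) - (-p + I)) - 1 / ((x:ℂ) - 2 * I)))
        + (1 / ((x:ℂ) - 2 * I) - 1 / ((x:ℂ) - (-(2 * I))))) := by
    intro x
    have ez : (x + (-1:ℝ) * I : ℂ) = x - I := by push_cast; ring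
    have a1 := nep ((x:ℂ) - I) (by simp)
    rw [ez, hhz _ a1.1 a1.2]
    set z : ℂ := (x:ℂ) - I with hz
    have zi : z.im = -1 := by simp [hz]
    have n1 : z - p ≠ 0 := sub_ne_zero.mpr a1.1
    have n2 : z + p ≠ 0 := by rw [← sub_neg_eq_add]; exact sub_ne_zero.mpr a1.2
    have n3 : z - 3 * I ≠ 0 := by
      intro h; have := congrArg Complex.im h; simp [zi] at this; linarith
    have n4 : z + 3 * I ≠ 0 := by
      intro h; have := congrArg Complex.im h; simp [zi] at this; linarith
    have n9 : z ^ 2 + 9 ≠ 0 := hnine z (by rw [zi]; simp)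
    have e1 : (x:ℂ) - (p + I) = z - p := by rw [hz]; ring
    have e2 : (x:ℂ) - 4 * I = z - 3 * I := by rw [hz]; ring
    have e3 : (x:ℂ) - (-p + I) = z + p := by rw [hz]; ring
    have e5 : (x:ℂ) - (-(2 * I)) = z + 3 * I := by rw [hz]; ring
    rw [e1, e2, e3, e5, pf_split z p n1 n2]
    have e9 : 1 / (z - 3 * I) + 1 / (z + 3 * I) = 2 * z / (z ^ 2 + 9) := by
      rw [div_add_div _ _ n3 n4, div_eq_div_iff (mul_ne_zero n3 n4) n9]
      ring_nf
      simp
    have e10 : 1 / (z - p) + 1 / (z + p) - 2 * z / (z ^ 2 + 9) = (1 / (z - p) + 1 / (z + p)) * ((p ^ 2 + 9) / (z ^ 2 + 9)) := by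
      field_simp
      ring
    simp only [hK, hA]
    calc _ = (1 / (z - p) + 1 / (z + p)) * (Ψ z - Ψ p * (p ^ 2 + 9) / (z ^ 2 + 9)) +
          Ψ p * ((1 / (z - p) + 1 / (z + p)) * ((p ^ 2 + 9) / (z ^ 2 + 9))) := by ring
      _ = _ := by rw [← e10, ← e9]; ring
  simp_rw [hpt]
  have i12 : Integrable (fun x : ℝ => (1 / ((x:ℂ) - (p + I)) - 1 / ((x:ℂ) - 4 * I)) + (1 / ((x:ℂ) - (-p + I)) - 1 / ((x:ℂ) - 2 * I))) := i1.add i2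
  have i123 : Integrable (fun x : ℝ => ((1 / ((x:ℂ) - (p + I)) - 1 / ((x:ℂ) - 4 * I)) + (1 / ((x:ℂ) - (-p + I)) - 1 / ((x:ℂ) - 2 * I))) + (1 / ((x:ℂ) - 2 * I) - 1 / ((x:ℂ) - (-(2 * I))))) := i12.add i3
  rw [integral_add hhIntg (i123.const_mul _), hz0, integral_const_mul, integral_add i12 i3,
    integral_add i1 i2, q1, q2, q3]
  ring

end SGZ

namespace SGZ

lemma digamma_real {x : ℝ} (hx : 0 < x) :
    Complex.digamma (x:ℂ) = ((deriv (Real.log ∘ Real.Gamma) x : ℝ) : ℂ) := by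
  have hne : ∀ m : ℕ, x ≠ -m := fun m => ne_of_gt (by have : (0:ℝ) ≤ m := m.cast_nonneg
                                                      linarith)
  have hneC : ∀ m : ℕ, (x:ℂ) ≠ -m := fun m h => hne m (by exact_mod_cast h)
  have h1 : HasDerivAt (fun y : ℝ => Complex.Gamma (y:ℂ)) (deriv Complex.Gamma (x:ℂ)) x :=
    (Complex.differentiableAt_Gamma _ hneC).hasDerivAt.comp_ofReal
  have h2 : HasDerivAt (fun y : ℝ => ((Real.Gamma y : ℝ):ℂ)) ((deriv Real.Gamma x : ℝ):ℂ) x :=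
    (Real.differentiableAt_Gamma hne).hasDerivAt.ofReal_comp
  have h3 : (fun y : ℝ => ((Real.Gamma y : ℝ):ℂ)) = fun y : ℝ => Complex.Gamma (y:ℂ) := by
    funext y; rw [Complex.Gamma_ofReal]
  rw [h3] at h2
  have h4 := h1.unique h2
  rw [Complex.digamma_def, logDeriv_apply, h4, Complex.Gamma_ofReal, Function.comp_def,
    deriv.log (Real.differentiableAt_Gamma hne) (Real.Gamma_pos_of_pos hx).ne']
  push_cast; rfl

lemma digamma_mono {x y : ℝ} (hx : 0 < x) (hxy : x ≤ y) :
    deriv (Real.log ∘ Real.Gamma) x ≤ deriv (Real.log ∘ Real.Gamma) y := by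
  have hc : ConvexOn ℝ (Ioi 0) (Real.log ∘ Real.Gamma) := Real.convexOn_log_Gamma
  refine hc.monotoneOn_deriv ?_ hx (hx.trans_le hxy) hxy
  intro x hx
  have hx : 0 < x := hx
  refine ((Real.differentiableAt_Gamma ?_).log (Real.Gamma_ne_zero ?_)) <;>
    exact fun m ↦ ne_of_gt (by have : (0:ℝ) ≤ m := m.cast_nonneg
                               linarith)

lemma digamma_rec (s : ℂ) (hs : 0 < s.re) (N : ℕ) :
    Complex.digamma (s + N) = Complex.digamma s + ∑ n ∈ Finset.range N, 1 / ((n:ℂ) + s) := by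
  induction N with
  | zero => simp
  | succ N ih =>
    rw [Finset.sum_range_succ, ← add_assoc, ← ih]
    have := Complex.digamma_apply_add_one (s + N) (by
      intro m h
      have := congrArg Complex.re h
      simp at this
      have h1 : (0:ℝ) ≤ m := m.cast_nonneg
      have h2 : (0:ℝ) ≤ N := N.cast_nonneg
      linarith)
    push_cast
    rw [← add_assoc, this, one_div, add_comm (N:ℂ) s]

def dterm (n : ℕ) (s : ℂ) : ℂ := 1 / ((n:ℂ) + 1) - 1 / ((n:ℂ) + s)

lemma dterm_bound (n : ℕ) (s : ℂ) (hs : 1/8 ≤ s.re) : ‖dterm n s‖ ≤ 8 * ‖s - 1‖ * (1 / ((n:ℝ) + 1) ^ 2) := by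
  have hn : (0:ℝ) ≤ n := n.cast_nonneg
  have h1 : ((n:ℝ) + 1) / 8 ≤ ‖(n:ℂ) + s‖ := by
    refine le_trans ?_ (Complex.re_le_norm _)
    simp; linarith
  have h2 : ‖(n:ℂ) + 1‖ = (n:ℝ) + 1 := by
    have : (n:ℂ) + 1 = ((n + 1 : ℕ) : ℂ) := by push_cast; rfl
    rw [this, Complex.norm_natCast]; push_cast; rfl
  have h3 : (n:ℂ) + s ≠ 0 := by
    rw [← norm_pos_iff]; linarith
  have h4 : (n:ℂ) + 1 ≠ 0 := by
    rw [← norm_pos_iff]; linarith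
  have : dterm n s = (s - 1) / (((n:ℂ) + 1) * (n + s)) := by
    unfold dterm; field_simp; ring
  rw [this, norm_div, norm_mul, h2, div_le_iff₀ (by positivity)]
  have h5 : (0:ℝ) ≤ ‖s - 1‖ := norm_nonneg _
  calc ‖s - 1‖ = 8 * ‖s - 1‖ * (1 / ((n:ℝ) + 1) ^ 2) * ((n + 1) * ((n + 1) / 8)) := by
        field_simp
    _ ≤ _ := by gcongr

lemma summable_sq1 : Summable (fun n : ℕ => 1 / ((n:ℝ) + 1) ^ 2) := by
  have := (summable_nat_add_iff 1).2 (Real.summable_one_div_nat_pow (p := 2) |>.2 (by norm_num))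
  simpa using this

lemma dterm_summable (s : ℂ) (hs : 1/8 ≤ s.re) : Summable (fun n => dterm n s) :=
  Summable.of_norm_bounded (summable_sq1.mul_left _) (fun n => dterm_bound n s hs)

lemma digamma_series_real {x : ℝ} (h1 : 1 ≤ x) (h2 : x ≤ 2) :
    Complex.digamma (x:ℂ) = Complex.digamma 1 + ∑' n, dterm n (x:ℂ) := by
  have hs := (dterm_summable (x:ℂ) (by simp; linarith)).hasSum.tendsto_sum_nat
  have key : ∀ N : ℕ, ‖Complex.digamma (x:ℂ) - Complex.digamma 1 - ∑ n ∈ Finset.range N, dterm n (x:ℂ)‖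
      ≤ 1 / ((N:ℝ) + 1) := by
    intro N
    have hN : (0:ℝ) ≤ N := N.cast_nonneg
    have e1 := digamma_rec (x:ℂ) (by simp; linarith) N
    have e2 := digamma_rec 1 (by simp) N
    have e3 : Complex.digamma (x:ℂ) - Complex.digamma 1 - ∑ n ∈ Finset.range N, dterm n (x:ℂ)
       = Complex.digamma ((x + N : ℝ):ℂ) - Complex.digamma ((1 + N : ℝ):ℂ) := by
      push_cast
      rw [e1, e2]
      unfold dterm
      rw [Finset.sum_sub_distrib]; ring
    rw [e3, digamma_real (by linarith), digamma_real (by linarith), ← Complex.ofReal_sub,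
      Complex.norm_real, Real.norm_eq_abs]
    have m1 := digamma_mono (x := 1 + N) (y := x + N) (by linarith) (by linarith)
    have m2 := digamma_mono (x := x + N) (y := 1 + N + 1) (by linarith) (by linarith)
    have e4 := Complex.digamma_apply_add_one ((1 + N : ℝ) : ℂ) (by
      intro m h
      have := congrArg Complex.re h
      simp at this
      have h1 : (0:ℝ) ≤ m := m.cast_nonneg
      linarith)
    have e5 : (((1 + N : ℝ) : ℂ) + 1) = ((1 + N + 1 : ℝ):ℂ) := by push_cast; rfl
    rw [e5, digamma_real (by linarith), digamma_real (by linarith), ← Complex.ofReal_inv, ← Complex.ofReal_add] at e4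
    have e6 := Complex.ofReal_injective e4
    rw [abs_of_nonneg (by linarith), one_div, add_comm (N:ℝ) 1]
    linarith
  have lim0 : Tendsto (fun N : ℕ => Complex.digamma (x:ℂ) - Complex.digamma 1 - ∑ n ∈ Finset.range N, dterm n (x:ℂ))
      atTop (nhds 0) := squeeze_zero_norm key tendsto_one_div_add_atTop_nhds_zero_nat
  have lim1 := (tendsto_const_nhds (x := Complex.digamma (x:ℂ) - Complex.digamma 1)).sub hs
  have := tendsto_nhds_unique lim0 lim1
  linear_combination -this

lemma digamma_series (s : ℂ) (hs : 1/8 < s.re) :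
    Complex.digamma s = Complex.digamma 1 + ∑' n, dterm n s := by
  set U : Set ℂ := {s | 1/8 < s.re} with hU
  have hUo : IsOpen U := isOpen_lt continuous_const Complex.continuous_re
  have hUc : IsPreconnected U := (convex_halfSpace_re_gt _).isPreconnected
  have hne : ∀ s ∈ U, ∀ m : ℕ, s ≠ -m := by
    intro s hs m h
    have := congrArg Complex.re h
    have hs : 1/8 < s.re := hs
    simp at this
    have h1 : (0:ℝ) ≤ m := m.cast_nonneg
    linarith
  have hf : AnalyticOnNhd ℂ Complex.digamma U := by
    have hG : DifferentiableOn ℂ Complex.Gamma U := fun s hs =>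
      (Complex.differentiableAt_Gamma _ (hne s hs)).differentiableWithinAt
    have hG' := hG.analyticOnNhd hUo
    intro s hs
    exact (hG'.deriv s hs).div (hG' s hs) (Complex.Gamma_ne_zero (hne s hs))
  have hg : AnalyticOnNhd ℂ (fun s => Complex.digamma 1 + ∑' n, dterm n s) U := by
    refine DifferentiableOn.analyticOnNhd ?_ hUo
    refine (differentiableOn_const _).add ?_
    intro s hs
    have hR : DifferentiableOn ℂ (fun s => ∑' n, dterm n s) (U ∩ Metric.ball 1 (‖s - 1‖ + 1)) := by
      refine differentiableOn_tsum_of_summable_norm (summable_sq1.mul_left (8 * (‖s - 1‖ + 1))) ?_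
        (hUo.inter Metric.isOpen_ball) ?_
      · intro n w hw
        have hw1 : 1/8 < w.re := hw.1
        have hnw : (n:ℂ) + w ≠ 0 := by
          intro h
          have := congrArg Complex.re h
          have h1 : (0:ℝ) ≤ n := n.cast_nonneg
          simp at this
          linarith
        unfold dterm
        exact ((differentiableAt_const _).sub ((differentiableAt_const _).div
          ((differentiableAt_const _).add differentiableAt_id) hnw)).differentiableWithinAt
      · intro n w hw
        have hw1 : 1/8 < w.re := hw.1
        have hw2 : ‖w - 1‖ < ‖s - 1‖ + 1 := by simpa [dist_eq_norm] using hw.2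
        refine (dterm_bound n w hw1.le).trans ?_
        gcongr
    refine (hR.differentiableAt ?_).differentiableWithinAt
    refine (hUo.inter Metric.isOpen_ball).mem_nhds ⟨hs, ?_⟩
    simp [dist_eq_norm]
  have := hf.eqOn_of_preconnected_of_frequently_eq hg hUc (z₀ := ((3/2:ℝ):ℂ)) (by
    rw [hU]; simp; norm_num) ?_
  · exact this hs
  · have hc : Tendsto (fun x : ℝ => (x:ℂ)) (nhdsWithin (3/2) {(3/2:ℝ)}ᶜ) (nhdsWithin ((3/2:ℝ):ℂ) {((3/2:ℝ):ℂ)}ᶜ) := by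
      apply tendsto_nhdsWithin_of_tendsto_nhds_of_eventually_within
      · exact (Complex.continuous_ofReal.tendsto _).mono_left nhdsWithin_le_nhds
      · filter_upwards [self_mem_nhdsWithin] with x hx
        intro h; exact hx (Complex.ofReal_injective h)
    refine hc.frequently ?_
    apply Eventually.frequently
    have : Set.Ioo (1:ℝ) 2 ∈ nhdsWithin (3/2:ℝ) {(3/2:ℝ)}ᶜ :=
      mem_nhdsWithin_of_mem_nhds (Ioo_mem_nhds (by norm_num) (by norm_num))
    filter_upwards [this] with x hx
    exact digamma_series_real hx.1.le hx.2.le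

end SGZ

namespace SGZ

def GR (s : ℂ) : ℂ := logDeriv Gammaℝ s

lemma GR_eq {s : ℂ} (hs : 0 < s.re) : GR s = -(Real.log π : ℂ) / 2 + Complex.digamma (s / 2) / 2 := by
  have hne : ∀ m : ℕ, s / 2 ≠ -m := by
    intro m h
    have := congrArg Complex.re h
    simp at this
    have h1 : (0:ℝ) ≤ m := m.cast_nonneg
    linarith
  have hpi : (π:ℂ) ≠ 0 := by exact_mod_cast Real.pi_ne_zero
  have e : Gammaℝ = fun s : ℂ => (π:ℂ) ^ (-s / 2) * Complex.Gamma (s / 2) := by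
    funext s; rw [Complex.Gammaℝ_def]
  have h1 : HasDerivAt (fun s : ℂ => (π:ℂ) ^ (-s / 2)) ((π:ℂ) ^ (-s / 2) * Complex.log π * (-1/2)) s := by
    have : HasDerivAt (fun s : ℂ => -s / 2) (-1/2) s := by
      simpa using ((hasDerivAt_id s).neg.div_const 2)
    exact this.const_cpow (Or.inl hpi)
  have h2 : HasDerivAt (fun s : ℂ => Complex.Gamma (s / 2)) (deriv Complex.Gamma (s / 2) * (1 / 2)) s := by
    have h3 : HasDerivAt (fun s : ℂ => s / 2) (1/2) s := by
      simpa using ((hasDerivAt_id s).div_const 2)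
    exact HasDerivAt.comp s (Complex.differentiableAt_Gamma _ hne).hasDerivAt h3
  have h0 : (π:ℂ) ^ (-s / 2) ≠ 0 := by
    rw [Complex.cpow_ne_zero_iff]; left; exact hpi
  have hG := Complex.Gamma_ne_zero hne
  unfold GR
  rw [e, logDeriv_apply, (show HasDerivAt (fun s : ℂ => (π:ℂ) ^ (-s / 2) * Complex.Gamma (s / 2)) _ s from h1.mul h2).deriv, Complex.digamma_def, logDeriv_apply, ← Complex.ofReal_log Real.pi_pos.le]
  field_simp

lemma GR_growth : ∃ C : ℝ, 0 ≤ C ∧ ∀ s : ℂ, 1/2 ≤ s.re → ‖GR s‖ ≤ C * (1 + ‖s‖) := by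
  set S := ∑' n : ℕ, 1 / ((n:ℝ) + 1) ^ 2 with hS
  have hS0 : 0 ≤ S := tsum_nonneg fun n => by positivity
  refine ⟨‖(Real.log π : ℂ)‖ + ‖Complex.digamma 1‖ + 8 * S, by positivity, ?_⟩
  intro s hs
  rw [GR_eq (by linarith), digamma_series (s / 2) (by simp; linarith)]
  have h1 : ‖∑' n, dterm n (s / 2)‖ ≤ 8 * ‖s / 2 - 1‖ * S := by
    have := (summable_sq1.mul_left (8 * ‖s / 2 - 1‖)).hasSum
    rw [hS, ← tsum_mul_left]
    exact tsum_of_norm_bounded this (fun n => dterm_bound n _ (by simp; linarith))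
  have h2 : ‖s / 2 - 1‖ ≤ 1 + ‖s‖ := by
    calc ‖s / 2 - 1‖ ≤ ‖s / 2‖ + ‖(1:ℂ)‖ := norm_sub_le _ _
      _ ≤ 1 + ‖s‖ := by rw [norm_div]; simp; linarith [norm_nonneg s]
  have h3 : 8 * ‖s / 2 - 1‖ * S ≤ 8 * S * (1 + ‖s‖) := by nlinarith
  have h4 := norm_nonneg s
  have h5 := norm_nonneg (Real.log π : ℂ)
  have h6 := norm_nonneg (Complex.digamma 1)
  calc _ ≤ ‖-(Real.log π : ℂ) / 2‖ + ‖(Complex.digamma 1 + ∑' n, dterm n (s / 2)) / 2‖ := norm_add_le _ _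
    _ ≤ ‖(Real.log π : ℂ)‖ + (‖Complex.digamma 1‖ + ‖∑' n, dterm n (s / 2)‖) := by
        rw [norm_div, norm_div, norm_neg]
        have := norm_add_le (Complex.digamma 1) (∑' n, dterm n (s / 2))
        simp only [Complex.norm_ofNat]
        linarith [norm_nonneg (∑' n, dterm n (s / 2))]
    _ ≤ _ := by nlinarith

lemma dterm_re (n : ℕ) (τ : ℝ) : (dterm n (1/4 + I * τ)).re =
    1 / ((n:ℝ) + 1) - (n + 1/4) / ((n + 1/4) ^ 2 + τ ^ 2) := by
  unfold dterm
  have e1 : (1 / ((n:ℂ) + 1)) = ((1 / ((n:ℝ) + 1) : ℝ) : ℂ) := by push_cast; rfl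
  have e2 : (n:ℂ) + (1/4 + I * τ) = ((n + 1/4 : ℝ):ℂ) + (τ:ℂ) * I := by push_cast; ring
  rw [e1, e2, Complex.sub_re, Complex.ofReal_re, one_div (_ + _ * I), Complex.inv_re, Complex.normSq_add_mul_I]
  simp

lemma dterm_re_ge (n : ℕ) (τ : ℝ) : -(3 * (1 / ((n:ℝ) + 1) ^ 2)) ≤ (dterm n (1/4 + I * τ)).re := by
  rw [dterm_re]
  have hn : (0:ℝ) ≤ n := n.cast_nonneg
  have h1 : ((n:ℝ) + 1/4) / ((n + 1/4) ^ 2 + τ ^ 2) ≤ 1 / (n + 1/4) := by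
    rw [div_le_div_iff₀ (by positivity) (by positivity)]; nlinarith [sq_nonneg τ]
  have h2 : 1 / ((n:ℝ) + 1/4) ≤ 1 / ((n:ℝ) + 1) + 3 * (1 / ((n:ℝ) + 1) ^ 2) := by
    rw [div_add' _ _ _ (by positivity), div_le_div_iff₀ (by positivity) (by positivity)]
    field_simp
    nlinarith
  linarith

lemma dterm_re_ge' (n : ℕ) (τ : ℝ) (hτ : 0 < τ) :
    1 / ((n:ℝ) + 1) - (n + 1) / τ ^ 2 ≤ (dterm n (1/4 + I * τ)).re := by
  rw [dterm_re]
  have hn : (0:ℝ) ≤ n := n.cast_nonneg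
  have : ((n:ℝ) + 1/4) / ((n + 1/4) ^ 2 + τ ^ 2) ≤ (n + 1) / τ ^ 2 := by
    gcongr
    · norm_num
    · nlinarith
  linarith

lemma dsum_re_ge (τ : ℝ) (hτ : 0 < τ) :
    Real.log τ - 1 - 3 * ∑' n : ℕ, 1 / ((n:ℝ) + 1) ^ 2 ≤ (∑' n, dterm n (1/4 + I * τ)).re := by
  set N := ⌊τ⌋₊ with hN
  have hs := (dterm_summable (1/4 + I * τ) (by simp; norm_num))
  rw [Complex.re_tsum hs]
  have hsr : Summable fun n => (dterm n (1/4 + I * τ)).re := (Complex.hasSum_re hs.hasSum).summable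
  rw [← hsr.sum_add_tsum_nat_add N]
  have h1 : ∑ n ∈ Finset.range N, (1 / ((n:ℝ) + 1) - (n + 1) / τ ^ 2) ≤
      ∑ n ∈ Finset.range N, (dterm n (1/4 + I * τ)).re :=
    Finset.sum_le_sum fun n _ => dterm_re_ge' n τ hτ
  have hA : Real.log τ ≤ ∑ n ∈ Finset.range N, 1 / ((n:ℝ) + 1) := by
    have := log_add_one_le_harmonic N
    rw [harmonic] at this
    push_cast at this
    have h2 : Real.log τ ≤ Real.log (N + 1) := Real.log_le_log hτ (Nat.lt_floor_add_one τ).le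
    simp only [one_div]; linarith
  have hB : ∑ n ∈ Finset.range N, ((n:ℝ) + 1) / τ ^ 2 ≤ 1 := by
    rw [← Finset.sum_div, div_le_one (by positivity)]
    have : ∀ N : ℕ, ∑ n ∈ Finset.range N, ((n:ℝ) + 1) ≤ (N:ℝ) ^ 2 := by
      intro N
      induction N with
      | zero => simp
      | succ k ih => rw [Finset.sum_range_succ]; push_cast; nlinarith [(Nat.cast_nonneg k : (0:ℝ) ≤ k)]
    refine (this N).trans ?_
    have := Nat.floor_le hτ.le
    gcongr
  have hC : -(3 * ∑' n : ℕ, 1 / ((n:ℝ) + 1) ^ 2) ≤ ∑' n, (dterm (n + N) (1/4 + I * τ)).re := by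
    have h3 : ∑' n : ℕ, -(3 * (1 / (((n + N : ℕ):ℝ) + 1) ^ 2)) ≤ ∑' n, (dterm (n + N) (1/4 + I * τ)).re := by
      refine Summable.tsum_le_tsum (fun n => dterm_re_ge _ _) ?_ ((summable_nat_add_iff N).2 hsr)
      exact ((summable_nat_add_iff N).2 (summable_sq1.mul_left 3)).neg
    refine le_trans ?_ h3
    rw [tsum_neg, tsum_mul_left]
    have h4 := summable_sq1.sum_add_tsum_nat_add N
    have h5 : (0:ℝ) ≤ ∑ n ∈ Finset.range N, 1 / ((n:ℝ) + 1) ^ 2 := Finset.sum_nonneg fun n _ => by positivity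
    linarith
  rw [Finset.sum_sub_distrib] at h1
  linarith

lemma dsum_re_ge0 (τ : ℝ) :
    -(3 * ∑' n : ℕ, 1 / ((n:ℝ) + 1) ^ 2) ≤ (∑' n, dterm n (1/4 + I * τ)).re := by
  have hs := (dterm_summable (1/4 + I * τ) (by simp; norm_num))
  rw [Complex.re_tsum hs]
  have hsr : Summable fun n => (dterm n (1/4 + I * τ)).re := (Complex.hasSum_re hs.hasSum).summable
  rw [← tsum_mul_left, ← tsum_neg]
  exact Summable.tsum_le_tsum (fun n => dterm_re_ge _ _) ((summable_sq1.mul_left 3)).neg hsr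

lemma dsum_re_neg (τ : ℝ) : (∑' n, dterm n (1/4 + I * (-τ : ℝ))).re = (∑' n, dterm n (1/4 + I * τ)).re := by
  rw [Complex.re_tsum (dterm_summable (1/4 + I * τ) (by simp; norm_num)),
    Complex.re_tsum (dterm_summable (1/4 + I * (-τ:ℝ)) (by simp; norm_num))]
  simp_rw [dterm_re]
  simp

lemma GR_lower : ∃ C : ℝ, 0 ≤ C ∧ ∀ t : ℝ, 1/2 * Real.log (1 + |t|) - C ≤ (GR (1/2 + I * t)).re := by
  set S := ∑' n : ℕ, 1 / ((n:ℝ) + 1) ^ 2 with hS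
  have hS0 : 0 ≤ S := tsum_nonneg fun n => by positivity
  have key : ∀ t : ℝ, 0 ≤ t → Real.log (1 + t) - 3 - 3 * S ≤ (∑' n, dterm n (1/4 + I * (t / 2 : ℝ))).re := by
    intro t ht
    have hl2 : Real.log 2 ≤ 1 := by linarith [Real.log_two_lt_d9]
    rcases le_total t 1 with h | h
    · have h1 := dsum_re_ge0 (t / 2)
      have h2 : Real.log (1 + t) ≤ Real.log 2 := Real.log_le_log (by linarith) (by linarith)
      linarith
    · have h1 := dsum_re_ge (t / 2) (by linarith)
      have h2 : Real.log (1 + t) ≤ Real.log (4 * (t / 2)) := Real.log_le_log (by linarith) (by linarith)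
      have h3 : Real.log (4 * (t / 2)) = 2 * Real.log 2 + Real.log (t / 2) := by
        rw [Real.log_mul (by norm_num) (by positivity), show (4:ℝ) = 2 ^ 2 by norm_num, Real.log_pow]; norm_num
      linarith
  have key2 : ∀ t : ℝ, Real.log (1 + |t|) - 3 - 3 * S ≤ (∑' n, dterm n (1/4 + I * (t / 2 : ℝ))).re := by
    intro t
    rcases abs_cases t with ⟨h, h'⟩ | ⟨h, h'⟩
    · rw [h]; exact key t h'
    · rw [h, ← dsum_re_neg, show -(t / 2) = (-t) / 2 by ring]; exact key (-t) (by linarith)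
  refine ⟨|Real.log π| + ‖Complex.digamma 1‖ + 3 + 3 * S, by positivity, ?_⟩
  intro t
  have e : ((1/2 + I * t : ℂ)) / 2 = 1/4 + I * (t/2 : ℝ) := by push_cast; ring
  rw [GR_eq (by simp), e, digamma_series (1/4 + I * (t/2 : ℝ)) (by simp; norm_num)]
  have e2 : (-(Real.log π : ℂ) / 2 + (Complex.digamma 1 + ∑' n, dterm n (1/4 + I * (t / 2 : ℝ))) / 2).re
     = -(Real.log π) / 2 + ((Complex.digamma 1).re + (∑' n, dterm n (1/4 + I * (t / 2 : ℝ))).re) / 2 := by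
    rw [Complex.add_re, Complex.div_ofNat_re, Complex.div_ofNat_re, Complex.add_re, Complex.neg_re, Complex.ofReal_re]
  rw [e2]
  have h1 := key2 t
  have h2 := le_abs_self (Real.log π)
  have h3 := (abs_le.1 (Complex.abs_re_le_norm (Complex.digamma 1))).1
  have h4 := abs_nonneg (Real.log π)
  have h5 := norm_nonneg (Complex.digamma 1)
  linarith

end SGZ

namespace SGZ

lemma GR_diff {s : ℂ} (hs : 0 < s.re) : DifferentiableAt ℂ GR s := by
  have h := gamma_fac_analytic hs
  exact (h.deriv.div h (Complex.Gammaℝ_ne_zero_of_re_pos hs)).differentiableAt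

lemma zeta_ne {s : ℂ} (hs : 1 < s.re) : riemannZeta s ≠ 0 := riemannZeta_ne_zero_of_one_lt_re hs

lemma zeta_an {s : ℂ} (hs : s ≠ 1) : AnalyticAt ℂ riemannZeta s := by
  have hd : DifferentiableOn ℂ riemannZeta {1}ᶜ := fun s hs =>
    (differentiableAt_riemannZeta hs).differentiableWithinAt
  exact hd.analyticAt (isOpen_compl_singleton.mem_nhds hs)

lemma re_ne_one {s : ℂ} (hs : 1 < s.re) : s ≠ 1 := by
  intro h; rw [h] at hs; simp at hs

lemma logDeriv_Xi (x : ℝ) : logDeriv Xi ((x:ℂ) - I) =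
    2 * ((x:ℂ) - I) / (((x:ℂ) - I) ^ 2 - (I / 2) ^ 2) + I * GR (3/2 + I * x)
      + I * logDeriv riemannZeta (3/2 + I * x) := by
  set s : ℂ := 3/2 + I * x with hs
  have hsr : s.re = 3/2 := by rw [hs]; simp
  have hsz : 1/2 + I * ((x:ℂ) - I) = s := by
    rw [hs, mul_sub, I_mul_I]; ring
  have hs1 : s ≠ 1 := re_ne_one (by rw [hsr]; norm_num)
  have hs0 : s ≠ 0 := by intro h; rw [h] at hsr; norm_num at hsr
  have e1 : logDeriv Xi ((x:ℂ) - I) = I * logDeriv xi s := by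
    have h1 : HasDerivAt (fun z : ℂ => 1/2 + I * z) I ((x:ℂ) - I) := by
      simpa using ((hasDerivAt_id ((x:ℂ) - I)).const_mul I).const_add (1/2)
    have h2 : HasDerivAt xi (deriv xi s) (1/2 + I * ((x:ℂ) - I)) := by
      rw [hsz]; exact (xi_diff s).hasDerivAt
    have h3 : HasDerivAt Xi (deriv xi s * I) ((x:ℂ) - I) := HasDerivAt.comp (h := fun z : ℂ => 1/2 + I * z) (h₂ := xi) ((x:ℂ) - I) h2 h1
    rw [logDeriv_apply, logDeriv_apply, h3.deriv]
    have : Xi ((x:ℂ) - I) = xi s := by unfold Xi; rw [hsz]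
    rw [this]; ring
  have hev : xi =ᶠ[nhds s] fun s => s * (s - 1) * (Gammaℝ s * riemannZeta s) := by
    have : {s : ℂ | 1 < s.re} ∈ nhds s := (isOpen_lt continuous_const Complex.continuous_re).mem_nhds (by
      rw [Set.mem_ofPred_eq, hsr]; norm_num)
    filter_upwards [this] with w hw
    have hw : 1 < w.re := hw
    exact xi_eq' (by linarith) (re_ne_one hw)
  have hG0 : Gammaℝ s ≠ 0 := Complex.Gammaℝ_ne_zero_of_re_pos (by rw [hsr]; norm_num)
  have hG : DifferentiableAt ℂ Gammaℝ s := (gamma_fac_analytic (by rw [hsr]; norm_num)).differentiableAt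
  have hZ : DifferentiableAt ℂ riemannZeta s := differentiableAt_riemannZeta hs1
  have hZ0 : riemannZeta s ≠ 0 := zeta_ne (by rw [hsr]; norm_num)
  have hs1' : s - 1 ≠ 0 := sub_ne_zero.2 hs1
  have e2 : logDeriv xi s = 1 / s + 1 / (s - 1) + GR s + logDeriv riemannZeta s := by
    have hd := hev.deriv_eq
    have hv := hev.eq_of_nhds
    have hD : HasDerivAt (fun s => s * (s - 1) * (Gammaℝ s * riemannZeta s))
        ((1 * (s - 1) + s * 1) * (Gammaℝ s * riemannZeta s) + s * (s - 1) *
          (deriv Gammaℝ s * riemannZeta s + Gammaℝ s * deriv riemannZeta s)) s :=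
      ((hasDerivAt_id s).mul ((hasDerivAt_id s).sub_const 1)).mul (hG.hasDerivAt.mul hZ.hasDerivAt)
    unfold GR
    rw [logDeriv_apply, logDeriv_apply, logDeriv_apply, hd, hv, hD.deriv]
    field_simp
    ring
  rw [e1, e2]
  have e3 : ((x:ℂ) - I) = -I * (s - 1/2) := by
    rw [hs]; ring_nf; rw [I_sq]; ring
  have e4 : ((x:ℂ) - I) ^ 2 - (I / 2) ^ 2 = - (s * (s - 1)) := by
    rw [e3]; ring_nf; rw [I_sq]; ring
  rw [e4, e3]
  field_simp
  ring

lemma pf_bound2 (p : ℂ) (hp : |p.im| ≤ 1/2) (x : ℝ) :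
    ‖2 * ((x:ℂ) - I) / (((x:ℂ) - I) ^ 2 - p ^ 2)‖ ≤ 16 * (1 + x ^ 2) := by
  obtain ⟨hp1, hp2⟩ := abs_le.1 hp
  have e : ((x:ℂ) - I) ^ 2 - p ^ 2 = ((x:ℂ) - I - p) * ((x:ℂ) - I + p) := by ring
  have h1 : 1/2 ≤ ‖(x:ℂ) - I - p‖ := by
    refine le_trans ?_ (Complex.abs_im_le_norm _)
    rw [le_abs]; right; simp; linarith
  have h2 : 1/2 ≤ ‖(x:ℂ) - I + p‖ := by
    refine le_trans ?_ (Complex.abs_im_le_norm _)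
    rw [le_abs]; right; simp; linarith
  rw [e, norm_div, norm_mul, norm_mul]
  have h3 : ‖(x:ℂ) - I‖ ≤ |x| + 1 := by
    calc _ ≤ ‖(x:ℂ)‖ + ‖I‖ := norm_sub_le _ _
      _ = _ := by simp
  have h4 : |x| ≤ (1 + x ^ 2) / 2 := by
    nlinarith [sq_nonneg (|x| - 1), sq_abs x]
  rw [div_le_iff₀ (by positivity)]
  have h5 : 1/2 * (1/2) ≤ ‖(x:ℂ) - I - p‖ * ‖(x:ℂ) - I + p‖ := by gcongr
  simp only [Complex.norm_ofNat]
  nlinarith [sq_nonneg x]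

section
variable (Ψ : ℂ → ℂ) (C : ℝ)

lemma dec_down {C x y : ℝ} (hC : 0 ≤ C) (k : ℕ) (hk : k ≤ 3) (h : y ≤ C / (1 + x ^ 2) ^ 4) : (1 + x ^ 2) ^ k * y ≤ C / (1 + x ^ 2) := by
  have h1 : 1 ≤ 1 + x ^ 2 := by nlinarith [sq_nonneg x]
  calc (1 + x ^ 2) ^ k * y ≤ (1 + x ^ 2) ^ k * (C / (1 + x ^ 2) ^ 4) := by gcongr
    _ ≤ (1 + x ^ 2) ^ 3 * (C / (1 + x ^ 2) ^ 4) := by gcongr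
    _ = _ := by field_simp

lemma int_pf (hd : Differentiable ℂ Ψ)
    (hb : ∀ z : ℂ, |z.im| ≤ 1 → ‖Ψ z‖ ≤ C / (1 + z.re ^ 2) ^ 4) (p : ℂ) (hp : |p.im| ≤ 1/2) :
    Integrable (fun x : ℝ => 2 * ((x:ℂ) - I) / (((x:ℂ) - I) ^ 2 - p ^ 2) * Ψ ((x:ℂ) - I)) := by
  have hC : 0 ≤ C := by
    have := (norm_nonneg _).trans (hb 0 (by simp))
    simpa using this
  refine integrable_of_dec (C := 16 * C) ?_ ?_
  · refine Continuous.mul (Continuous.div (by fun_prop) (by fun_prop) ?_) (hd.continuous.comp (by fun_prop))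
    intro x h
    obtain ⟨hp1, hp2⟩ := abs_le.1 hp
    have e : ((x:ℂ) - I) ^ 2 - p ^ 2 = ((x:ℂ) - I - p) * ((x:ℂ) - I + p) := by ring
    rw [e, mul_eq_zero] at h
    rcases h with h | h
    · have := congrArg Complex.im h
      simp at this; linarith
    · have := congrArg Complex.im h
      simp at this; linarith
  · intro x
    have h1 := pf_bound2 p hp x
    have h2 := hb ((x:ℂ) - I) (by simp)
    simp at h2
    have h3 := dec_down hC 1 (by norm_num) h2
    rw [norm_mul]
    calc _ ≤ 16 * (1 + x ^ 2) * ‖Ψ ((x:ℂ) - I)‖ := by gcongr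
      _ = 16 * ((1 + x ^ 2) ^ 1 * ‖Ψ ((x:ℂ) - I)‖) := by ring
      _ ≤ 16 * (C / (1 + x ^ 2)) := by gcongr
      _ = _ := by ring

lemma zeros_hasSum (hd : Differentiable ℂ Ψ) (heven : ∀ z, Ψ (-z) = Ψ z)
    (hb : ∀ z : ℂ, |z.im| ≤ 1 → ‖Ψ z‖ ≤ C / (1 + z.re ^ 2) ^ 4)
    (γ : ℕ → ℝ) (m : ℕ) (hsum : Summable (fun n => 1 / (1 + γ n ^ 2)))
    (hpf : ∀ x : ℝ, HasSum (fun n => 2 * ((x:ℂ) - I) / (((x:ℂ) - I) ^ 2 - (γ n : ℂ) ^ 2))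
      (logDeriv Xi ((x:ℂ) - I) - m / ((x:ℂ) - I))) :
    HasSum (fun n => 2 * π * I * Ψ (γ n))
      (∫ x : ℝ, (logDeriv Xi ((x:ℂ) - I) - m / ((x:ℂ) - I)) * Ψ ((x:ℂ) - I)) := by
  have hC : 0 ≤ C := by
    have := (norm_nonneg _).trans (hb 0 (by simp))
    simpa using this
  have hb1 : ∀ z : ℂ, |z.im| ≤ 1 → ‖Ψ z‖ ≤ C / (1 + z.re ^ 2) := by
    intro z hz
    have := dec_down hC 0 (by norm_num) (hb z hz)
    simpa using this
  set F : ℕ → ℝ → ℂ := fun n x => 2 * ((x:ℂ) - I) / (((x:ℂ) - I) ^ 2 - (γ n : ℂ) ^ 2) * Ψ ((x:ℂ) - I) with hF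
  have hIntg : ∀ n, Integrable (F n) := fun n => int_pf Ψ C hd hb (γ n : ℂ) (by simp)
  have hdom : Integrable (fun x : ℝ => 16 * C * (1 + x ^ 2)⁻¹) := integrable_inv_one_add_sq.const_mul _
  have hnorm : Summable (fun n => ∫ x, ‖F n x‖) := by
    refine Summable.of_nonneg_of_le (fun n => integral_nonneg fun x => norm_nonneg _) (fun n => ?_)
      (hsum.mul_left (∫ x : ℝ, 16 * C * (1 + x ^ 2)⁻¹))
    rw [← integral_mul_const]
    refine integral_mono (hIntg n).norm (hdom.mul_const _) ?_
    intro x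
    have h1 := pf_bound (γ n) x _ rfl
    have h2 := hb ((x:ℂ) - I) (by simp)
    simp at h2
    have h3 := dec_down hC 2 (by norm_num) h2
    simp only [hF, norm_mul]
    calc _ ≤ 16 * (1 + x ^ 2) ^ 2 * (1 / (1 + γ n ^ 2)) * ‖Ψ ((x:ℂ) - I)‖ := by gcongr
      _ = 16 * ((1 + x ^ 2) ^ 2 * ‖Ψ ((x:ℂ) - I)‖) * (1 / (1 + γ n ^ 2)) := by ring
      _ ≤ 16 * (C / (1 + x ^ 2)) * (1 / (1 + γ n ^ 2)) := by gcongr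
      _ = _ := by field_simp
  have key := hasSum_integral_of_summable_integral_norm hIntg hnorm
  have e1 : ∀ n, ∫ x, F n x = 2 * π * I * Ψ (γ n) := by
    intro n
    exact lemmaP Ψ hd heven C hb1 (γ n) (by simp)
  have e2 : ∀ x, ∑' n, F n x = (logDeriv Xi ((x:ℂ) - I) - m / ((x:ℂ) - I)) * Ψ ((x:ℂ) - I) := by
    intro x
    exact ((hpf x).mul_right _).tsum_eq
  simp_rw [e1, e2] at key
  exact key

lemma gamma_shift (hd : Differentiable ℂ Ψ)
    (hb : ∀ z : ℂ, |z.im| ≤ 1 → ‖Ψ z‖ ≤ C / (1 + z.re ^ 2) ^ 4) :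
    Integrable (fun x : ℝ => GR (3/2 + I * x) * Ψ ((x:ℂ) - I)) ∧
    Integrable (fun x : ℝ => GR (1/2 + I * x) * Ψ (x:ℂ)) ∧
    ∫ x : ℝ, GR (3/2 + I * x) * Ψ ((x:ℂ) - I) = ∫ x : ℝ, GR (1/2 + I * x) * Ψ (x:ℂ) := by
  have hC : 0 ≤ C := by
    have := (norm_nonneg _).trans (hb 0 (by simp))
    simpa using this
  obtain ⟨K, hK0, hK⟩ := GR_growth
  set f : ℂ → ℂ := fun z => GR (1/2 + I * z) * Ψ z with hf
  have hfd : ∀ z : ℂ, -1 ≤ z.im → z.im ≤ 0 → DifferentiableAt ℂ f z := by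
    intro z h1 h2
    refine DifferentiableAt.mul ?_ (hd z)
    have : DifferentiableAt ℂ GR (1/2 + I * z) := GR_diff (by simp; linarith)
    exact this.comp z (by fun_prop)
  have hfb : ∀ z : ℂ, -1 ≤ z.im → z.im ≤ 0 → ‖f z‖ ≤ (4 * K * C) / (1 + z.re ^ 2) := by
    intro z h1 h2
    have h3 := hK (1/2 + I * z) (by simp; linarith)
    have h4 := dec_down hC 1 (by norm_num) (hb z (abs_le.2 ⟨h1, by linarith⟩))
    have h5 : ‖(1/2 + I * z : ℂ)‖ ≤ 1/2 + (|z.re| + 1) := by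
      calc _ ≤ ‖(1/2:ℂ)‖ + ‖I * z‖ := norm_add_le _ _
        _ = 1/2 + ‖z‖ := by simp
        _ ≤ 1/2 + (|z.re| + |z.im|) := by gcongr; exact Complex.norm_le_abs_re_add_abs_im z
        _ ≤ _ := by gcongr; exact abs_le.2 ⟨h1, by linarith⟩
    have h6 : |z.re| ≤ (1 + z.re ^ 2) / 2 := by
      nlinarith [sq_nonneg (|z.re| - 1), sq_abs z.re]
    have h7 : 1 + ‖(1/2 + I * z : ℂ)‖ ≤ 4 * (1 + z.re ^ 2) := by nlinarith [sq_nonneg z.re]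
    simp only [hf, norm_mul]
    calc _ ≤ K * (1 + ‖(1/2 + I * z : ℂ)‖) * ‖Ψ z‖ := by gcongr
      _ ≤ K * (4 * (1 + z.re ^ 2)) * ‖Ψ z‖ := by gcongr
      _ = 4 * K * ((1 + z.re ^ 2) ^ 1 * ‖Ψ z‖) := by ring
      _ ≤ 4 * K * (C / (1 + z.re ^ 2)) := by gcongr
      _ = _ := by ring
  have hI : ∀ y : ℝ, -1 ≤ y → y ≤ 0 → Integrable (fun x : ℝ => f (x + y * I)) := by
    intro y h1 h2
    refine integrable_of_dec (C := 4 * K * C) ?_ ?_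
    · rw [continuous_iff_continuousAt]
      intro x
      have : ContinuousAt f (x + y * I) := (hfd _ (by simpa using h1) (by simpa using h2)).continuousAt
      exact ContinuousAt.comp (f := fun x : ℝ => (x:ℂ) + y * I) this (by fun_prop)
    · intro x
      have := hfb (x + y * I) (by simpa using h1) (by simpa using h2)
      simpa using this
  have e1 : (fun x : ℝ => f (x + (-1:ℝ) * I)) = fun x : ℝ => GR (3/2 + I * x) * Ψ ((x:ℂ) - I) := by
    funext x
    simp only [hf]
    congr 2
    · push_cast; linear_combination (-1) * I_mul_I
    · push_cast; ring
  have e2 : (fun x : ℝ => f (x + (0:ℝ) * I)) = fun x : ℝ => GR (1/2 + I * x) * Ψ (x:ℂ) := by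
    funext x
    simp [hf]
  have hs := shift_line f (-1) 0 (by norm_num) _ hfd hfb
  rw [e1, e2] at hs
  exact ⟨e1 ▸ hI (-1) le_rfl (by norm_num), e2 ▸ hI 0 (by norm_num) le_rfl, hs⟩

lemma prime_shift (hd : Differentiable ℂ Ψ)
    (hb : ∀ z : ℂ, |z.im| ≤ 1 → ‖Ψ z‖ ≤ C / (1 + z.re ^ 2) ^ 4) (n : ℕ) (hn : n ≠ 0) :
    ∫ x : ℝ, (n:ℂ) ^ (-(3/2 + I * x : ℂ)) * Ψ ((x:ℂ) - I) = ∫ x : ℝ, (n:ℂ) ^ (-(1/2 + I * x : ℂ)) * Ψ (x:ℂ) := by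
  have hC : 0 ≤ C := by
    have := (norm_nonneg _).trans (hb 0 (by simp))
    simpa using this
  have hnC : (n:ℂ) ≠ 0 := by exact_mod_cast hn
  set f : ℂ → ℂ := fun z => (n:ℂ) ^ (-(1/2 + I * z)) * Ψ z with hf
  have hfd : ∀ z : ℂ, -1 ≤ z.im → z.im ≤ 0 → DifferentiableAt ℂ f z := by
    intro z h1 h2
    refine DifferentiableAt.mul ?_ (hd z)
    refine DifferentiableAt.const_cpow (by fun_prop) (Or.inl hnC)
  have hfb : ∀ z : ℂ, -1 ≤ z.im → z.im ≤ 0 → ‖f z‖ ≤ C / (1 + z.re ^ 2) := by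
    intro z h1 h2
    have h4 := dec_down hC 0 (by norm_num) (hb z (abs_le.2 ⟨h1, by linarith⟩))
    simp only [hf, norm_mul]
    have : ‖(n:ℂ) ^ (-(1/2 + I * z))‖ ≤ 1 := by
      rw [Complex.norm_natCast_cpow_of_pos (Nat.pos_of_ne_zero hn)]
      apply Real.rpow_le_one_of_one_le_of_nonpos
      · exact_mod_cast Nat.pos_of_ne_zero hn
      · simp; linarith
    calc _ ≤ 1 * ‖Ψ z‖ := by gcongr
      _ ≤ _ := by simpa using h4
  have hs := shift_line f (-1) 0 (by norm_num) _ hfd hfb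
  have e1 : (fun x : ℝ => f (x + (-1:ℝ) * I)) = fun x : ℝ => (n:ℂ) ^ (-(3/2 + I * x : ℂ)) * Ψ ((x:ℂ) - I) := by
    funext x
    simp only [hf]
    congr 2
    · push_cast; linear_combination I_mul_I
    · push_cast; ring
  have e2 : (fun x : ℝ => f (x + (0:ℝ) * I)) = fun x : ℝ => (n:ℂ) ^ (-(1/2 + I * x : ℂ)) * Ψ (x:ℂ) := by
    funext x
    simp [hf]
  rw [e1, e2] at hs
  exact hs

end

end SGZ

namespace SGZ

lemma hs_congr {ι : Type*} {f g : ι → ℂ} {a b : ℂ} (h : HasSum f a) (hfg : ∀ n, f n = g n) (hab : a = b) :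
    HasSum g b := by
  have : f = g := funext hfg
  rw [← this, ← hab]; exact h

lemma vm_hasSum (x : ℝ) : HasSum (fun n : ℕ => (ArithmeticFunction.vonMangoldt n : ℂ) * (n:ℂ) ^ (-(3/2 + I * x : ℂ)))
    (- logDeriv riemannZeta (3/2 + I * x)) := by
  have hs : 1 < (3/2 + I * x : ℂ).re := by simp; norm_num
  have h1 := (ArithmeticFunction.LSeriesSummable_vonMangoldt hs).LSeriesHasSum
  rw [ArithmeticFunction.LSeries_vonMangoldt_eq_deriv_riemannZeta_div hs] at h1
  rw [logDeriv_apply, ← neg_div]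
  refine hs_congr h1 (fun n => ?_) rfl
  symm
  rcases eq_or_ne n 0 with rfl | hn
  · simp
  · rw [LSeries.term_of_ne_zero hn, Complex.cpow_neg]; rfl

lemma vm_norm_summable : Summable (fun n : ℕ => ArithmeticFunction.vonMangoldt n * (n:ℝ) ^ (-(3/2) : ℝ)) := by
  have h1 := (vm_hasSum 0).summable.norm
  refine h1.congr ?_
  intro n
  rw [norm_mul, Complex.norm_real, Real.norm_of_nonneg ArithmeticFunction.vonMangoldt_nonneg]
  rcases eq_or_ne n 0 with rfl | hn
  · simp
  · rw [Complex.norm_natCast_cpow_of_pos (Nat.pos_of_ne_zero hn)]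
    simp

lemma int_four {a b c d : ℝ → ℂ} (ha : Integrable a) (hb : Integrable b) (hc : Integrable c)
    (hd : Integrable d) {k u v : ℂ} : ∫ x : ℝ, (a x - k * b x + u * c x - v * d x) =
    (∫ x, a x) - k * (∫ x, b x) + u * (∫ x, c x) - v * ∫ x, d x := by
  have i1 : Integrable (fun x => a x - k * b x) := ha.sub (hb.const_mul k)
  have i2 : Integrable (fun x => a x - k * b x + u * c x) := i1.add (hc.const_mul u)
  rw [integral_sub i2 (hd.const_mul v), integral_add i1 (hc.const_mul u), integral_sub ha (hb.const_mul k),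
    integral_const_mul, integral_const_mul, integral_const_mul]

theorem explicit_formula (Ψ : ℂ → ℂ) (C : ℝ) (hd : Differentiable ℂ Ψ) (heven : ∀ z, Ψ (-z) = Ψ z)
    (hb : ∀ z : ℂ, |z.im| ≤ 1 → ‖Ψ z‖ ≤ C / (1 + z.re ^ 2) ^ 4)
    (γ : ℕ → ℝ) (m : ℕ) (hsum : Summable (fun n => 1 / (1 + γ n ^ 2)))
    (hpf : ∀ x : ℝ, HasSum (fun n => 2 * ((x:ℂ) - I) / (((x:ℂ) - I) ^ 2 - (γ n : ℂ) ^ 2))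
      (logDeriv Xi ((x:ℂ) - I) - m / ((x:ℂ) - I))) :
    Integrable (fun x : ℝ => GR (1/2 + I * x) * Ψ (x:ℂ)) ∧
    ∃ W : ℂ, HasSum (fun n : ℕ => (ArithmeticFunction.vonMangoldt n : ℂ) *
        ∫ x : ℝ, (n:ℂ) ^ (-(1/2 + I * x : ℂ)) * Ψ (x:ℂ)) W ∧
      HasSum (fun n => 2 * π * Ψ (γ n)) (2 * π * Ψ (I / 2) - π * m * Ψ 0
        + (∫ x : ℝ, GR (1/2 + I * x) * Ψ (x:ℂ)) - W) := by
  have hC : 0 ≤ C := by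
    have := (norm_nonneg _).trans (hb 0 (by simp))
    simpa using this
  have hb1 : ∀ z : ℂ, |z.im| ≤ 1 → ‖Ψ z‖ ≤ C / (1 + z.re ^ 2) := by
    intro z hz
    have := dec_down hC 0 (by norm_num) (hb z hz)
    simpa using this
  obtain ⟨g1, g2, g3⟩ := gamma_shift Ψ C hd hb
  refine ⟨g2, ?_⟩
  have hΨint : Integrable (fun x : ℝ => Ψ ((x:ℂ) - I)) := by
    refine integrable_of_dec (C := C) (hd.continuous.comp (by fun_prop)) ?_
    intro x
    have := hb1 ((x:ℂ) - I) (by simp)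
    simpa using this
  set F : ℕ → ℝ → ℂ := fun n x => (ArithmeticFunction.vonMangoldt n : ℂ) * (n:ℂ) ^ (-(3/2 + I * x : ℂ)) * Ψ ((x:ℂ) - I) with hF
  have hFn : ∀ n x, ‖F n x‖ = ArithmeticFunction.vonMangoldt n * (n:ℝ) ^ (-(3/2) : ℝ) * ‖Ψ ((x:ℂ) - I)‖ := by
    intro n x
    simp only [hF]
    rw [norm_mul, norm_mul, Complex.norm_real, Real.norm_of_nonneg ArithmeticFunction.vonMangoldt_nonneg]
    rcases eq_or_ne n 0 with rfl | hn
    · simp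
    · rw [Complex.norm_natCast_cpow_of_pos (Nat.pos_of_ne_zero hn)]
      simp
  have hFi : ∀ n, Integrable (F n) := by
    intro n
    rcases eq_or_ne n 0 with rfl | hn
    · simp [hF]
    refine Integrable.mono' (hΨint.norm.const_mul (ArithmeticFunction.vonMangoldt n * (n:ℝ) ^ (-(3/2) : ℝ))) ?_ ?_
    · apply Continuous.aestronglyMeasurable
      have hnC : (n:ℂ) ≠ 0 := by exact_mod_cast hn
      refine Continuous.mul (Continuous.mul continuous_const ?_) (hd.continuous.comp (by fun_prop))
      exact Continuous.const_cpow (by fun_prop) (Or.inl hnC)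
    · exact Eventually.of_forall fun x => (hFn n x).le
  have hFs : Summable (fun n => ∫ x, ‖F n x‖) := by
    simp_rw [hFn, integral_const_mul]
    exact vm_norm_summable.mul_right _
  have key := hasSum_integral_of_summable_integral_norm hFi hFs
  have eF : ∀ x, ∑' n, F n x = - logDeriv riemannZeta (3/2 + I * x) * Ψ ((x:ℂ) - I) := by
    intro x
    exact ((vm_hasSum x).mul_right _).tsum_eq
  simp_rw [eF] at key
  have eI : ∀ n, ∫ x, F n x = (ArithmeticFunction.vonMangoldt n : ℂ) *
        ∫ x : ℝ, (n:ℂ) ^ (-(1/2 + I * x : ℂ)) * Ψ (x:ℂ) := by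
    intro n
    simp only [hF, mul_assoc]
    rw [integral_const_mul]
    rcases eq_or_ne n 0 with rfl | hn
    · simp
    · rw [prime_shift Ψ C hd hb n hn]
  simp_rw [eI] at key
  refine ⟨_, key, ?_⟩
  have hz := zeros_hasSum Ψ C hd heven hb γ m hsum hpf
  have hZi : Integrable (fun x : ℝ => - logDeriv riemannZeta (3/2 + I * x) * Ψ ((x:ℂ) - I)) := by
    refine Integrable.mono' (hΨint.norm.const_mul (∑' n : ℕ, ArithmeticFunction.vonMangoldt n * (n:ℝ) ^ (-(3/2) : ℝ))) ?_ ?_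
    · apply Continuous.aestronglyMeasurable
      refine Continuous.mul (Continuous.neg ?_) (hd.continuous.comp (by fun_prop))
      rw [continuous_iff_continuousAt]
      intro x
      have hs : 1 < (3/2 + I * x : ℂ).re := by simp; norm_num
      have ha := zeta_an (re_ne_one hs)
      have : ContinuousAt (logDeriv riemannZeta) (3/2 + I * x) :=
        (ha.deriv.div ha (zeta_ne hs)).continuousAt
      exact ContinuousAt.comp (f := fun x : ℝ => (3/2 + I * x : ℂ)) this (by fun_prop)
    · refine Eventually.of_forall fun x => ?_
      rw [norm_mul]
      gcongr
      rw [← (vm_hasSum x).tsum_eq]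
      refine tsum_of_norm_bounded vm_norm_summable.hasSum ?_
      intro n
      rw [norm_mul, Complex.norm_real, Real.norm_of_nonneg ArithmeticFunction.vonMangoldt_nonneg]
      rcases eq_or_ne n 0 with rfl | hn
      · simp
      · rw [Complex.norm_natCast_cpow_of_pos (Nat.pos_of_ne_zero hn)]
        simp
  have iA := int_pf Ψ C hd hb (I / 2) (by simp)
  have iB := int_pf Ψ C hd hb 0 (by simp)
  have vA := lemmaP Ψ hd heven C hb1 (I / 2) (by simp; norm_num)
  have vB := lemmaP Ψ hd heven C hb1 0 (by simp)
  have e : ∀ x : ℝ, (logDeriv Xi ((x:ℂ) - I) - m / ((x:ℂ) - I)) * Ψ ((x:ℂ) - I) =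
      2 * ((x:ℂ) - I) / (((x:ℂ) - I) ^ 2 - (I / 2) ^ 2) * Ψ ((x:ℂ) - I)
      - (m / 2 : ℂ) * (2 * ((x:ℂ) - I) / (((x:ℂ) - I) ^ 2 - 0 ^ 2) * Ψ ((x:ℂ) - I))
      + I * (GR (3/2 + I * x) * Ψ ((x:ℂ) - I))
      - I * (- logDeriv riemannZeta (3/2 + I * x) * Ψ ((x:ℂ) - I)) := by
    intro x
    rw [logDeriv_Xi]
    have hne : (x:ℂ) - I ≠ 0 := by
      intro h; have := congrArg Complex.im h; simp at this
    have : (m / 2 : ℂ) * (2 * ((x:ℂ) - I) / (((x:ℂ) - I) ^ 2 - 0 ^ 2) * Ψ ((x:ℂ) - I)) = m / ((x:ℂ) - I) * Ψ ((x:ℂ) - I) := by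
      have h0 : ((x:ℂ) - I) ^ 2 - 0 ^ 2 = ((x:ℂ) - I) * ((x:ℂ) - I) := by ring
      rw [h0]
      field_simp
    rw [this]; ring
  simp_rw [e] at hz
  rw [int_four iA iB g1 hZi, vA, vB, g3] at hz
  have hz' := hz.mul_left (-I)
  refine hs_congr hz' (fun n => ?_) ?_
  · linear_combination (-2 * π * Ψ (γ n)) * I_mul_I
  · generalize (∫ x : ℝ, GR (1 / 2 + I * x) * Ψ x) = A
    generalize (∫ x : ℝ, -logDeriv riemannZeta (3 / 2 + I * x) * Ψ (x - I)) = B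
    linear_combination (-2 * π * Ψ (I / 2) + π * m * Ψ 0 - A + B) * I_mul_I

end SGZ

namespace SGZ

def aC (k : ℕ) : ℝ := (-1) ^ (ArithmeticFunction.cardFactors k) / Real.sqrt k

def Ampl (N : ℕ) (x : ℝ) : ℂ := ∑ k ∈ Finset.Icc 1 N, (aC k : ℂ) * cexp (I * x * (Real.log k : ℂ))

def BC (N : ℕ) (z : ℂ) : ℂ := ∑ k ∈ Finset.Icc 1 N, ∑ m ∈ Finset.Icc 1 N,
  ((aC k : ℂ) * (aC m : ℂ)) * cexp (I * z * ((Real.log k - Real.log m : ℝ) : ℂ))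

def wC (T H : ℝ) (z : ℂ) : ℂ := cexp (-(z - T) ^ 2 / (2 * (H:ℂ) ^ 2))

def Phi (N : ℕ) (T H : ℝ) (z : ℂ) : ℂ := BC N z * wC T H z

def phi (N : ℕ) (T H : ℝ) (x : ℝ) : ℝ := ‖Ampl N x‖ ^ 2 * Real.exp (-(x - T) ^ 2 / (2 * H ^ 2))

lemma aC_abs (k : ℕ) (hk : 1 ≤ k) : |aC k| ≤ 1 := by
  unfold aC
  rw [abs_div, abs_pow, abs_neg, abs_one, one_pow, abs_of_nonneg (Real.sqrt_nonneg _)]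
  have : (1:ℝ) ≤ k := by exact_mod_cast hk
  rw [div_le_one (by positivity)]
  rw [Real.one_le_sqrt]; exact this

lemma Phi_real (N : ℕ) (T H x : ℝ) : Phi N T H (x:ℂ) = (phi N T H x : ℂ) := by
  unfold Phi phi
  have h1 : BC N (x:ℂ) = ((‖Ampl N x‖ ^ 2 : ℝ) : ℂ) := by
    rw [← Complex.normSq_eq_norm_sq, ← Complex.mul_conj]
    unfold Ampl BC
    rw [map_sum, Finset.sum_mul_sum]
    refine Finset.sum_congr rfl fun k _ => Finset.sum_congr rfl fun m _ => ?_
    rw [map_mul, Complex.conj_ofReal, ← Complex.exp_conj, map_mul, map_mul, Complex.conj_I, Complex.conj_ofReal,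
      Complex.conj_ofReal, mul_mul_mul_comm, ← Complex.exp_add]
    congr 2
    push_cast; ring
  have h2 : wC T H (x:ℂ) = ((Real.exp (-(x - T) ^ 2 / (2 * H ^ 2)) : ℝ) : ℂ) := by
    unfold wC; push_cast; rfl
  rw [h1, h2]; push_cast; rfl

lemma phi_nonneg (N : ℕ) (T H x : ℝ) : 0 ≤ phi N T H x := by unfold phi; positivity

lemma Phi_diff (N : ℕ) (T H : ℝ) : Differentiable ℂ (Phi N T H) := by
  unfold Phi BC wC
  fun_prop

lemma log_sub_le {N k m : ℕ} (hk : k ∈ Finset.Icc 1 N) (hm : m ∈ Finset.Icc 1 N) :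
    |Real.log k - Real.log m| ≤ Real.log N := by
  rw [Finset.mem_Icc] at hk hm
  have h1 : (1:ℝ) ≤ k := by exact_mod_cast hk.1
  have h2 : (1:ℝ) ≤ m := by exact_mod_cast hm.1
  have h3 : Real.log k ≤ Real.log N := Real.log_le_log (by linarith) (by exact_mod_cast hk.2)
  have h4 : Real.log m ≤ Real.log N := Real.log_le_log (by linarith) (by exact_mod_cast hm.2)
  have h5 := Real.log_nonneg h1
  have h6 := Real.log_nonneg h2
  rw [abs_le]; constructor <;> linarith

lemma BC_bound (N : ℕ) (hN : 1 ≤ N) (z : ℂ) (hz : |z.im| ≤ 1) : ‖BC N z‖ ≤ (N:ℝ) ^ 3 := by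
  unfold BC
  have hN' : (0:ℝ) < N := by exact_mod_cast hN
  have key : ∀ k ∈ Finset.Icc 1 N, ∀ m ∈ Finset.Icc 1 N,
      ‖((aC k : ℂ) * (aC m : ℂ)) * cexp (I * z * ((Real.log k - Real.log m : ℝ) : ℂ))‖ ≤ N := by
    intro k hk m hm
    rw [norm_mul, norm_mul, Complex.norm_real, Complex.norm_real, Complex.norm_exp]
    have h1 := aC_abs k (Finset.mem_Icc.1 hk).1
    have h2 := aC_abs m (Finset.mem_Icc.1 hm).1
    have h3 : Real.exp (I * z * ((Real.log k - Real.log m : ℝ) : ℂ)).re ≤ N := by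
      rw [← Real.exp_log hN', Real.exp_le_exp]
      have e : (I * z * ((Real.log k - Real.log m : ℝ) : ℂ)).re = -z.im * (Real.log k - Real.log m) := by
        rw [Complex.re_mul_ofReal]; simp
      rw [e]
      calc _ ≤ |-z.im * (Real.log k - Real.log m)| := le_abs_self _
        _ = |z.im| * |Real.log k - Real.log m| := by rw [abs_mul, abs_neg]
        _ ≤ 1 * Real.log N := by gcongr; exact log_sub_le hk hm
        _ = _ := one_mul _
    rw [← Real.norm_eq_abs] at h1 h2
    calc _ ≤ 1 * 1 * (N:ℝ) := by gcongr
      _ = N := by ring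
  calc _ ≤ ∑ k ∈ Finset.Icc 1 N, ‖∑ m ∈ Finset.Icc 1 N,
      ((aC k : ℂ) * (aC m : ℂ)) * cexp (I * z * ((Real.log k - Real.log m : ℝ) : ℂ))‖ := norm_sum_le _ _
    _ ≤ ∑ k ∈ Finset.Icc 1 N, ∑ m ∈ Finset.Icc 1 N, (N:ℝ) :=
        Finset.sum_le_sum fun k hk => norm_sum_le_of_le _ fun m hm => key k hk m hm
    _ = _ := by simp; ring

lemma wC_norm (T H : ℝ) (hH : 1 ≤ H) (z : ℂ) (hz : |z.im| ≤ 1) :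
    ‖wC T H z‖ ≤ 2 * Real.exp (-(z.re - T) ^ 2 / (2 * H ^ 2)) := by
  unfold wC
  rw [Complex.norm_exp]
  have e : (-(z - T) ^ 2 / (2 * (H:ℂ) ^ 2)).re = -(z.re - T) ^ 2 / (2 * H ^ 2) + z.im ^ 2 / (2 * H ^ 2) := by
    have : (2 * (H:ℂ) ^ 2) = ((2 * H ^ 2 : ℝ) : ℂ) := by push_cast; rfl
    rw [this, Complex.div_ofReal_re, ← add_div]
    congr 1
    simp [pow_two]; ring
  rw [e, Real.exp_add, mul_comm]
  gcongr
  have h1 : z.im ^ 2 ≤ 1 := by rw [sq_le_one_iff_abs_le_one]; exact hz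
  have h2 : z.im ^ 2 / (2 * H ^ 2) ≤ 1/2 := by
    rw [div_le_iff₀ (by positivity)]; nlinarith
  calc Real.exp (z.im ^ 2 / (2 * H ^ 2)) ≤ Real.exp (1/2) := Real.exp_le_exp.2 h2
    _ ≤ Real.exp (Real.log 2) := Real.exp_le_exp.2 (by linarith [Real.log_two_gt_d9])
    _ = 2 := Real.exp_log (by norm_num)

lemma Phi_bound (N : ℕ) (hN : 1 ≤ N) (T H : ℝ) (hH : 1 ≤ H) (z : ℂ) (hz : |z.im| ≤ 1) :
    ‖Phi N T H z‖ ≤ 2 * (N:ℝ) ^ 3 * Real.exp (-(z.re - T) ^ 2 / (2 * H ^ 2)) := by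
  unfold Phi
  rw [norm_mul]
  calc _ ≤ (N:ℝ) ^ 3 * (2 * Real.exp (-(z.re - T) ^ 2 / (2 * H ^ 2))) := by
        gcongr
        · exact BC_bound N hN z hz
        · exact wC_norm T H hH z hz
    _ = _ := by ring

lemma sq_shift (x T : ℝ) : 1 + x ^ 2 ≤ 2 * (1 + T ^ 2) * (1 + (x - T) ^ 2) := by
  nlinarith [sq_nonneg (x - 2 * T), sq_nonneg (T * (x - T)), sq_nonneg x, sq_nonneg T, sq_nonneg (x - T)]

lemma Phi_dec (N : ℕ) (hN : 1 ≤ N) (T H : ℝ) (hH : 1 ≤ H) : ∃ C : ℝ, 0 ≤ C ∧ ∀ z : ℂ, |z.im| ≤ 1 →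
    ‖Phi N T H z‖ ≤ C / (1 + z.re ^ 2) ^ 4 := by
  refine ⟨2 * (N:ℝ) ^ 3 * (2 * (1 + T ^ 2) * (8 * H ^ 2)) ^ 4, by positivity, ?_⟩
  intro z hz
  refine (Phi_bound N hN T H hH z hz).trans ?_
  rw [le_div_iff₀ (by positivity), mul_assoc]
  gcongr
  set v := (z.re - T) ^ 2 with hv
  have hv0 : 0 ≤ v := sq_nonneg _
  have h1 := sq_shift z.re T
  rw [← hv] at h1
  have h2 : 1 + v ≤ 8 * H ^ 2 * Real.exp (v / (8 * H ^ 2)) := by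
    have := Real.add_one_le_exp (v / (8 * H ^ 2))
    calc 1 + v ≤ 8 * H ^ 2 * (v / (8 * H ^ 2) + 1) := by
          rw [mul_add, mul_div_cancel₀ _ (by positivity)]; nlinarith
      _ ≤ _ := by gcongr
  have h3 : 1 + z.re ^ 2 ≤ 2 * (1 + T ^ 2) * (8 * H ^ 2) * Real.exp (v / (8 * H ^ 2)) := by
    calc _ ≤ _ := h1
      _ ≤ 2 * (1 + T ^ 2) * (8 * H ^ 2 * Real.exp (v / (8 * H ^ 2))) := by gcongr
      _ = _ := by ring
  calc Real.exp (-v / (2 * H ^ 2)) * (1 + z.re ^ 2) ^ 4 ≤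
      Real.exp (-v / (2 * H ^ 2)) * (2 * (1 + T ^ 2) * (8 * H ^ 2) * Real.exp (v / (8 * H ^ 2))) ^ 4 := by gcongr
    _ = (2 * (1 + T ^ 2) * (8 * H ^ 2)) ^ 4 * (Real.exp (-v / (2 * H ^ 2)) * Real.exp (v / (8 * H ^ 2)) ^ 4) := by ring
    _ = (2 * (1 + T ^ 2) * (8 * H ^ 2)) ^ 4 := by
        rw [← Real.exp_nat_mul, ← Real.exp_add]
        have : -v / (2 * H ^ 2) + ((4:ℕ):ℝ) * (v / (8 * H ^ 2)) = 0 := by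
          push_cast; field_simp; ring
        rw [this, Real.exp_zero, mul_one]

/-- tail bound away from `T` -/
lemma Phi_tail (N : ℕ) (hN : 1 ≤ N) (T H : ℝ) (hH : 1 ≤ H) (hT : 4 ≤ T) (z : ℂ) (hz : |z.im| ≤ 1)
    (hr : T / 4 ≤ |z.re - T|) :
    ‖Phi N T H z‖ ≤ 280 * (N:ℝ) ^ 3 * H ^ 2 * Real.exp (-(T ^ 2 / (64 * H ^ 2))) / (1 + z.re ^ 2) := by
  refine (Phi_bound N hN T H hH z hz).trans ?_
  rw [le_div_iff₀ (by positivity)]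
  set v := (z.re - T) ^ 2 with hv
  have hv1 : T ^ 2 / 16 ≤ v := by
    rw [hv, ← sq_abs (z.re - T)]
    calc T ^ 2 / 16 = (T / 4) ^ 2 := by ring
      _ ≤ _ := by gcongr
  have h1 : 1 + z.re ^ 2 ≤ 35 * v := by nlinarith [sq_nonneg (z.re - 2 * T)]
  set u := v / (2 * H ^ 2) with hu
  have hvu : v = 2 * H ^ 2 * u := by rw [hu]; field_simp
  have hu0 : 0 ≤ u := by rw [hu]; have := sq_nonneg (z.re - T); positivity
  have h2 : u ≤ 2 * Real.exp (u / 2) := by linarith [Real.add_one_le_exp (u / 2)]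
  have h3 : T ^ 2 / (64 * H ^ 2) ≤ u / 2 := by
    rw [hu, div_div, div_le_div_iff₀ (by positivity) (by positivity)]
    nlinarith [sq_nonneg H, mul_le_mul_of_nonneg_right hv1 (sq_nonneg H)]
  have e1 : -v / (2 * H ^ 2) = -u := by rw [hu]; ring
  rw [e1]
  calc 2 * (N:ℝ) ^ 3 * Real.exp (-u) * (1 + z.re ^ 2) ≤ 2 * (N:ℝ) ^ 3 * Real.exp (-u) * (35 * v) := by gcongr
    _ = 140 * (N:ℝ) ^ 3 * H ^ 2 * (Real.exp (-u) * u) := by rw [hvu]; ring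
    _ ≤ 140 * (N:ℝ) ^ 3 * H ^ 2 * (Real.exp (-u) * (2 * Real.exp (u / 2))) := by gcongr
    _ = 280 * (N:ℝ) ^ 3 * H ^ 2 * (Real.exp (-u) * Real.exp (u / 2)) := by ring
    _ = 280 * (N:ℝ) ^ 3 * H ^ 2 * Real.exp (-(u / 2)) := by rw [← Real.exp_add]; congr 2; ring
    _ ≤ _ := by gcongr

lemma gauss_ft (T H ℓ : ℝ) (hH : 0 < H) : ∫ x : ℝ, cexp (I * x * (ℓ:ℂ)) * wC T H x =
    ((Real.sqrt (2 * π) * H * Real.exp (-(H ^ 2 * ℓ ^ 2 / 2)) : ℝ) : ℂ) * cexp (I * T * (ℓ:ℂ)) := by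
  have h0 := integral_add_right_eq_self (μ := volume) (fun x : ℝ => cexp (I * x * (ℓ:ℂ)) * wC T H x) T
  rw [← h0]
  set b : ℝ := 1 / (2 * H ^ 2) with hb
  have hbp : 0 < b := by rw [hb]; positivity
  have h1 := fourierIntegral_gaussian (b := (b:ℂ)) (by simpa using hbp) (ℓ:ℂ)
  have e : ∀ x : ℝ, cexp (I * ((x + T : ℝ):ℂ) * (ℓ:ℂ)) * wC T H ((x + T : ℝ):ℂ) =
      cexp (I * T * (ℓ:ℂ)) * (cexp (I * ℓ * x) * cexp (-b * x ^ 2)) := by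
    intro x
    unfold wC
    rw [← Complex.exp_add, ← Complex.exp_add, ← Complex.exp_add]
    congr 1
    rw [hb]; push_cast; ring
  simp_rw [e]
  rw [integral_const_mul, h1, mul_comm]
  congr 1
  have e2 : ((π:ℂ) / (b:ℂ)) ^ (1/2 : ℂ) = ((Real.sqrt (2 * π) * H : ℝ) : ℂ) := by
    rw [← Complex.ofReal_div]
    have : (1/2 : ℂ) = ((1/2 : ℝ) : ℂ) := by push_cast; rfl
    rw [this, ← Complex.ofReal_cpow (by positivity), ← Real.sqrt_eq_rpow]
    congr 1
    have : π / b = (2 * π) * H ^ 2 := by rw [hb]; field_simp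
    rw [this, Real.sqrt_mul (by positivity), Real.sqrt_sq hH.le]
  rw [e2, Complex.ofReal_mul (_ * _), Complex.ofReal_exp]
  congr 2
  rw [hb]; push_cast
  have : (H:ℂ) ≠ 0 := by exact_mod_cast hH.ne'
  field_simp
  norm_num

end SGZ

namespace SGZ

lemma int_gauss (T H ℓ : ℝ) (hH : 0 < H) : Integrable (fun x : ℝ => cexp (I * x * (ℓ:ℂ)) * wC T H x) := by
  have hHC : (H:ℂ) ≠ 0 := by exact_mod_cast hH.ne'
  have h := integrable_cexp_quadratic (b := (((1 / (2 * H ^ 2)) : ℝ) : ℂ)) (by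
    rw [Complex.ofReal_re]
    positivity) (I * ℓ + T / (H:ℂ)^2) (-(T:ℂ)^2 / (2 * (H:ℂ) ^ 2))
  refine h.congr (Eventually.of_forall fun x => ?_)
  simp only [wC]
  rw [← Complex.exp_add]
  congr 1
  push_cast
  field_simp
  ring

lemma log_nat_gap {N a b : ℕ} (ha : 1 ≤ a) (haN : a ≤ N) (hb : 1 ≤ b) (hab : a ≠ b) :
    1 / (2 * (N:ℝ)) ≤ |Real.log a - Real.log b| := by
  have ha' : (1:ℝ) ≤ a := by exact_mod_cast ha
  have hb' : (1:ℝ) ≤ b := by exact_mod_cast hb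
  have haN' : (a:ℝ) ≤ N := by exact_mod_cast haN
  have hN : (1:ℝ) ≤ N := by linarith
  rcases lt_or_gt_of_ne hab with h | h
  · have h' : (a:ℝ) + 1 ≤ b := by exact_mod_cast h
    rw [abs_sub_comm]
    refine le_trans ?_ (le_abs_self _)
    rw [← Real.log_div (by positivity) (by positivity)]
    refine le_trans ?_ (Real.one_sub_inv_le_log_of_pos (by positivity))
    rw [inv_div, le_sub_iff_add_le]
    have : (a:ℝ) / b ≤ a / (a + 1) := by gcongr
    have h2 : (a:ℝ) / (a + 1) = 1 - 1 / (a + 1) := by field_simp; ring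
    have h3 : 1 / (2 * (N:ℝ)) ≤ 1 / (a + 1) := by
      apply one_div_le_one_div_of_le <;> linarith
    linarith
  · have h' : (b:ℝ) + 1 ≤ a := by exact_mod_cast h
    refine le_trans ?_ (le_abs_self _)
    rw [← Real.log_div (by positivity) (by positivity)]
    refine le_trans ?_ (Real.one_sub_inv_le_log_of_pos (by positivity))
    rw [inv_div, le_sub_iff_add_le]
    have h2 : (b:ℝ) / a ≤ 1 - 1 / a := by
      rw [le_sub_iff_add_le, ← add_div, div_le_one (by positivity)]; exact h'
    have h3 : 1 / (2 * (N:ℝ)) ≤ 1 / a := by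
      apply one_div_le_one_div_of_le <;> linarith
    linarith

lemma offdiag {N k m n : ℕ} (hk : k ∈ Finset.Icc 1 N) (hm : m ∈ Finset.Icc 1 N) (hn : 1 ≤ n) (hne : k ≠ m * n)
    (H : ℝ) (hH : 1 ≤ H) :
    Real.exp (-(H ^ 2 * (Real.log k - Real.log m - Real.log n) ^ 2 / 2)) ≤
      Real.exp 4 * (N:ℝ) ^ 2 * ((n:ℝ) ^ 2)⁻¹ * Real.exp (-(H ^ 2 / (16 * (N:ℝ) ^ 2))) := by
  rw [Finset.mem_Icc] at hk hm
  have hk1 : (1:ℝ) ≤ k := by exact_mod_cast hk.1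
  have hm1 : (1:ℝ) ≤ m := by exact_mod_cast hm.1
  have hn1 : (1:ℝ) ≤ n := by exact_mod_cast hn
  have hkN : (k:ℝ) ≤ N := by exact_mod_cast hk.2
  have hN1 : (1:ℝ) ≤ N := by linarith
  set ℓ := Real.log k - Real.log m - Real.log n with hℓ
  have e : ℓ = Real.log k - Real.log ((m * n : ℕ) : ℝ) := by
    push_cast; rw [Real.log_mul (by positivity) (by positivity), hℓ]; ring
  have h1 : 1 / (2 * (N:ℝ)) ≤ |ℓ| := by
    rw [e]; exact log_nat_gap hk.1 hk.2 (Nat.mul_pos hm.1 hn) hne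
  have h2 : Real.log n - Real.log N ≤ |ℓ| := by
    refine le_trans ?_ (neg_le_abs ℓ)
    have := Real.log_le_log (by linarith) hkN
    have := Real.log_nonneg hm1
    rw [hℓ]; linarith
  have h3 : 2 * |ℓ| ≤ H ^ 2 * ℓ ^ 2 / 4 + 4 := by
    have : |ℓ| ≤ H * |ℓ| := le_mul_of_one_le_left (abs_nonneg _) hH
    have h4 := sq_nonneg (H * |ℓ| / 2 - 2)
    have h5 : (H * |ℓ|) ^ 2 = H ^ 2 * ℓ ^ 2 := by rw [mul_pow, sq_abs]
    nlinarith
  have h4 : H ^ 2 / (16 * (N:ℝ) ^ 2) ≤ H ^ 2 * ℓ ^ 2 / 4 := by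
    have : (1 / (2 * (N:ℝ))) ^ 2 ≤ ℓ ^ 2 := by rw [← sq_abs ℓ]; gcongr
    calc H ^ 2 / (16 * (N:ℝ) ^ 2) = H ^ 2 * (1 / (2 * (N:ℝ))) ^ 2 / 4 := by field_simp; norm_num
      _ ≤ _ := by gcongr
  have e2 : (N:ℝ) ^ 2 = Real.exp (2 * Real.log N) := by
    rw [two_mul, Real.exp_add, Real.exp_log (by linarith)]; ring
  have e3 : ((n:ℝ) ^ 2)⁻¹ = Real.exp (-(2 * Real.log n)) := by
    rw [Real.exp_neg, two_mul, Real.exp_add, Real.exp_log (by linarith)]; ring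
  rw [e3]
  conv_rhs => rw [show Real.exp 4 * (N:ℝ) ^ 2 = Real.exp 4 * Real.exp (2 * Real.log N) by rw [← e2]]
  rw [← Real.exp_add, ← Real.exp_add, ← Real.exp_add, Real.exp_le_exp]
  linarith

def CC (N n : ℕ) : ℝ := ∑ m ∈ Finset.Icc 1 N, if m * n ≤ N then aC m * aC (m * n) else 0

def KH (H : ℝ) : ℝ := Real.sqrt (2 * π) * H

def errB (N : ℕ) (H : ℝ) : ℝ := Real.exp 4 * (N:ℝ) ^ 4 * Real.exp (-(H ^ 2 / (16 * (N:ℝ) ^ 2)))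

lemma PhiHat (N : ℕ) (T H : ℝ) (hH : 1 ≤ H) (n : ℕ) (hn : 1 ≤ n) :
    ‖(∫ x : ℝ, cexp (-(I * x * (Real.log n : ℂ))) * Phi N T H x) - (KH H * CC N n : ℝ)‖ ≤
      KH H * errB N H * ((n:ℝ) ^ 2)⁻¹ := by
  have hH0 : 0 < H := by linarith
  have hK : 0 ≤ KH H := by unfold KH; positivity
  set ell : ℕ → ℕ → ℝ := fun k m => Real.log k - Real.log m - Real.log n with hell
  have e1 : ∀ x : ℝ, cexp (-(I * x * (Real.log n : ℂ))) * Phi N T H x =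
      ∑ k ∈ Finset.Icc 1 N, ∑ m ∈ Finset.Icc 1 N,
        ((aC k : ℂ) * (aC m : ℂ)) * (cexp (I * x * (ell k m : ℂ)) * wC T H x) := by
    intro x
    unfold Phi BC
    rw [← mul_assoc, Finset.mul_sum, Finset.sum_mul]
    refine Finset.sum_congr rfl fun k _ => ?_
    rw [Finset.mul_sum, Finset.sum_mul]
    refine Finset.sum_congr rfl fun m _ => ?_
    have : cexp (I * x * (ell k m : ℂ)) = cexp (-(I * x * (Real.log n : ℂ))) * cexp (I * x * ((Real.log k - Real.log m : ℝ) : ℂ)) := by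
      rw [← Complex.exp_add]; congr 1; rw [hell]; push_cast; ring
    rw [this]; ring
  simp_rw [e1]
  rw [integral_finsetSum _ (fun k _ => integrable_finsetSum _ fun m _ => (int_gauss T H _ hH0).const_mul _)]
  have e2 : ∀ k ∈ Finset.Icc 1 N, ∫ x : ℝ, ∑ m ∈ Finset.Icc 1 N,
        ((aC k : ℂ) * (aC m : ℂ)) * (cexp (I * x * (ell k m : ℂ)) * wC T H x) = ∑ m ∈ Finset.Icc 1 N,
        ((aC k : ℂ) * (aC m : ℂ)) * (((KH H * Real.exp (-(H ^ 2 * (ell k m) ^ 2 / 2)) : ℝ) : ℂ) * cexp (I * T * (ell k m : ℂ))) := by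
    intro k _
    rw [integral_finsetSum _ (fun m _ => (int_gauss T H _ hH0).const_mul _)]
    refine Finset.sum_congr rfl fun m _ => ?_
    rw [integral_const_mul, gauss_ft T H _ hH0]; rfl
  rw [Finset.sum_congr rfl e2]
  have e3 : ((KH H * CC N n : ℝ) : ℂ) = ∑ k ∈ Finset.Icc 1 N, ∑ m ∈ Finset.Icc 1 N,
      ((aC k : ℂ) * (aC m : ℂ)) * (if k = m * n then (KH H : ℂ) else 0) := by
    rw [Finset.sum_comm]
    unfold CC
    rw [Finset.mul_sum]
    push_cast
    refine Finset.sum_congr rfl fun m hm => ?_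
    rw [Finset.mem_Icc] at hm
    simp only [mul_ite, mul_zero]
    rw [Finset.sum_ite_eq']
    have : (m * n ∈ Finset.Icc 1 N) ↔ m * n ≤ N := by
      rw [Finset.mem_Icc]; exact ⟨fun h => h.2, fun h => ⟨Nat.mul_pos hm.1 hn, h⟩⟩
    simp only [this]
    split_ifs
    · push_cast; ring
    · simp
  rw [e3, ← Finset.sum_sub_distrib]
  simp_rw [← Finset.sum_sub_distrib]
  have key : ∀ k ∈ Finset.Icc 1 N, ∀ m ∈ Finset.Icc 1 N,
      ‖((aC k : ℂ) * (aC m : ℂ)) * (((KH H * Real.exp (-(H ^ 2 * (ell k m) ^ 2 / 2)) : ℝ) : ℂ) * cexp (I * T * (ell k m : ℂ)))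
        - ((aC k : ℂ) * (aC m : ℂ)) * (if k = m * n then (KH H : ℂ) else 0)‖ ≤
      KH H * (Real.exp 4 * (N:ℝ) ^ 2 * ((n:ℝ) ^ 2)⁻¹ * Real.exp (-(H ^ 2 / (16 * (N:ℝ) ^ 2)))) := by
    intro k hk m hm
    have ha1 : ‖(aC k:ℂ)‖ ≤ 1 := by rw [Complex.norm_real]; exact aC_abs k (Finset.mem_Icc.1 hk).1
    have ha2 : ‖(aC m:ℂ)‖ ≤ 1 := by rw [Complex.norm_real]; exact aC_abs m (Finset.mem_Icc.1 hm).1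
    rw [← mul_sub, norm_mul, norm_mul]
    by_cases h : k = m * n
    · have h0 : ell k m = 0 := by
        have hm1 : (m:ℝ) ≠ 0 := by exact_mod_cast (Nat.pos_iff_ne_zero.1 (Finset.mem_Icc.1 hm).1)
        have hn1 : (n:ℝ) ≠ 0 := by exact_mod_cast (Nat.pos_iff_ne_zero.1 hn)
        rw [hell, h]; push_cast; rw [Real.log_mul hm1 hn1]; ring
      rw [if_pos h, h0]
      simp
      positivity
    · rw [if_neg h, sub_zero, norm_mul, Complex.norm_of_nonneg (mul_nonneg hK (Real.exp_nonneg _))]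
      have h5 : ‖cexp (I * T * (ell k m : ℂ))‖ = 1 := by
        rw [Complex.norm_exp]; simp
      rw [h5, mul_one]
      have h7 : ‖(aC k:ℂ)‖ * ‖(aC m:ℂ)‖ ≤ 1 * 1 := mul_le_mul ha1 ha2 (norm_nonneg _) zero_le_one
      calc _ ≤ 1 * 1 * (KH H * Real.exp (-(H ^ 2 * (ell k m) ^ 2 / 2))) :=
            mul_le_mul_of_nonneg_right h7 (mul_nonneg hK (Real.exp_nonneg _))
        _ = KH H * Real.exp (-(H ^ 2 * (ell k m) ^ 2 / 2)) := by ring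
        _ ≤ _ := by gcongr; exact offdiag hk hm hn h H hH
  calc _ ≤ ∑ k ∈ Finset.Icc 1 N, ∑ m ∈ Finset.Icc 1 N, KH H * (Real.exp 4 * (N:ℝ) ^ 2 * ((n:ℝ) ^ 2)⁻¹ * Real.exp (-(H ^ 2 / (16 * (N:ℝ) ^ 2)))) :=
        norm_sum_le_of_le _ fun k hk => norm_sum_le_of_le _ fun m hm => key k hk m hm
    _ = _ := by
      simp only [Finset.sum_const, Nat.card_Icc, nsmul_eq_mul, Nat.add_sub_cancel]
      unfold errB; ring

end SGZ

namespace SGZ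


lemma mertens (N : ℕ) (hN : 1 ≤ N) : Real.log N - 1 ≤ ∑ n ∈ Finset.Icc 1 N, ArithmeticFunction.vonMangoldt n / n := by
  have hN' : (1:ℝ) ≤ N := by exact_mod_cast hN
  have h1 := ArithmeticFunction.sum_Ioc_mul_zeta_eq_sum ArithmeticFunction.vonMangoldt N
  rw [ArithmeticFunction.vonMangoldt_mul_zeta] at h1
  have e : Finset.Ioc 0 N = Finset.Icc 1 N := rfl
  rw [e] at h1
  have h2 : ∑ n ∈ Finset.Icc 1 N, ArithmeticFunction.log n = Real.log (N.factorial : ℕ) := by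
    have e' : Finset.Icc 1 N = Finset.Ico 1 (N + 1) := by
      ext i; simp only [Finset.mem_Icc, Finset.mem_Ico]; omega
    rw [← Finset.prod_Ico_id_eq_factorial, e']
    push_cast
    rw [Real.log_prod]
    · rfl
    · intro i hi; have := (Finset.mem_Ico.1 hi).1; positivity
  have h3 := Stirling.le_log_factorial_stirling (n := N) (by omega)
  have h4 : ∑ n ∈ Finset.Icc 1 N, ArithmeticFunction.vonMangoldt n * ((N / n : ℕ) : ℝ) ≤ N * ∑ n ∈ Finset.Icc 1 N, ArithmeticFunction.vonMangoldt n / n := by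
    rw [Finset.mul_sum]
    refine Finset.sum_le_sum fun n _ => ?_
    have : ((N / n : ℕ) : ℝ) ≤ N / n := Nat.cast_div_le
    calc _ ≤ ArithmeticFunction.vonMangoldt n * (N / n) := mul_le_mul_of_nonneg_left this ArithmeticFunction.vonMangoldt_nonneg
      _ = _ := by ring
  have h5 : 0 ≤ Real.log N := Real.log_nonneg hN'
  have h6 : 0 ≤ Real.log (2 * π) := Real.log_nonneg (by linarith [Real.pi_gt_three])
  have h7 : N * (Real.log N - 1) ≤ N * ∑ n ∈ Finset.Icc 1 N, ArithmeticFunction.vonMangoldt n / n := by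
    rw [← h1, h2] at h4
    nlinarith
  exact le_of_mul_le_mul_left h7 (by linarith)

def gf (j : ℕ) : ℝ := (1 - 0.38 * ((j:ℝ) / 16) ^ 2) * (1 - (j:ℝ) / 16)

lemma gf_anti {x : ℝ} {j : ℕ} (hx : 0 ≤ x) (hxj : x ≤ (j:ℝ) / 16) (hj : (j:ℝ) ≤ 16) :
    gf j ≤ (1 - 0.38 * x ^ 2) * (1 - x) := by
  unfold gf
  have : (j:ℝ) / 16 ≤ 1 := by linarith
  apply mul_le_mul
  · have : x ^ 2 ≤ ((j:ℝ) / 16) ^ 2 := by gcongr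
    linarith
  · linarith
  · linarith
  · nlinarith

lemma gf_step (j : ℕ) (hj : j < 16) : gf (j + 1) ≤ gf j := by
  have hj' : (j:ℝ) + 1 ≤ 16 := by exact_mod_cast hj
  have := gf_anti (x := (j:ℝ) / 16) (j := j + 1) (by positivity) (by push_cast; linarith) (by push_cast; linarith)
  exact this

lemma step_lower (M n : ℕ) (hM : 2 ≤ M) (hn : 1 ≤ n) (hnN : n ≤ M ^ 16) :
    ∑ j ∈ Finset.Ico 1 16, (if n ≤ M ^ j then gf j - gf (j + 1) else 0) ≤
      (1 - 0.38 * (Real.log n / (16 * Real.log M)) ^ 2) * (1 - Real.log n / (16 * Real.log M)) := by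
  classical
  have hM' : (2:ℝ) ≤ M := by exact_mod_cast hM
  have hn' : (1:ℝ) ≤ n := by exact_mod_cast hn
  have hy : 0 < Real.log M := Real.log_pos (by linarith)
  have hex : ∃ j, 1 ≤ j ∧ n ≤ M ^ j := ⟨16, by norm_num, hnN⟩
  obtain ⟨k, hk⟩ : ∃ k, k = Nat.find hex := ⟨_, rfl⟩
  have hk1 : 1 ≤ k ∧ n ≤ M ^ k := hk ▸ Nat.find_spec hex
  have hk16 : k ≤ 16 := hk ▸ Nat.find_min' hex ⟨by norm_num, hnN⟩
  have hf : (Finset.Ico 1 16).filter (fun j => n ≤ M ^ j) = Finset.Ico k 16 := by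
    ext j
    simp only [Finset.mem_filter, Finset.mem_Ico]
    constructor
    · rintro ⟨⟨h1, h2⟩, h3⟩
      exact ⟨hk ▸ Nat.find_min' hex ⟨h1, h3⟩, h2⟩
    · rintro ⟨h1, h2⟩
      exact ⟨⟨by omega, h2⟩, hk1.2.trans (Nat.pow_le_pow_right (by omega) h1)⟩
  rw [← Finset.sum_filter, hf]
  have ht : ∑ j ∈ Finset.Ico k 16, (gf j - gf (j + 1)) = gf k - gf 16 := by
    have := Finset.sum_Ico_sub gf hk16
    rw [← neg_inj, ← Finset.sum_neg_distrib, neg_sub, ← this]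
    exact Finset.sum_congr rfl fun j _ => by ring
  have g16 : gf 16 = 0 := by unfold gf; norm_num
  rw [ht, g16, sub_zero]
  apply gf_anti
  · have := Real.log_nonneg hn'; positivity
  · have h : Real.log n ≤ k * Real.log M := by
      rw [← Real.log_pow]
      exact Real.log_le_log (by linarith) (by exact_mod_cast hk1.2)
    rw [div_le_div_iff₀ (by positivity) (by norm_num)]
    nlinarith
  · exact_mod_cast hk16

lemma mertens_weighted (M : ℕ) (hM : 2 ≤ M) :
    6.99 * Real.log M - 1 ≤ ∑ n ∈ Finset.Icc 1 (M ^ 16), ArithmeticFunction.vonMangoldt n / n *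
      ((1 - 0.38 * (Real.log n / (16 * Real.log M)) ^ 2) * (1 - Real.log n / (16 * Real.log M))) := by
  have hM' : (2:ℝ) ≤ M := by exact_mod_cast hM
  have hy : 0 < Real.log M := Real.log_pos (by linarith)
  have h1 : ∑ n ∈ Finset.Icc 1 (M ^ 16), ArithmeticFunction.vonMangoldt n / n * ∑ j ∈ Finset.Ico 1 16, (if n ≤ M ^ j then gf j - gf (j + 1) else 0) ≤
      ∑ n ∈ Finset.Icc 1 (M ^ 16), ArithmeticFunction.vonMangoldt n / n *
      ((1 - 0.38 * (Real.log n / (16 * Real.log M)) ^ 2) * (1 - Real.log n / (16 * Real.log M))) := by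
    refine Finset.sum_le_sum fun n hn => ?_
    rw [Finset.mem_Icc] at hn
    exact mul_le_mul_of_nonneg_left (step_lower M n hM hn.1 hn.2)
      (div_nonneg ArithmeticFunction.vonMangoldt_nonneg (Nat.cast_nonneg _))
  refine le_trans ?_ h1
  simp_rw [Finset.mul_sum]
  rw [Finset.sum_comm]
  have h2 : ∀ j ∈ Finset.Ico 1 16, (gf j - gf (j + 1)) * (j * Real.log M - 1) ≤
      ∑ n ∈ Finset.Icc 1 (M ^ 16), ArithmeticFunction.vonMangoldt n / n * (if n ≤ M ^ j then gf j - gf (j + 1) else 0) := by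
    intro j hj
    rw [Finset.mem_Ico] at hj
    have h3 := mertens (M ^ j) (Nat.one_le_pow _ _ (by omega))
    push_cast at h3
    rw [Real.log_pow] at h3
    have h4 := mul_le_mul_of_nonneg_left h3 (sub_nonneg.2 (gf_step j hj.2))
    refine h4.trans (le_of_eq ?_)
    simp only [mul_ite, mul_zero]
    rw [← Finset.sum_filter, Finset.mul_sum]
    have : (Finset.Icc 1 (M ^ 16)).filter (fun n => n ≤ M ^ j) = Finset.Icc 1 (M ^ j) := by
      ext n
      simp only [Finset.mem_filter, Finset.mem_Icc]
      have : M ^ j ≤ M ^ 16 := Nat.pow_le_pow_right (by omega) (by omega)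
      constructor
      · rintro ⟨⟨h1, h2⟩, h3⟩; exact ⟨h1, h3⟩
      · rintro ⟨h1, h2⟩; exact ⟨⟨h1, h2.trans this⟩, h2⟩
    rw [this]
    exact Finset.sum_congr rfl fun n _ => by ring
  refine le_trans ?_ (Finset.sum_le_sum h2)
  have : Finset.Ico 1 16 = {1,2,3,4,5,6,7,8,9,10,11,12,13,14,15} := by decide
  rw [this]
  simp [gf]
  norm_num
  linarith

end SGZ

namespace SGZ


def SH (n : ℕ) : ℝ := (harmonic n : ℝ)

lemma SH_eq (n : ℕ) : SH n = ∑ m ∈ Finset.Icc 1 n, 1 / (m:ℝ) := by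
  unfold SH
  rw [harmonic_eq_sum_Icc]; push_cast; simp

lemma CC_eq (N n : ℕ) (hn : 1 ≤ n) :
    CC N n = (-1) ^ (ArithmeticFunction.cardFactors n) / Real.sqrt n * SH (N / n) := by
  unfold CC
  rw [SH_eq, ← Finset.sum_filter, Finset.mul_sum]
  have : (Finset.Icc 1 N).filter (fun m => m * n ≤ N) = Finset.Icc 1 (N / n) := by
    ext m
    simp only [Finset.mem_filter, Finset.mem_Icc, Nat.le_div_iff_mul_le hn]
    constructor
    · rintro ⟨⟨h1, h2⟩, h3⟩; exact ⟨h1, h3⟩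
    · rintro ⟨h1, h2⟩; exact ⟨⟨h1, le_trans (Nat.le_mul_of_pos_right m hn) h2⟩, h2⟩
  rw [this]
  refine Finset.sum_congr rfl fun m hm => ?_
  have hm1 := (Finset.mem_Icc.1 hm).1
  have hm' : (0:ℝ) < m := by exact_mod_cast hm1
  have hn' : (0:ℝ) < n := by exact_mod_cast hn
  unfold aC
  rw [ArithmeticFunction.cardFactors_mul (by omega) (by omega)]
  push_cast
  rw [Real.sqrt_mul hm'.le, pow_add]
  have h1 : ((-1:ℝ) ^ (ArithmeticFunction.cardFactors m)) * ((-1:ℝ) ^ (ArithmeticFunction.cardFactors m)) = 1 := by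
    rw [← mul_pow]; norm_num
  have h2 := Real.mul_self_sqrt hm'.le
  have h3 : 0 < Real.sqrt m := Real.sqrt_pos.2 hm'
  have h4 : 0 < Real.sqrt n := Real.sqrt_pos.2 hn'
  calc _ = (((-1:ℝ) ^ (ArithmeticFunction.cardFactors m)) * ((-1:ℝ) ^ (ArithmeticFunction.cardFactors m))) * (-1:ℝ) ^ (ArithmeticFunction.cardFactors n) / ((Real.sqrt m * Real.sqrt m) * Real.sqrt n) := by
        field_simp
    _ = _ := by rw [h1, h2]; field_simp

lemma CC_one (N : ℕ) : CC N 1 = SH N := by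
  rw [CC_eq N 1 le_rfl]; simp

lemma lam_vm (n : ℕ) : ArithmeticFunction.vonMangoldt n - 2 * (if IsSquare n then ArithmeticFunction.vonMangoldt n else 0) ≤
    -((-1) ^ (ArithmeticFunction.cardFactors n) * ArithmeticFunction.vonMangoldt n) := by
  have h0 : 0 ≤ ArithmeticFunction.vonMangoldt n := ArithmeticFunction.vonMangoldt_nonneg
  by_cases h : IsPrimePow n
  · obtain ⟨p, k, hp, hk, rfl⟩ := (isPrimePow_nat_iff _).1 h
    rw [ArithmeticFunction.cardFactors_apply_prime_pow hp]
    rcases Nat.even_or_odd k with hk' | hk'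
    · rw [hk'.neg_one_pow, if_pos]
      · linarith
      · exact hk'.isSquare_pow p
    · rw [hk'.neg_one_pow]
      split_ifs <;> linarith
  · rw [ArithmeticFunction.vonMangoldt_eq_zero_iff.2 h]; simp

def KV : ℝ := ∑' n : ℕ, ArithmeticFunction.vonMangoldt n * (n:ℝ) ^ (-(3 / 2) : ℝ)

lemma KV_nonneg : 0 ≤ KV := tsum_nonneg fun n => mul_nonneg ArithmeticFunction.vonMangoldt_nonneg (by positivity)

lemma square_sum (N : ℕ) : ∑ n ∈ Finset.Icc 1 N, (if IsSquare n then ArithmeticFunction.vonMangoldt n else 0) / n ≤ KV := by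
  classical
  have h1 : ∑ n ∈ Finset.Icc 1 N, (if IsSquare n then ArithmeticFunction.vonMangoldt n else 0) / n =
      ∑ n ∈ (Finset.Icc 1 N).filter (fun n => IsSquare n), ArithmeticFunction.vonMangoldt n / n := by
    rw [Finset.sum_filter]
    refine Finset.sum_congr rfl fun n _ => ?_
    split_ifs <;> simp
  rw [h1]
  have h2 : (Finset.Icc 1 N).filter (fun n => IsSquare n) ⊆ (Finset.Icc 1 N).image (fun m => m ^ 2) := by
    intro n hn
    simp only [Finset.mem_filter, Finset.mem_Icc] at hn
    obtain ⟨⟨h1, h2⟩, m, hm⟩ := hn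
    rw [Finset.mem_image]
    refine ⟨m, Finset.mem_Icc.2 ⟨?_, ?_⟩, by rw [hm]; ring⟩
    · rcases Nat.eq_zero_or_pos m with h | h
      · subst h; omega
      · exact h
    · refine le_trans ?_ (hm ▸ h2)
      exact Nat.le_mul_self m
  have h3 : ∑ n ∈ (Finset.Icc 1 N).filter (fun n => IsSquare n), ArithmeticFunction.vonMangoldt n / n ≤
      ∑ n ∈ (Finset.Icc 1 N).image (fun m => m ^ 2), ArithmeticFunction.vonMangoldt n / n :=
    Finset.sum_le_sum_of_subset_of_nonneg h2 fun n _ _ => div_nonneg ArithmeticFunction.vonMangoldt_nonneg (Nat.cast_nonneg _)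
  refine h3.trans ?_
  rw [Finset.sum_image (fun a _ b _ h => by simpa using h)]
  refine le_trans ?_ (vm_norm_summable.sum_le_tsum (Finset.Icc 1 N) fun n _ => mul_nonneg ArithmeticFunction.vonMangoldt_nonneg (by positivity))
  refine Finset.sum_le_sum fun m hm => ?_
  have hm1 : (1:ℝ) ≤ m := by exact_mod_cast (Finset.mem_Icc.1 hm).1
  rw [ArithmeticFunction.vonMangoldt_apply_pow two_ne_zero, div_eq_mul_inv]
  refine mul_le_mul_of_nonneg_left ?_ ArithmeticFunction.vonMangoldt_nonneg
  push_cast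
  have : ((m:ℝ) ^ 2)⁻¹ = (m:ℝ) ^ (-2 : ℝ) := by
    rw [Real.rpow_neg (by linarith)]; norm_num
  rw [this]
  exact Real.rpow_le_rpow_of_exponent_le hm1 (by norm_num)

/-- the arithmetic lower bound -/
lemma arith_lower (M : ℕ) (hM : 2 ≤ M) (η : ℝ) (hη : η = 0.03 * π / Real.log M) :
    η * (16 * Real.log M * (6.99 * Real.log M - 1) - 2 * (1 + 16 * Real.log M) * KV) ≤
      -∑ n ∈ Finset.Icc 1 (M ^ 16), ArithmeticFunction.vonMangoldt n / Real.sqrt n * CC (M ^ 16) n * (Real.sin (η * Real.log n) / Real.log n) := by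
  have hM' : (2:ℝ) ≤ M := by exact_mod_cast hM
  set y := Real.log M with hydef
  have hy : 0 < y := Real.log_pos (by linarith)
  have hη0 : 0 < η := by rw [hη]; have := Real.pi_pos; positivity
  have hlogN : Real.log ((M ^ 16 : ℕ) : ℝ) = 16 * y := by push_cast; rw [Real.log_pow, hydef]; norm_num
  have hηy : η * y = 0.03 * π := by rw [hη]; field_simp
  have hpi := Real.pi_lt_d2
  have hpi4 := Real.pi_lt_d4
  have hterm : ∀ n ∈ Finset.Icc 1 (M ^ 16),
      η * (16 * y) * (ArithmeticFunction.vonMangoldt n / n * ((1 - 0.38 * (Real.log n / (16 * y)) ^ 2) * (1 - Real.log n / (16 * y))))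
       - 2 * η * (1 + 16 * y) * ((if IsSquare n then ArithmeticFunction.vonMangoldt n else 0) / n) ≤
      -(ArithmeticFunction.vonMangoldt n / Real.sqrt n * CC (M ^ 16) n * (Real.sin (η * Real.log n) / Real.log n)) := by
    intro n hn
    rw [Finset.mem_Icc] at hn
    have hn1 : (1:ℝ) ≤ n := by exact_mod_cast hn.1
    have hΛ : 0 ≤ ArithmeticFunction.vonMangoldt n := ArithmeticFunction.vonMangoldt_nonneg
    rcases eq_or_lt_of_le hn.1 with h1 | h1
    · subst h1; simp
    have hn2 : (1:ℝ) < n := by exact_mod_cast h1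
    set ℓ := Real.log n with hℓ
    have hℓ0 : 0 < ℓ := Real.log_pos hn2
    have hℓN : ℓ ≤ 16 * y := by
      rw [← hlogN]; exact Real.log_le_log (by linarith) (by exact_mod_cast hn.2)
    have hηℓ : η * ℓ ≤ 0.48 * π := by
      calc η * ℓ ≤ η * (16 * y) := by gcongr
        _ = 16 * (η * y) := by ring
        _ = _ := by rw [hηy]; ring
    have hηℓ0 : 0 < η * ℓ := by positivity
    set s := Real.sin (η * ℓ) / ℓ with hs
    have hs0 : 0 ≤ s := div_nonneg (Real.sin_nonneg_of_nonneg_of_le_pi hηℓ0.le (by linarith [Real.pi_pos])) hℓ0.le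
    have hs1 : s ≤ η := by
      rw [hs, div_le_iff₀ hℓ0]; exact Real.sin_le hηℓ0.le
    have hs2 : η * (1 - 0.38 * (ℓ / (16 * y)) ^ 2) ≤ s := by
      rw [hs, le_div_iff₀ hℓ0]
      have h := Real.sin_ge_sub_cube hηℓ0.le
      have e : η * ℓ = 0.48 * π * (ℓ / (16 * y)) := by
        rw [hη]; field_simp; norm_num
      have h5 : (η * ℓ) ^ 2 / 6 ≤ 0.38 * (ℓ / (16 * y)) ^ 2 := by
        rw [e, mul_pow]
        have : (0.48 * π) ^ 2 ≤ 6 * 0.38 := by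
          have := Real.pi_pos
          nlinarith
        have h6 : 0 ≤ (ℓ / (16 * y)) ^ 2 := sq_nonneg _
        nlinarith
      have h6 := mul_le_mul_of_nonneg_left h5 hηℓ0.le
      have e3 : η * ℓ * ((η * ℓ) ^ 2 / 6) = (η * ℓ) ^ 3 / 6 := by ring
      nlinarith
    set S := SH (M ^ 16 / n) with hS
    have hS0 : 16 * y - ℓ ≤ S := by
      have h := log_le_harmonic_floor (((M ^ 16 : ℕ) : ℝ) / (n:ℝ)) (by positivity)
      rw [Nat.floor_div_natCast, Nat.floor_natCast, Real.log_div (by positivity) (by positivity), hlogN] at h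
      exact h
    have hS1 : S ≤ 1 + 16 * y := by
      have h := harmonic_le_one_add_log (M ^ 16 / n)
      have h2 : Real.log ((M ^ 16 / n : ℕ) : ℝ) ≤ 16 * y := by
        rw [← hlogN]
        rcases Nat.eq_zero_or_pos (M ^ 16 / n) with h3 | h3
        · rw [h3, hlogN]; simp; positivity
        · exact Real.log_le_log (by exact_mod_cast h3) (by exact_mod_cast Nat.div_le_self _ _)
      calc S ≤ _ := h
        _ ≤ _ := by linarith
    have hSn : 0 ≤ S := by linarith
    rw [CC_eq _ n hn.1]
    have e1 : -(ArithmeticFunction.vonMangoldt n / Real.sqrt n * ((-1) ^ (ArithmeticFunction.cardFactors n) / Real.sqrt n * S) * s) =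
        (-((-1) ^ (ArithmeticFunction.cardFactors n) * ArithmeticFunction.vonMangoldt n)) / n * (S * s) := by
      have h2 := Real.mul_self_sqrt (by linarith : (0:ℝ) ≤ n)
      have h3 : 0 < Real.sqrt n := Real.sqrt_pos.2 (by linarith)
      calc _ = -((-1) ^ (ArithmeticFunction.cardFactors n) * ArithmeticFunction.vonMangoldt n) / (Real.sqrt n * Real.sqrt n) * (S * s) := by
            field_simp
        _ = _ := by rw [h2]
    rw [e1]
    have h7 : (ArithmeticFunction.vonMangoldt n - 2 * (if IsSquare n then ArithmeticFunction.vonMangoldt n else 0)) / n * (S * s) ≤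
       (-((-1) ^ (ArithmeticFunction.cardFactors n) * ArithmeticFunction.vonMangoldt n)) / n * (S * s) := by
      have := lam_vm n
      gcongr
    refine le_trans ?_ h7
    have h8 : 0 ≤ (if IsSquare n then ArithmeticFunction.vonMangoldt n else 0) / (n:ℝ) := by
      split_ifs
      · positivity
      · simp
    have h9 : η * (16 * y) * ((1 - 0.38 * (ℓ / (16 * y)) ^ 2) * (1 - ℓ / (16 * y))) ≤ S * s := by
      have : (16 * y - ℓ) * (η * (1 - 0.38 * (ℓ / (16 * y)) ^ 2)) ≤ S * s := by
        have hb : ℓ / (16 * y) ≤ 1 := (div_le_one (by positivity)).2 hℓN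
        have hb0 : 0 ≤ ℓ / (16 * y) := by positivity
        apply mul_le_mul hS0 hs2 _ hSn
        apply mul_nonneg hη0.le
        nlinarith
      refine le_trans (le_of_eq ?_) this
      field_simp
    have h10 : S * s ≤ (1 + 16 * y) * η := mul_le_mul hS1 hs1 hs0 (by positivity)
    have h11 : 0 ≤ ArithmeticFunction.vonMangoldt n / n := by positivity
    have h12 := mul_le_mul_of_nonneg_left h9 h11
    have h13 := mul_le_mul_of_nonneg_left h10 h8
    have e2 : (ArithmeticFunction.vonMangoldt n - 2 * (if IsSquare n then ArithmeticFunction.vonMangoldt n else 0)) / n * (S * s) = ArithmeticFunction.vonMangoldt n / n * (S * s) -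
       2 * ((if IsSquare n then ArithmeticFunction.vonMangoldt n else 0) / (n:ℝ) * (S * s)) := by ring
    rw [e2]
    linarith
  rw [← Finset.sum_neg_distrib]
  refine le_trans ?_ (Finset.sum_le_sum hterm)
  rw [Finset.sum_sub_distrib, ← Finset.mul_sum, ← Finset.mul_sum]
  have h1 := mertens_weighted M hM
  have h2 := square_sum (M ^ 16)
  have h3 := mul_le_mul_of_nonneg_left h1 (by positivity : 0 ≤ η * (16 * y))
  have h4 := mul_le_mul_of_nonneg_left h2 (by positivity : 0 ≤ 2 * η * (1 + 16 * y))
  linarith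

end SGZ

namespace SGZ


def Psi (N : ℕ) (T H α : ℝ) (z : ℂ) : ℂ := Phi N T H (z + α) + Phi N T H (-z + α)

def del (N : ℕ) (T H : ℝ) : ℝ := 280 * (N:ℝ) ^ 3 * H ^ 2 * Real.exp (-(T ^ 2 / (64 * H ^ 2)))

lemma del_nonneg (N : ℕ) (T H : ℝ) : 0 ≤ del N T H := by unfold del; positivity

lemma shift_inv (x α : ℝ) (hα : |α| ≤ 1) : 1 / (1 + (x + α) ^ 2) ≤ 4 / (1 + x ^ 2) := by
  have h := sq_shift x (-α)
  have h2 : α ^ 2 ≤ 1 := by rw [← sq_abs]; nlinarith [abs_nonneg α]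
  rw [sub_neg_eq_add, neg_sq] at h
  rw [div_le_div_iff₀ (by positivity) (by positivity)]
  nlinarith [sq_nonneg (x + α)]

lemma Psi_diff (N : ℕ) (T H α : ℝ) : Differentiable ℂ (Psi N T H α) := by
  have := Phi_diff N T H
  unfold Psi
  fun_prop

lemma Psi_even (N : ℕ) (T H α : ℝ) (z : ℂ) : Psi N T H α (-z) = Psi N T H α z := by
  unfold Psi; rw [neg_neg, add_comm]

lemma Psi_dec (N : ℕ) (hN : 1 ≤ N) (T H α : ℝ) (hH : 1 ≤ H) (hα : |α| ≤ 1) : ∃ C : ℝ, ∀ z : ℂ, |z.im| ≤ 1 →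
    ‖Psi N T H α z‖ ≤ C / (1 + z.re ^ 2) ^ 4 := by
  obtain ⟨C, hC, hb⟩ := Phi_dec N hN T H hH
  have key : ∀ z : ℂ, |z.im| ≤ 1 → ‖Phi N T H (z + α)‖ ≤ C * 4 ^ 4 / (1 + z.re ^ 2) ^ 4 := by
    intro z hz
    have h1 := hb (z + α) (by simpa using hz)
    have h2 := shift_inv z.re α hα
    have h3 : (z + α).re = z.re + α := by simp
    rw [h3] at h1
    calc _ ≤ _ := h1
      _ = C * (1 / (1 + (z.re + α) ^ 2)) ^ 4 := by rw [div_pow, one_pow]; ring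
      _ ≤ C * (4 / (1 + z.re ^ 2)) ^ 4 := by gcongr
      _ = _ := by rw [div_pow]; ring
  refine ⟨C * 4 ^ 4 + C * 4 ^ 4, fun z hz => ?_⟩
  have h1 := key z hz
  have h2 := key (-z) (by simpa using hz)
  rw [Complex.neg_re, neg_sq] at h2
  rw [add_div]
  exact (norm_add_le _ _).trans (add_le_add h1 h2)

lemma Phi_tail' (N : ℕ) (hN : 1 ≤ N) (T H : ℝ) (hH : 1 ≤ H) (hT : 8 ≤ T) (α : ℝ) (hα : |α| ≤ 1) (z : ℂ) (hz : |z.im| ≤ 1)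
    (hr : T / 2 ≤ |z.re - T|) : ‖Phi N T H (z + α)‖ ≤ 4 * del N T H / (1 + z.re ^ 2) := by
  have h3 : (z + α).re = z.re + α := by simp
  have h1 := Phi_tail N hN T H hH (by linarith) (z + α) (by simpa using hz) (by
    rw [h3]
    have : |z.re - T| ≤ |z.re + α - T| + |α| := by
      have := abs_sub (z.re + α - T) α
      rwa [show z.re + α - T - α = z.re - T by ring] at this
    linarith)
  rw [h3] at h1
  calc _ ≤ _ := h1
    _ = del N T H * (1 / (1 + (z.re + α) ^ 2)) := by unfold del; ring
    _ ≤ del N T H * (4 / (1 + z.re ^ 2)) := mul_le_mul_of_nonneg_left (shift_inv _ _ hα) (del_nonneg _ _ _)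
    _ = _ := by ring

lemma phi_tail' (N : ℕ) (hN : 1 ≤ N) (T H : ℝ) (hH : 1 ≤ H) (hT : 8 ≤ T) (α : ℝ) (hα : |α| ≤ 1) (x : ℝ)
    (hr : T / 2 ≤ |x - T|) : phi N T H (x + α) ≤ 4 * del N T H / (1 + x ^ 2) := by
  have h := Phi_tail' N hN T H hH hT α hα (x:ℂ) (by simp) (by simpa using hr)
  rw [← Complex.ofReal_add, Phi_real, Complex.norm_of_nonneg (phi_nonneg _ _ _ _)] at h
  simpa using h

lemma Psi_real (N : ℕ) (T H α x : ℝ) :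
    Psi N T H α (x:ℂ) = ((phi N T H (x + α) + phi N T H (-x + α) : ℝ) : ℂ) := by
  unfold Psi
  rw [show ((x:ℂ) + α) = ((x + α : ℝ) : ℂ) by push_cast; ring,
    show (-(x:ℂ) + α) = ((-x + α : ℝ) : ℂ) by push_cast; ring, Phi_real, Phi_real]
  push_cast; ring

lemma Psi_small (N : ℕ) (hN : 1 ≤ N) (T H : ℝ) (hH : 1 ≤ H) (hT : 8 ≤ T) (α : ℝ) (hα : |α| ≤ 1) (z : ℂ) (hz : |z.im| ≤ 1)
    (hr : z.re = 0) : ‖Psi N T H α z‖ ≤ 8 * del N T H := by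
  have hTT : T / 2 ≤ |0 - T| := by rw [zero_sub, abs_neg, abs_of_pos (by linarith)]; linarith
  have h1 := Phi_tail' N hN T H hH hT α hα z hz (by rw [hr]; exact hTT)
  have h2 := Phi_tail' N hN T H hH hT α hα (-z) (by simpa using hz) (by rw [Complex.neg_re, hr, neg_zero]; exact hTT)
  rw [Complex.neg_re, hr] at h2
  rw [hr] at h1
  norm_num at h1 h2
  unfold Psi
  refine (norm_add_le _ _).trans ?_
  linarith

lemma Phi_integrable (N : ℕ) (hN : 1 ≤ N) (T H : ℝ) (hH : 1 ≤ H) : Integrable (fun x : ℝ => Phi N T H x) := by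
  obtain ⟨C, hC, hb⟩ := Phi_dec N hN T H hH
  refine integrable_of_dec (C := C) ((Phi_diff N T H).continuous.comp Complex.continuous_ofReal) ?_
  intro x
  have := hb x (by simp)
  simp only [Complex.ofReal_re] at this
  refine this.trans ?_
  apply div_le_div_of_nonneg_left hC (by positivity)
  exact le_self_pow₀ (by nlinarith [sq_nonneg x]) (by norm_num)

lemma phi_integrable (N : ℕ) (hN : 1 ≤ N) (T H : ℝ) (hH : 1 ≤ H) : Integrable (fun x : ℝ => phi N T H x) := by
  have h := (Phi_integrable N hN T H hH).re
  refine h.congr (Eventually.of_forall fun x => ?_)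
  simp [Phi_real]

def M1 (N : ℕ) (T H : ℝ) : ℝ := ∫ x : ℝ, phi N T H x

lemma M1_est (N : ℕ) (T H : ℝ) (hH : 1 ≤ H) : |M1 N T H - KH H * SH N| ≤ KH H * errB N H := by
  have h := PhiHat N T H hH 1 le_rfl
  rw [CC_one] at h
  simp only [Nat.cast_one, Real.log_one, Complex.ofReal_zero, mul_zero, neg_zero, Complex.exp_zero, one_mul, Phi_real,
    one_pow, inv_one, mul_one] at h
  rw [integral_complex_ofReal, ← Complex.ofReal_sub, Complex.norm_real] at h
  exact h

lemma gamma_lower (N : ℕ) (hN : 1 ≤ N) (T H : ℝ) (hH : 1 ≤ H) (hT : 8 ≤ T) (α : ℝ) (hα : |α| ≤ 1) (C : ℝ)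
    (hC : ∀ t : ℝ, 1 / 2 * Real.log (1 + |t|) - C ≤ (GR (1/2 + I * t)).re)
    (hIntg : Integrable (fun x : ℝ => GR (1/2 + I * x) * Psi N T H α (x:ℂ))) :
    (Real.log (T / 2) - 2 * C) * M1 N T H - 4 * π * del N T H * Real.log (T / 2) ≤
      (∫ x : ℝ, GR (1/2 + I * x) * Psi N T H α (x:ℂ)).re := by
  have e : (∫ x : ℝ, GR (1/2 + I * x) * Psi N T H α (x:ℂ)).re =
      ∫ x : ℝ, (GR (1/2 + I * x) * Psi N T H α (x:ℂ)).re := (integral_re hIntg).symm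
  have hlog : 0 ≤ Real.log (T / 2) := Real.log_nonneg (by linarith)
  have hφ := phi_integrable N hN T H hH
  have i1 : Integrable (fun x : ℝ => phi N T H (x + α)) := hφ.comp_add_right α
  have i2 : Integrable (fun x : ℝ => phi N T H (-x + α)) := i1.comp_neg
  have i3 : Integrable (fun x : ℝ => phi N T H (x + α) + phi N T H (-x + α)) := i1.add i2
  have hi : Integrable (fun x : ℝ => (1 / 2 * Real.log (T / 2) - C) * (phi N T H (x + α) + phi N T H (-x + α))
      - 1 / 2 * Real.log (T / 2) * (8 * del N T H) * (1 + x ^ 2)⁻¹) :=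
    (i3.const_mul _).sub (integrable_inv_one_add_sq.const_mul _)
  have hv : ∫ x : ℝ, ((1 / 2 * Real.log (T / 2) - C) * (phi N T H (x + α) + phi N T H (-x + α))
      - 1 / 2 * Real.log (T / 2) * (8 * del N T H) * (1 + x ^ 2)⁻¹) =
      (Real.log (T / 2) - 2 * C) * M1 N T H - 4 * π * del N T H * Real.log (T / 2) := by
    have j1 : ∫ x : ℝ, phi N T H (x + α) = M1 N T H := integral_add_right_eq_self (phi N T H) α
    have j2 : ∫ x : ℝ, phi N T H (-x + α) = M1 N T H := by
      rw [← j1]; exact integral_neg_eq_self (fun x => phi N T H (x + α)) volume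
    rw [integral_sub (i3.const_mul _) (integrable_inv_one_add_sq.const_mul _), integral_const_mul,
      integral_const_mul, integral_add i1 i2, j1, j2, integral_univ_inv_one_add_sq]
    ring
  rw [e, ← hv]
  refine integral_mono hi hIntg.re fun x => ?_
  simp only
  have hre : (GR (1/2 + I * x) * Psi N T H α (x:ℂ)).re =
      (GR (1/2 + I * x)).re * (phi N T H (x + α) + phi N T H (-x + α)) := by
    rw [Psi_real]
    exact Complex.re_mul_ofReal _ _
  rw [hre]
  set P := phi N T H (x + α) + phi N T H (-x + α) with hP
  have hP0 : 0 ≤ P := add_nonneg (phi_nonneg _ _ _ _) (phi_nonneg _ _ _ _)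
  refine le_trans ?_ (mul_le_mul_of_nonneg_right (hC x) hP0)
  have hq : 0 < (1 + x ^ 2)⁻¹ := by positivity
  rcases le_or_gt (T / 2) |x| with h | h
  · have h1 : Real.log (T / 2) ≤ Real.log (1 + |x|) := Real.log_le_log (by linarith) (by linarith)
    have h2 : (1 / 2 * Real.log (T / 2) - C) * P ≤ (1 / 2 * Real.log (1 + |x|) - C) * P := by gcongr
    have h3 : 0 ≤ 1 / 2 * Real.log (T / 2) * (8 * del N T H) * (1 + x ^ 2)⁻¹ := by
      have := del_nonneg N T H; positivity
    linarith
  · have hx := abs_lt.1 h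
    have h1 := phi_tail' N hN T H hH hT α hα x (by rw [abs_sub_comm]; refine le_trans ?_ (le_abs_self _); linarith)
    have h2 := phi_tail' N hN T H hH hT α hα (-x) (by rw [abs_sub_comm]; refine le_trans ?_ (le_abs_self _); linarith)
    rw [neg_sq] at h2
    have h3 : P ≤ 8 * del N T H * (1 + x ^ 2)⁻¹ := by
      rw [div_eq_mul_inv] at h1 h2; rw [hP]; linarith
    have h4 : 0 ≤ Real.log (1 + |x|) := Real.log_nonneg (by linarith [abs_nonneg x])
    have h5 := mul_le_mul_of_nonneg_left h3 hlog
    have h6 := mul_nonneg h4 hP0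
    linarith

end SGZ

namespace SGZ


lemma ft_shift (N : ℕ) (T H α ℓ : ℝ) :
    ∫ x : ℝ, cexp (-(I * x * (ℓ:ℂ))) * Phi N T H (x + α) =
      cexp (I * α * ℓ) * ∫ x : ℝ, cexp (-(I * x * (ℓ:ℂ))) * Phi N T H x := by
  rw [← integral_add_right_eq_self (fun x : ℝ => cexp (-(I * x * (ℓ:ℂ))) * Phi N T H x) α, ← integral_const_mul]
  refine integral_congr_ae (Eventually.of_forall fun x => ?_)
  simp only
  rw [← mul_assoc, ← Complex.exp_add]
  push_cast
  congr 2
  ring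

lemma ft_refl (N : ℕ) (T H α ℓ : ℝ) :
    ∫ x : ℝ, cexp (-(I * x * (ℓ:ℂ))) * Phi N T H (-x + α) =
      (starRingEnd ℂ) (∫ x : ℝ, cexp (-(I * x * (ℓ:ℂ))) * Phi N T H (x + α)) := by
  rw [← integral_conj, ← integral_neg_eq_self]
  refine integral_congr_ae (Eventually.of_forall fun x => ?_)
  simp only
  rw [map_mul, ← Complex.exp_conj]
  have h : Phi N T H ((x:ℂ) + α) = ((phi N T H (x + α) : ℝ) : ℂ) := by rw [← Phi_real]; push_cast; rfl
  have h' : Phi N T H (-((-x : ℝ):ℂ) + α) = ((phi N T H (x + α) : ℝ) : ℂ) := by rw [← h]; push_cast; rw [neg_neg]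
  rw [h, h', Complex.conj_ofReal, map_neg, map_mul, map_mul, Complex.conj_I, Complex.conj_ofReal, Complex.conj_ofReal]
  congr 2
  push_cast; ring

lemma ft_int (N : ℕ) (hN : 1 ≤ N) (T H α ℓ : ℝ) (hH : 1 ≤ H) :
    Integrable (fun x : ℝ => cexp (-(I * x * (ℓ:ℂ))) * Phi N T H (x + α)) ∧
    Integrable (fun x : ℝ => cexp (-(I * x * (ℓ:ℂ))) * Phi N T H (-x + α)) := by
  have h0 := Phi_integrable N hN T H hH
  have h1 : Integrable (fun x : ℝ => Phi N T H (x + α)) := by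
    have := h0.comp_add_right α
    refine this.congr (Eventually.of_forall fun x => ?_)
    simp
  have h2 : Integrable (fun x : ℝ => Phi N T H (-x + α)) := by
    have := h1.comp_neg
    refine this.congr (Eventually.of_forall fun x => ?_)
    simp
  have hb : ∀ x : ℝ, ‖cexp (-(I * x * (ℓ:ℂ)))‖ ≤ 1 := by
    intro x; rw [Complex.norm_exp]; simp
  have hm : AEStronglyMeasurable (fun x : ℝ => cexp (-(I * x * (ℓ:ℂ)))) volume :=
    (by fun_prop : Continuous (fun x : ℝ => cexp (-(I * x * (ℓ:ℂ))))).aestronglyMeasurable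
  exact ⟨h1.bdd_mul hm (Eventually.of_forall hb), h2.bdd_mul hm (Eventually.of_forall hb)⟩

lemma prime_term (N : ℕ) (hN : 1 ≤ N) (T H α : ℝ) (hH : 1 ≤ H) (n : ℕ) :
    ((ArithmeticFunction.vonMangoldt n : ℂ) * ∫ x : ℝ, (n:ℂ) ^ (-(1/2 + I * x : ℂ)) * Psi N T H α (x:ℂ)).re ≤
      2 * KH H * (ArithmeticFunction.vonMangoldt n / Real.sqrt n * CC N n * Real.cos (α * Real.log n)) +
      2 * KH H * errB N H * (ArithmeticFunction.vonMangoldt n * (n:ℝ) ^ (-(3 / 2) : ℝ)) := by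
  rcases Nat.eq_zero_or_pos n with h0 | hn
  · subst h0; simp
  have hn1 : (1:ℝ) ≤ n := by exact_mod_cast hn
  have hΛ : 0 ≤ ArithmeticFunction.vonMangoldt n := ArithmeticFunction.vonMangoldt_nonneg
  have hK : 0 ≤ KH H := by unfold KH; positivity
  have hE : 0 ≤ errB N H := by unfold errB; positivity
  have hs : 0 < Real.sqrt n := Real.sqrt_pos.2 (by linarith)
  set ℓ := Real.log n with hℓ
  have e1 : ∀ x : ℝ, (n:ℂ) ^ (-(1/2 + I * x : ℂ)) = ((Real.sqrt n)⁻¹ : ℝ) * cexp (-(I * x * (ℓ:ℂ))) := by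
    intro x
    have hnC : (n:ℂ) ≠ 0 := by exact_mod_cast hn.ne'
    have h1 : (((Real.sqrt n)⁻¹ : ℝ) : ℂ) = cexp (-(1/2 * (ℓ:ℂ))) := by
      have : (Real.sqrt n)⁻¹ = Real.exp (-(1/2 * ℓ)) := by
        rw [Real.exp_neg, Real.sqrt_eq_rpow, Real.rpow_def_of_pos (by linarith), mul_comm]
      rw [this]; push_cast; rfl
    rw [h1, ← Complex.exp_add, Complex.cpow_def_of_ne_zero hnC, ← Complex.natCast_log]
    congr 1; ring
  set J := ∫ x : ℝ, cexp (-(I * x * (ℓ:ℂ))) * Phi N T H x with hJ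
  obtain ⟨i1, i2⟩ := ft_int N hN T H α ℓ hH
  have e2 : ∫ x : ℝ, (n:ℂ) ^ (-(1/2 + I * x : ℂ)) * Psi N T H α (x:ℂ) =
      ((Real.sqrt n)⁻¹ : ℝ) * (cexp (I * α * ℓ) * J + (starRingEnd ℂ) (cexp (I * α * ℓ) * J)) := by
    rw [hJ, ← ft_shift, ← ft_refl, ← integral_add i1 i2, ← integral_const_mul]
    refine integral_congr_ae (Eventually.of_forall fun x => ?_)
    simp only [Psi]
    rw [e1]; ring
  rw [e2, Complex.add_conj, ← Complex.ofReal_mul, ← Complex.ofReal_mul, Complex.ofReal_re]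
  have hJe := PhiHat N T H hH n hn
  have e3 : (cexp (I * α * ℓ) * J).re = KH H * CC N n * Real.cos (α * ℓ) +
      (cexp (I * α * ℓ) * (J - (KH H * CC N n : ℝ))).re := by
    rw [mul_sub, Complex.sub_re, Complex.re_mul_ofReal]
    have : (cexp (I * α * ℓ)).re = Real.cos (α * ℓ) := by
      rw [show I * α * ℓ = ((α * ℓ : ℝ) : ℂ) * I by push_cast; ring, Complex.exp_ofReal_mul_I_re]
    rw [this]; ring
  have h4 : (cexp (I * α * ℓ) * (J - (KH H * CC N n : ℝ))).re ≤ KH H * errB N H * ((n:ℝ) ^ 2)⁻¹ := by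
    refine (Complex.re_le_norm _).trans ?_
    rw [norm_mul]
    have : ‖cexp (I * α * ℓ)‖ = 1 := by
      rw [Complex.norm_exp]; simp
    rw [this, one_mul]
    exact hJe
  have h5 : (Real.sqrt n)⁻¹ * ((n:ℝ) ^ 2)⁻¹ ≤ (n:ℝ) ^ (-(3 / 2) : ℝ) := by
    have a1 : ((n:ℝ) ^ 2)⁻¹ = (n:ℝ) ^ (-2 : ℝ) := by
      rw [Real.rpow_neg (by linarith)]; norm_num
    have a2 : (Real.sqrt n)⁻¹ = (n:ℝ) ^ (-(1/2) : ℝ) := by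
      rw [Real.sqrt_eq_rpow, Real.rpow_neg (by linarith)]
    rw [a1, a2, ← Real.rpow_add (by linarith)]
    exact Real.rpow_le_rpow_of_exponent_le hn1 (by norm_num)
  rw [e3]
  have h6 := mul_le_mul_of_nonneg_left h4 (mul_nonneg hΛ (inv_nonneg.2 hs.le))
  have h7 := mul_le_mul_of_nonneg_left h5 (mul_nonneg (mul_nonneg hK hE) hΛ)
  rw [div_eq_mul_inv]
  nlinarith

lemma CC_zero (N n : ℕ) (h : N < n) : CC N n = 0 := by
  unfold CC
  refine Finset.sum_eq_zero fun m hm => ?_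
  rw [if_neg]
  have := (Finset.mem_Icc.1 hm).1
  have : n ≤ m * n := Nat.le_mul_of_pos_left n this
  omega

lemma prime_sum (N : ℕ) (hN : 1 ≤ N) (T H α : ℝ) (hH : 1 ≤ H) (W : ℂ)
    (hW : HasSum (fun n : ℕ => (ArithmeticFunction.vonMangoldt n : ℂ) * ∫ x : ℝ, (n:ℂ) ^ (-(1/2 + I * x : ℂ)) * Psi N T H α (x:ℂ)) W) :
    W.re ≤ 2 * KH H * (∑ n ∈ Finset.Icc 1 N, ArithmeticFunction.vonMangoldt n / Real.sqrt n * CC N n * Real.cos (α * Real.log n)) +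
      2 * KH H * errB N H * KV := by
  have h1 := Complex.hasSum_re hW
  have h2 : HasSum (fun n : ℕ => ArithmeticFunction.vonMangoldt n / Real.sqrt n * CC N n * Real.cos (α * Real.log n))
      (∑ n ∈ Finset.Icc 1 N, ArithmeticFunction.vonMangoldt n / Real.sqrt n * CC N n * Real.cos (α * Real.log n)) := by
    refine hasSum_sum_of_ne_finset_zero fun n hn => ?_
    rw [Finset.mem_Icc] at hn
    rcases Nat.eq_zero_or_pos n with h0 | h0
    · subst h0; simp
    · rw [CC_zero N n (by omega)]; simp
  have h3 := (h2.mul_left (2 * KH H)).add (vm_norm_summable.hasSum.mul_left (2 * KH H * errB N H))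
  exact hasSum_le (fun n => prime_term N hN T H α hH n) h1 h3

end SGZ

namespace SGZ


def Etot (N : ℕ) (T H Z : ℝ) (m : ℕ) : ℝ :=
  16 * π * del N T H * Z + 16 * π * del N T H + 8 * π * m * del N T H + 4 * π * del N T H * Real.log (T / 2)
    + 2 * KH H * errB N H * KV

lemma per_alpha (γ : ℕ → ℝ) (hpos : ∀ n, 0 < γ n) (m : ℕ) (hsum : Summable (fun n => 1 / (1 + γ n ^ 2)))
    (hpf : ∀ x : ℝ, HasSum (fun n => 2 * ((x:ℂ) - I) / (((x:ℂ) - I) ^ 2 - (γ n : ℂ) ^ 2))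
      (logDeriv Xi ((x:ℂ) - I) - m / ((x:ℂ) - I)))
    (C : ℝ) (hC : ∀ t : ℝ, 1 / 2 * Real.log (1 + |t|) - C ≤ (GR (1/2 + I * t)).re)
    (N : ℕ) (hN : 1 ≤ N) (T H : ℝ) (hH : 1 ≤ H) (hT : 8 ≤ T) (α : ℝ) (hα : |α| ≤ 1)
    (S : Finset ℕ) (hS : ∀ n, n ∉ S → T / 2 ≤ |γ n - T|) :
    (Real.log (T / 2) - 2 * C) * M1 N T H
      - 2 * KH H * (∑ n ∈ Finset.Icc 1 N, ArithmeticFunction.vonMangoldt n / Real.sqrt n * CC N n * Real.cos (α * Real.log n))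
      - Etot N T H (∑' n, 1 / (1 + γ n ^ 2)) m ≤
    2 * π * ∑ n ∈ S, phi N T H (γ n + α) := by
  obtain ⟨C', hb⟩ := Psi_dec N hN T H α hH hα
  obtain ⟨hIntg, W, hW, hZ⟩ := explicit_formula (Psi N T H α) C' (Psi_diff N T H α) (Psi_even N T H α) hb γ m hsum hpf
  have hG := gamma_lower N hN T H hH hT α hα C hC hIntg
  have hWr := prime_sum N hN T H α hH W hW
  have hd := del_nonneg N T H
  have hpi := Real.pi_pos
  -- boundary terms
  have b1 := Psi_small N hN T H hH hT α hα (I / 2) (by norm_num) (by simp)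
  have b2 := Psi_small N hN T H hH hT α hα 0 (by simp) (by simp)
  have r1 : -(2 * π * (8 * del N T H)) ≤ (2 * π * Psi N T H α (I / 2) : ℂ).re := by
    have : (2 * π * Psi N T H α (I / 2) : ℂ) = ((2 * π : ℝ) : ℂ) * Psi N T H α (I / 2) := by push_cast; ring
    rw [this, Complex.re_ofReal_mul]
    have h := (abs_le.1 ((Complex.abs_re_le_norm _).trans b1)).1
    nlinarith
  have r2 : (π * m * Psi N T H α 0 : ℂ).re ≤ π * m * (8 * del N T H) := by
    have : (π * m * Psi N T H α 0 : ℂ) = ((π * m : ℝ) : ℂ) * Psi N T H α 0 := by push_cast; ring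
    rw [this, Complex.re_ofReal_mul]
    have h := (abs_le.1 ((Complex.abs_re_le_norm _).trans b2)).2
    gcongr
  -- zero sum
  have hZr := Complex.hasSum_re hZ
  have hup : HasSum (fun n => 2 * π * (if n ∈ S then phi N T H (γ n + α) else 0) + 2 * π * (8 * del N T H) * (1 / (1 + γ n ^ 2)))
      (2 * π * ∑ n ∈ S, phi N T H (γ n + α) + 2 * π * (8 * del N T H) * ∑' n, 1 / (1 + γ n ^ 2)) := by
    refine HasSum.add ?_ (hsum.hasSum.mul_left _)
    refine HasSum.mul_left _ ?_
    have h := hasSum_sum_of_ne_finset_zero (f := fun n => if n ∈ S then phi N T H (γ n + α) else 0) (s := S)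
      (fun n hn => if_neg hn) (L := SummationFilter.unconditional ℕ)
    rwa [Finset.sum_congr rfl (fun n hn => if_pos hn)] at h
  have hle := hasSum_le (fun n => ?_) hZr hup
  · rw [Complex.sub_re, Complex.add_re, Complex.sub_re] at hle
    unfold Etot
    linarith
  · have e : (2 * π * Psi N T H α (γ n) : ℂ).re = 2 * π * (phi N T H (γ n + α) + phi N T H (-γ n + α)) := by
      rw [Psi_real]
      rw [show (2 * π * ((phi N T H (γ n + α) + phi N T H (-γ n + α) : ℝ) : ℂ) : ℂ) =
        ((2 * π * (phi N T H (γ n + α) + phi N T H (-γ n + α)) : ℝ) : ℂ) by push_cast; ring, Complex.ofReal_re]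
    rw [e]
    have h2 := phi_tail' N hN T H hH hT α hα (-γ n) (by
      rw [abs_sub_comm]; refine le_trans ?_ (le_abs_self _); linarith [hpos n])
    rw [neg_sq] at h2
    have h1 : phi N T H (γ n + α) ≤ (if n ∈ S then phi N T H (γ n + α) else 0) + 4 * del N T H / (1 + γ n ^ 2) := by
      by_cases hn : n ∈ S
      · rw [if_pos hn]
        have : 0 ≤ 4 * del N T H / (1 + γ n ^ 2) := by positivity
        linarith
      · rw [if_neg hn, zero_add]
        exact phi_tail' N hN T H hH hT α hα (γ n) (hS n hn)
    have h3 : phi N T H (γ n + α) + phi N T H (-γ n + α) ≤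
        (if n ∈ S then phi N T H (γ n + α) else 0) + 8 * del N T H * (1 / (1 + γ n ^ 2)) := by
      rw [div_eq_mul_inv] at h1 h2 ⊢
      linarith
    have h4 := mul_le_mul_of_nonneg_left h3 (by positivity : 0 ≤ 2 * π)
    linarith

/-- integrated inequality -/
lemma integrated (γ : ℕ → ℝ) (hpos : ∀ n, 0 < γ n) (m : ℕ) (hsum : Summable (fun n => 1 / (1 + γ n ^ 2)))
    (hpf : ∀ x : ℝ, HasSum (fun n => 2 * ((x:ℂ) - I) / (((x:ℂ) - I) ^ 2 - (γ n : ℂ) ^ 2))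
      (logDeriv Xi ((x:ℂ) - I) - m / ((x:ℂ) - I)))
    (C : ℝ) (hC : ∀ t : ℝ, 1 / 2 * Real.log (1 + |t|) - C ≤ (GR (1/2 + I * t)).re)
    (N : ℕ) (hN : 1 ≤ N) (T H : ℝ) (hH : 1 ≤ H) (hT : 8 ≤ T) (η : ℝ) (hη0 : 0 < η) (hη : η ≤ 1)
    (S : Finset ℕ) (hS : ∀ n, n ∉ S → T / 2 ≤ |γ n - T|)
    (hdisj : ∀ i ∈ S, ∀ j ∈ S, i < j → γ i + 2 * η ≤ γ j) :
    2 * η * ((Real.log (T / 2) - 2 * C) * M1 N T H - Etot N T H (∑' n, 1 / (1 + γ n ^ 2)) m)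
      - 4 * KH H * (∑ n ∈ Finset.Icc 1 N, ArithmeticFunction.vonMangoldt n / Real.sqrt n * CC N n * (Real.sin (η * Real.log n) / Real.log n)) ≤
    2 * π * M1 N T H := by
  set Z := ∑' n, 1 / (1 + γ n ^ 2) with hZ
  have hcont : Continuous (phi N T H) := by
    unfold phi Ampl
    fun_prop
  have hIntg := phi_integrable N hN T H hH
  have i1 : IntervalIntegrable (fun α : ℝ => (Real.log (T / 2) - 2 * C) * M1 N T H
      - 2 * KH H * (∑ n ∈ Finset.Icc 1 N, ArithmeticFunction.vonMangoldt n / Real.sqrt n * CC N n * Real.cos (α * Real.log n))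
      - Etot N T H Z m) volume (-η) η := by
    apply Continuous.intervalIntegrable
    fun_prop
  have i2 : IntervalIntegrable (fun α : ℝ => 2 * π * ∑ n ∈ S, phi N T H (γ n + α)) volume (-η) η := by
    apply Continuous.intervalIntegrable
    fun_prop
  have hmono := intervalIntegral.integral_mono_on (by linarith : -η ≤ η) i1 i2 (fun α hα =>
    per_alpha γ hpos m hsum hpf C hC N hN T H hH hT α (by rw [abs_le]; exact ⟨by linarith [hα.1], by linarith [hα.2]⟩) S hS)
  have hcos : ∀ n ∈ Finset.Icc 1 N, ∫ α in (-η)..η, ArithmeticFunction.vonMangoldt n / Real.sqrt n * CC N n * Real.cos (α * Real.log n) =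
      2 * (ArithmeticFunction.vonMangoldt n / Real.sqrt n * CC N n * (Real.sin (η * Real.log n) / Real.log n)) := by
    intro n hn
    have hn1 := (Finset.mem_Icc.1 hn).1
    rcases eq_or_lt_of_le hn1 with h1 | h1
    · subst h1; simp
    have hl : Real.log n ≠ 0 := (Real.log_pos (by exact_mod_cast h1)).ne'
    rw [intervalIntegral.integral_const_mul, intervalIntegral.integral_comp_mul_right _ hl, integral_cos]
    rw [neg_mul, Real.sin_neg, smul_eq_mul]
    ring
  have hL : ∫ α in (-η)..η, ((Real.log (T / 2) - 2 * C) * M1 N T H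
      - 2 * KH H * (∑ n ∈ Finset.Icc 1 N, ArithmeticFunction.vonMangoldt n / Real.sqrt n * CC N n * Real.cos (α * Real.log n))
      - Etot N T H Z m) = 2 * η * ((Real.log (T / 2) - 2 * C) * M1 N T H - Etot N T H Z m)
      - 4 * KH H * (∑ n ∈ Finset.Icc 1 N, ArithmeticFunction.vonMangoldt n / Real.sqrt n * CC N n * (Real.sin (η * Real.log n) / Real.log n)) := by
    rw [intervalIntegral.integral_sub, intervalIntegral.integral_sub, intervalIntegral.integral_const,
      intervalIntegral.integral_const, intervalIntegral.integral_const_mul,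
      intervalIntegral.integral_finsetSum, Finset.sum_congr rfl hcos, ← Finset.mul_sum]
    · simp only [smul_eq_mul]; ring
    all_goals first
      | (intro n _; apply Continuous.intervalIntegrable; fun_prop)
      | (apply Continuous.intervalIntegrable; fun_prop)
  have hR : ∫ α in (-η)..η, 2 * π * ∑ n ∈ S, phi N T H (γ n + α) ≤ 2 * π * M1 N T H := by
    rw [intervalIntegral.integral_const_mul, intervalIntegral.integral_finsetSum]
    · refine mul_le_mul_of_nonneg_left ?_ (by positivity)
      have e : ∀ n ∈ S, ∫ α in (-η)..η, phi N T H (γ n + α) = ∫ x in Set.Ioc (γ n + -η) (γ n + η), phi N T H x := by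
        intro n _
        rw [intervalIntegral.integral_comp_add_left (fun x => phi N T H x) (γ n),
          intervalIntegral.integral_of_le (by linarith)]
      rw [Finset.sum_congr rfl e, ← integral_biUnion_finset]
      · exact setIntegral_le_integral hIntg (Eventually.of_forall fun x => phi_nonneg N T H x)
      · intro i _; exact measurableSet_Ioc
      · intro i hi j hj hij
        rw [Function.onFun, Set.disjoint_left]
        intro x hx hx'
        rcases lt_or_gt_of_ne hij with h | h
        · have := hdisj i hi j hj h
          linarith [hx.2, hx'.1]
        · have := hdisj j hj i hi h
          linarith [hx.1, hx'.2]
      · intro i _; exact hIntg.integrableOn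
    · intro n _; apply Continuous.intervalIntegrable; fun_prop
  rw [hL] at hmono
  linarith

end SGZ

namespace SGZ

lemma X_tendsto : Tendsto (fun M : ℕ => (M:ℝ) ^ 104 * Real.exp (-((M:ℝ) ^ 4 / 64))) atTop (nhds 0) := by
  have h1 := Real.tendsto_pow_mul_exp_neg_atTop_nhds_zero 26
  have h2 : Tendsto (fun M : ℕ => (M:ℝ) ^ 4 / 64) atTop atTop := by
    apply Tendsto.atTop_div_const (by norm_num)
    exact (tendsto_pow_atTop (by norm_num)).comp tendsto_natCast_atTop_atTop
  have h3 := (h1.comp h2).const_mul ((64:ℝ) ^ 26)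
  rw [mul_zero] at h3
  refine h3.congr fun M => ?_
  simp only [Function.comp]
  rw [div_pow, ← pow_mul]
  field_simp

lemma del_M (M : ℕ) (hM : 1 ≤ M) : del (M ^ 16) ((M:ℝ) ^ 20) ((M:ℝ) ^ 18) * (M:ℝ) ^ 20 =
    280 * ((M:ℝ) ^ 104 * Real.exp (-((M:ℝ) ^ 4 / 64))) := by
  have : (0:ℝ) < M := by exact_mod_cast hM
  unfold del
  have e : ((M:ℝ) ^ 20) ^ 2 / (64 * ((M:ℝ) ^ 18) ^ 2) = (M:ℝ) ^ 4 / 64 := by field_simp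
  rw [e]; push_cast; ring

lemma errB_M (M : ℕ) (hM : 1 ≤ M) : (M:ℝ) ^ 18 * errB (M ^ 16) ((M:ℝ) ^ 18) ≤
    Real.exp 4 * ((M:ℝ) ^ 104 * Real.exp (-((M:ℝ) ^ 4 / 64))) := by
  have h1 : (1:ℝ) ≤ M := by exact_mod_cast hM
  unfold errB
  have e : ((M:ℝ) ^ 18) ^ 2 / (16 * (((M ^ 16 : ℕ) : ℝ)) ^ 2) = (M:ℝ) ^ 4 / 16 := by push_cast; field_simp
  rw [e]
  have h2 : Real.exp (-((M:ℝ) ^ 4 / 16)) ≤ Real.exp (-((M:ℝ) ^ 4 / 64)) := by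
    rw [Real.exp_le_exp]; have : 0 ≤ (M:ℝ) ^ 4 := by positivity
    linarith
  have h3 : (M:ℝ) ^ 82 ≤ (M:ℝ) ^ 104 := pow_le_pow_right₀ h1 (by norm_num)
  calc _ = Real.exp 4 * ((M:ℝ) ^ 82 * Real.exp (-((M:ℝ) ^ 4 / 16))) := by push_cast; ring
    _ ≤ _ := by gcongr

lemma ev_small (Z : ℝ) (hZ : 0 ≤ Z) (m : ℕ) : ∀ᶠ M : ℕ in atTop,
    errB (M ^ 16) ((M:ℝ) ^ 18) ≤ 1 ∧ Etot (M ^ 16) ((M:ℝ) ^ 20) ((M:ℝ) ^ 18) Z m ≤ 1 := by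
  set A : ℝ := 280 * (16 * π * Z + 16 * π + 8 * π * m + 4 * π) + 2 * Real.sqrt (2 * π) * KV * Real.exp 4 with hA
  have hpi := Real.pi_pos
  have hKV := KV_nonneg
  have hX := X_tendsto
  have t1 := hX.const_mul A
  have t2 := hX.const_mul (Real.exp 4)
  rw [mul_zero] at t1 t2
  filter_upwards [t1.eventually (gt_mem_nhds one_pos), t2.eventually (gt_mem_nhds one_pos), eventually_ge_atTop 2] with M h1 h2 hM
  have hM1 : (1:ℝ) ≤ M := by exact_mod_cast (by omega : 1 ≤ M)
  set X := (M:ℝ) ^ 104 * Real.exp (-((M:ℝ) ^ 4 / 64)) with hXd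
  have e1 := errB_M M (by omega)
  have e2 := del_M M (by omega)
  rw [← hXd] at e1 e2
  have hp : (1:ℝ) ≤ (M:ℝ) ^ 18 := one_le_pow₀ hM1
  have hp2 : (1:ℝ) ≤ (M:ℝ) ^ 20 := one_le_pow₀ hM1
  have hE : 0 ≤ errB (M ^ 16) ((M:ℝ) ^ 18) := by unfold errB; positivity
  refine ⟨by nlinarith, ?_⟩
  set d := del (M ^ 16) ((M:ℝ) ^ 20) ((M:ℝ) ^ 18) with hd
  have hd0 : 0 ≤ d := del_nonneg _ _ _
  set t := (M:ℝ) ^ 20 with ht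
  have hlog : Real.log (t / 2) ≤ t := by
    have := Real.log_le_sub_one_of_pos (by positivity : 0 < t / 2)
    linarith
  have hdt : d ≤ d * t := le_mul_of_one_le_right hd0 hp2
  unfold Etot KH
  rw [← hd]
  have b1 : 16 * π * d * Z ≤ 16 * π * (d * t) * Z := by gcongr
  have b2 : 16 * π * d ≤ 16 * π * (d * t) := by gcongr
  have b3 : 8 * π * m * d ≤ 8 * π * m * (d * t) := by gcongr
  have b4 : 4 * π * d * Real.log (t / 2) ≤ 4 * π * (d * t) := by
    have := mul_le_mul_of_nonneg_left hlog (by positivity : 0 ≤ 4 * π * d)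
    linarith
  have b5 : 2 * (Real.sqrt (2 * π) * (M:ℝ) ^ 18) * errB (M ^ 16) ((M:ℝ) ^ 18) * KV ≤ 2 * Real.sqrt (2 * π) * KV * (Real.exp 4 * X) := by
    have := mul_le_mul_of_nonneg_left e1 (by positivity : 0 ≤ 2 * Real.sqrt (2 * π) * KV)
    linarith
  rw [e2] at b1 b2 b3 b4
  have : A * X = 16 * π * (280 * X) * Z + 16 * π * (280 * X) + 8 * π * m * (280 * X) + 4 * π * (280 * X) +
     2 * Real.sqrt (2 * π) * KV * (Real.exp 4 * X) := by rw [hA]; ring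
  linarith

lemma final_num (y k η C KVc M E A : ℝ) (hC : 0 ≤ C) (hK : 0 ≤ KVc) (hk : 1 ≤ k) (hη : η = 0.03 * π / y)
    (hy : 100 * (2 + 0.03 * (53 + 16 * (1 + 2 * C) + 68 * KVc)) ≤ y)
    (hM1 : k * (16 * y - 1) ≤ M) (hM2 : M ≤ k * (16 * y + 2)) (hE : E ≤ 1)
    (hA : η * (16 * y * (6.99 * y - 1) - 2 * (1 + 16 * y) * KVc) ≤ A)
    (h : 2 * η * ((20 * y - Real.log 2 - 2 * C) * M - E) + 4 * k * A ≤ 2 * π * M) : False := by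
  have hpi := Real.pi_pos
  have hy1 : 100 ≤ y := by nlinarith
  have hη0 : 0 < η := by rw [hη]; positivity
  have hηy : η * y = 0.03 * π := by rw [hη]; field_simp
  have hl2 : Real.log 2 ≤ 1 := by linarith [Real.log_two_lt_d9]
  set c := 1 + 2 * C with hc
  have hcy : 0 ≤ 20 * y - c := by nlinarith
  have hM0 : 0 ≤ M := by
    refine le_trans ?_ hM1
    apply mul_nonneg <;> linarith
  have s1 : (20 * y - c) * (k * (16 * y - 1)) ≤ (20 * y - Real.log 2 - 2 * C) * M := by
    apply mul_le_mul _ hM1 _ _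
    · linarith
    · apply mul_nonneg <;> linarith
    · linarith
  have s2 : 2 * η * ((20 * y - c) * (k * (16 * y - 1)) - k) ≤ 2 * η * ((20 * y - Real.log 2 - 2 * C) * M - E) := by
    apply mul_le_mul_of_nonneg_left _ (by positivity)
    linarith
  have s3 := mul_le_mul_of_nonneg_left hA (by linarith : 0 ≤ 4 * k)
  have s4 := mul_le_mul_of_nonneg_left hM2 (by linarith : 0 ≤ 2 * π)
  have s5 : k * (2 * η * ((20 * y - c) * (16 * y - 1) - 1) + 4 * (η * (16 * y * (6.99 * y - 1) - 2 * (1 + 16 * y) * KVc)))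
      ≤ k * (2 * π * (16 * y + 2)) := by linarith
  have s6 := le_of_mul_le_mul_left s5 (by linarith)
  have s7 := mul_le_mul_of_nonneg_right s6 (by linarith : 0 ≤ y)
  have s8 : π * (0.06 * ((20 * y - c) * (16 * y - 1) - 1) + 0.12 * (16 * y * (6.99 * y - 1) - 2 * (1 + 16 * y) * KVc)) ≤
      π * (2 * (16 * y + 2) * y) := by
    refine le_trans (le_of_eq ?_) (s7.trans (le_of_eq (by ring)))
    calc _ = 0.03 * π * (2 * ((20 * y - c) * (16 * y - 1) - 1) + 4 * (16 * y * (6.99 * y - 1) - 2 * (1 + 16 * y) * KVc)) := by ring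
      _ = _ := by rw [← hηy]; ring
  have s9 := le_of_mul_le_mul_left s8 hpi
  nlinarith [mul_nonneg hK (by linarith : 0 ≤ y), mul_le_mul_of_nonneg_right hy (by linarith : 0 ≤ y)]

end SGZ

namespace SGZ

lemma SH_bounds (M : ℕ) (hM : 1 ≤ M) : 16 * Real.log M ≤ SH (M ^ 16) ∧ SH (M ^ 16) ≤ 1 + 16 * Real.log M := by
  have hM' : (1:ℝ) ≤ M := by exact_mod_cast hM
  have e : Real.log ((M ^ 16 : ℕ) : ℝ) = 16 * Real.log M := by
    rw [Nat.cast_pow, Real.log_pow, Nat.cast_ofNat]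
  generalize M ^ 16 = N at *
  have h1 := log_add_one_le_harmonic N
  have h2 := harmonic_le_one_add_log N
  rw [← e]
  refine ⟨le_trans ?_ h1, h2⟩
  rcases Nat.eq_zero_or_pos N with h | h
  · subst h; simp
  · apply Real.log_le_log (by exact_mod_cast h)
    push_cast; linarith

set_option maxHeartbeats 1000000 in
theorem main_thm (hRH : RiemannHypothesis)
    (γ : ℕ → ℝ) (hmono : Monotone γ) (hpos : ∀ n, 0 < γ n)
    (htop : Filter.Tendsto γ Filter.atTop Filter.atTop)
    (hcount : ∀ t : ℝ, 0 < t →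
      {n : ℕ | γ n = t}.ncard = zetaMult ((1 / 2 : ℝ) + (t : ℝ) * Complex.I)) :
    Filter.liminf (fun n => (γ (n + 1) - γ n) * Real.log (γ n) / (2 * π))
        Filter.atTop ≤ 0.6073 := by
  have hpi := Real.pi_pos
  by_contra hcon
  rw [not_le] at hcon
  have hbdd : IsBoundedUnder (· ≥ ·) atTop (fun n => (γ (n + 1) - γ n) * Real.log (γ n) / (2 * π)) := by
    refine isBoundedUnder_of_eventually_ge (a := 0) ?_
    filter_upwards [htop.eventually (eventually_ge_atTop 1)] with n hn
    have h1 : 0 ≤ γ (n + 1) - γ n := sub_nonneg.2 (hmono (Nat.le_succ n))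
    have h2 : 0 ≤ Real.log (γ n) := Real.log_nonneg hn
    positivity
  have hev := eventually_lt_of_lt_liminf hcon hbdd
  obtain ⟨n0, hn0⟩ := eventually_atTop.1 hev
  obtain ⟨m, hsum, hpf⟩ := zeros_data hRH γ hpos htop hcount
  obtain ⟨C, hC0, hC⟩ := GR_lower
  have hZ0 : 0 ≤ ∑' n, 1 / (1 + γ n ^ 2) := tsum_nonneg fun n => by positivity
  have hlogtop : Tendsto (fun M : ℕ => Real.log M) atTop atTop := Real.tendsto_log_atTop.comp tendsto_natCast_atTop_atTop
  have hMtop : Tendsto (fun M : ℕ => (M:ℝ)) atTop atTop := tendsto_natCast_atTop_atTop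
  obtain ⟨M, ⟨hE1, hE2⟩, hy, hM8, hMg⟩ := ((ev_small _ hZ0 m).and
    ((hlogtop.eventually (eventually_ge_atTop (100 * (2 + 0.03 * (53 + 16 * (1 + 2 * C) + 68 * KV))))).and
    ((eventually_ge_atTop 8).and (hMtop.eventually (eventually_ge_atTop (2 * γ n0 + 8)))))).exists
  have hM8' : (8:ℝ) ≤ M := by exact_mod_cast hM8
  set y := Real.log M with hydef
  have hKV := KV_nonneg
  have hy1 : 100 ≤ y := by nlinarith
  set T : ℝ := (M:ℝ) ^ 20 with hT
  set H : ℝ := (M:ℝ) ^ 18 with hH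
  have hMT : (M:ℝ) ≤ T := le_self_pow₀ (by linarith) (by norm_num)
  have hH1 : 1 ≤ H := one_le_pow₀ (by linarith)
  have hlogT : Real.log T = 20 * y := by rw [hT, Real.log_pow, hydef]; norm_num
  have hl2 : Real.log 2 ≤ 1 := by linarith [Real.log_two_lt_d9]
  set η : ℝ := 0.03 * π / y with hη
  have hη0 : 0 < η := by positivity
  have hη1 : η ≤ 1 := by
    rw [hη, div_le_one (by linarith)]
    linarith [Real.pi_lt_four]
  obtain ⟨K, hK⟩ := eventually_atTop.1 (htop.eventually (eventually_ge_atTop (2 * T)))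
  classical
  set S : Finset ℕ := (Finset.range K).filter (fun n => |γ n - T| < T / 2) with hS
  have hSout : ∀ n, n ∉ S → T / 2 ≤ |γ n - T| := by
    intro n hn
    rw [hS, Finset.mem_filter, Finset.mem_range, not_and_or, not_lt, not_lt] at hn
    rcases hn with h | h
    · refine le_trans ?_ (le_abs_self _)
      linarith [hK n h]
    · exact h
  have hdisj : ∀ i ∈ S, ∀ j ∈ S, i < j → γ i + 2 * η ≤ γ j := by
    intro i hi j hj hij
    have hi' := (Finset.mem_filter.1 hi).2
    rw [abs_lt] at hi'
    have hin : n0 ≤ i := by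
      by_contra hlt
      have : γ i ≤ γ n0 := hmono (by omega)
      linarith
    have hg := hn0 i hin
    have hγ1 : 1 < γ i := by linarith
    have hlpos : 0 < Real.log (γ i) := Real.log_pos hγ1
    have hlup : Real.log (γ i) ≤ 20 * y + 1 := by
      have : Real.log (γ i) ≤ Real.log (2 * T) := Real.log_le_log (by linarith) (by linarith)
      rw [Real.log_mul (by norm_num) (by positivity), hlogT] at this
      linarith
    rw [lt_div_iff₀ (by positivity)] at hg
    have hj' : γ (i + 1) ≤ γ j := hmono hij
    have hd0 : 0 ≤ γ (i + 1) - γ i := sub_nonneg.2 (hmono (Nat.le_succ i))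
    have h1 : 0.6073 * (2 * π) ≤ (γ (i + 1) - γ i) * (20 * y + 1) :=
      hg.le.trans (mul_le_mul_of_nonneg_left hlup hd0)
    have h2 : 2 * η * (20 * y + 1) ≤ 0.6073 * (2 * π) := by
      have : η * y = 0.03 * π := by rw [hη]; field_simp
      have h3 : η ≤ 0.0003 * π := by
        rw [hη, div_le_iff₀ (by linarith)]; nlinarith
      nlinarith
    have h3 : 2 * η ≤ γ (i + 1) - γ i := le_of_mul_le_mul_right (h2.trans h1) (by linarith)
    linarith
  have hmain := integrated γ hpos m hsum hpf C hC (M ^ 16) (Nat.one_le_pow _ _ (by omega)) T H hH1 (by linarith) η hη0 hη1 S hSout hdisj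
  have harith := arith_lower M (by omega) η hη
  have hlogT2 : Real.log (T / 2) = 20 * y - Real.log 2 := by
    rw [Real.log_div (by positivity) (by norm_num), hlogT]
  rw [hlogT2] at hmain
  have hk : 1 ≤ KH H := by
    unfold KH
    have : 1 ≤ Real.sqrt (2 * π) := by rw [Real.one_le_sqrt]; linarith [Real.pi_gt_three]
    nlinarith
  have hM1 := M1_est (M ^ 16) T H hH1
  have hS1 : 16 * y ≤ SH (M ^ 16) := (SH_bounds M (by omega)).1
  have hS2 : SH (M ^ 16) ≤ 1 + 16 * y := (SH_bounds M (by omega)).2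
  rw [abs_le] at hM1
  have hkE : KH H * errB (M ^ 16) H ≤ KH H := by nlinarith
  refine final_num y (KH H) η C KV (M1 (M ^ 16) T H) (Etot (M ^ 16) T H (∑' n, 1 / (1 + γ n ^ 2)) m) _ hC0 hKV hk hη hy
    ?_ ?_ hE2 harith ?_
  · nlinarith [mul_le_mul_of_nonneg_left hS1 (by linarith : 0 ≤ KH H)]
  · nlinarith [mul_le_mul_of_nonneg_left hS2 (by linarith : 0 ≤ KH H)]
  · linarith

end SGZ

/-- Assuming RH, if `γ 0 ≤ γ 1 ≤ γ 2 ≤ ⋯` enumerates (in nondecreasing order, with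
multiplicity) the ordinates of the non-trivial zeros of `ζ` in the upper half-plane, then
`liminf (γ_{n+1} - γ_n) (log γ_n)/(2π) ≤ 0.6073`. -/
theorem small_gaps_between_zeros (hRH : RiemannHypothesis)
    (γ : ℕ → ℝ) (hmono : Monotone γ) (hpos : ∀ n, 0 < γ n)
    (hzero : ∀ n, ZetaNontrivZero ((1 / 2 : ℝ) + (γ n : ℝ) * Complex.I))
    (htop : Filter.Tendsto γ Filter.atTop Filter.atTop)
    (hcount : ∀ t : ℝ, 0 < t →
      {n : ℕ | γ n = t}.ncard = zetaMult ((1 / 2 : ℝ) + (t : ℝ) * Complex.I)) :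
    Filter.liminf (fun n => (γ (n + 1) - γ n) * Real.log (γ n) / (2 * π))
        Filter.atTop ≤ 0.6073 := by
  exact SGZ.main_thm hRH γ hmono hpos htop hcount
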